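/- Let Γ ≤ SL(2,ℝ) be a discrete subgroup admitting a compact set F ⊆ ℍ² with ⋃_{γ ∈ Γ} γ·F = ℍ² (i.e. Γ is co-compact). Then there exists a constant c(Γ) > 0 such that for every finite set P ⊆ F of N ≥ 2 points with d_Γ(p,q) ≠ 0 for all distinct p, q ∈ P, the number of distinct values of d_Γ(p,q) over pairs of distinct points p, q ∈ P is at least c(Γ) · N / log N. -/

import Mathlib

open scoped UpperHalfPlane MatrixGroups

noncomputable section

/-- The topology on `SL(2,ℝ)` induced from the space of matrices. -/
instance : TopologicalSpace SL(2, ℝ) :=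
  TopologicalSpace.induced (fun g => (g : Matrix (Fin 2) (Fin 2) ℝ)) inferInstance

/-- The quotient pseudo-distance `d_Γ(p,q) = inf_{γ ∈ Γ} d(p, γ·q)` associated to a
subgroup `Γ ≤ SL(2,ℝ)` acting on the hyperbolic plane. -/
def quotDist (Γ : Subgroup SL(2, ℝ)) (p q : ℍ) : ℝ :=
  ⨅ γ : Γ, dist p ((γ : SL(2, ℝ)) • q)

namespace GK
noncomputable section
open MvPolynomial

abbrev E3 := Fin 3 → ℝ
abbrev Poly := MvPolynomial (Fin 3) ℝ
abbrev PD (m : ℕ) : Submodule ℝ Poly := restrictTotalDegree (Fin 3) ℝ m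

lemma mem_PD {m : ℕ} {p : Poly} : p ∈ PD m ↔ p.totalDegree ≤ m := mem_restrictTotalDegree _ _ _

lemma finrank_PD (m : ℕ) : Module.finrank ℝ (PD m) = (m + 3).choose 3 := by
  classical
  let T : Finset (Fin 3 →₀ ℕ) := (Finset.range (m+1)).biUnion (fun n => Finset.finsuppAntidiag Finset.univ n)
  have hT : ({n : Fin 3 →₀ ℕ | (n.sum fun _ e => e) ≤ m} : Set _) = (T : Set _) := by
    ext n
    simp [T, Finset.mem_finsuppAntidiag, Finsupp.sum_fintype]
  have h1 : Module.finrank ℝ (PD m) = Nat.card {n : Fin 3 →₀ ℕ | (n.sum fun _ e => e) ≤ m} :=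
    Module.finrank_eq_nat_card_basis (basisRestrictSupport ℝ _)
  rw [h1, hT, Nat.card_coe_set_eq, Set.ncard_coe_finset]
  rw [Finset.card_biUnion]
  · simp_rw [Finset.card_finsuppAntidiag_nat_eq_choose]
    clear h1 hT
    induction m with
    | zero => simp 
    | succ m ih =>
      rw [Finset.sum_range_succ]
      simp only [Finset.card_univ, Fintype.card_fin] at ih ⊢
      rw [ih, show m + 1 + 3 = (m + 3) + 1 by ring, Nat.choose_succ_succ' (m+3) 2, add_comm]
      congr 1
      rw [show 3 + (m + 1) - 1 = (m + 1) + 2 by omega]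
      rw [show m + 3 = (m + 1) + 2 by ring, ← Nat.choose_symm_add]
  · intro a _ b _ hab
    rw [Function.onFun, Finset.disjoint_left]
    intro x hx hy
    simp only [Finset.mem_finsuppAntidiag] at hx hy
    exact hab (hx.1.symm.trans hy.1)

lemma choose3 (m : ℕ) : 6 * (m+3).choose 3 = (m+1)*(m+2)*(m+3) := by
  induction m with
  | zero => rfl
  | succ m ih =>
    have h2 : 2 * (m+3).choose 2 = (m+3)*(m+2) := by
      rw [Nat.choose_two_right, show m+3-1 = m+2 by omega]
      exact Nat.mul_div_cancel' (by 
        have := Nat.even_mul_succ_self (m+2)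
        rw [mul_comm]; exact this.two_dvd)
    rw [show m + 1 + 3 = (m + 3) + 1 by ring, Nat.choose_succ_succ' (m+3) 2]
    nlinarith

/-- more unknowns than equations -/
lemma exists_ne_zero_ker {V : Type*} [AddCommGroup V] [Module ℝ V] [Module.Finite ℝ V] {ι : Type*} (T : Finset ι)
    (φ : ι → V →ₗ[ℝ] ℝ) (h : T.card < Module.finrank ℝ V) : ∃ v : V, v ≠ 0 ∧ ∀ i ∈ T, φ i v = 0 := by
  let A : V →ₗ[ℝ] (T → ℝ) := LinearMap.pi (fun i => φ i)
  have : ∃ v ∈ LinearMap.ker A, v ≠ 0 := by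
    apply Submodule.exists_mem_ne_zero_of_ne_bot
    apply LinearMap.ker_ne_bot_of_finrank_lt
    simpa using h
  obtain ⟨v, hv, h0⟩ := this
  refine ⟨v, h0, fun i hi => ?_⟩
  have := congrFun (LinearMap.mem_ker.mp hv) ⟨i, hi⟩
  simpa [A] using this

/-- lines not parallel to the plane z = 0 -/
structure Ln where
  a : ℝ
  b : ℝ
  c : ℝ
  d : ℝ

instance : DecidableEq Ln := Classical.decEq _

def pt (l : Ln) (t : ℝ) : E3 := ![l.a + t * l.c, l.b + t * l.d, t]
def On (x : E3) (l : Ln) : Prop := x = pt l (x 2)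
def Van (f : Poly) (l : Ln) : Prop := ∀ t, eval (pt l t) f = 0
def Copl (l m : Ln) : Prop := (l.a - m.a) * (l.d - m.d) = (l.b - m.b) * (l.c - m.c)

lemma on_pt (l : Ln) (t : ℝ) : On (pt l t) l := by simp [On, pt]
lemma On.eq {x : E3} {l : Ln} (h : On x l) : pt l (x 2) = x := Eq.symm h
lemma On.z0 {x : E3} {l : Ln} (h : On x l) : x 0 = l.a + x 2 * l.c := by
  have := congrFun h 0; simpa [pt] using this
lemma On.z1 {x : E3} {l : Ln} (h : On x l) : x 1 = l.b + x 2 * l.d := by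
  have := congrFun h 1; simpa [pt] using this
lemma pt_inj {l : Ln} {s t : ℝ} (h : pt l s = pt l t) : s = t := by
  have := congrFun h 2; simpa [pt] using this

lemma Ln.ext4 {l m : Ln} (h1 : l.a = m.a) (h2 : l.b = m.b) (h3 : l.c = m.c) (h4 : l.d = m.d) : l = m := by
  cases l; cases m; simp_all

lemma line_unique {x y : E3} {l m : Ln} (h1 : On x l) (h2 : On y l) (h3 : On x m) (h4 : On y m) (hxy : x ≠ y) : l = m := by
  have hz : x 2 ≠ y 2 := by
    intro h; apply hxy; rw [← h1.eq, ← h2.eq, h]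
  have hz' : x 2 - y 2 ≠ 0 := sub_ne_zero.mpr hz
  have c1 : l.c = m.c := by
    apply mul_left_cancel₀ hz'; linarith [h1.z0, h2.z0, h3.z0, h4.z0]
  have d1 : l.d = m.d := by
    apply mul_left_cancel₀ hz'; linarith [h1.z1, h2.z1, h3.z1, h4.z1]
  refine Ln.ext4 ?_ ?_ c1 d1
  · have := h1.z0; have := h3.z0; rw [c1] at *; linarith
  · have := h1.z1; have := h3.z1; rw [d1] at *; linarith

lemma copl_of_on {x : E3} {l m : Ln} (h1 : On x l) (h2 : On x m) : Copl l m := by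
  unfold Copl
  have e1 : l.a - m.a = - x 2 * (l.c - m.c) := by linarith [h1.z0, h2.z0]
  have e2 : l.b - m.b = - x 2 * (l.d - m.d) := by linarith [h1.z1, h2.z1]
  rw [e1, e2]; ring

lemma Copl.symm {l m : Ln} (h : Copl l m) : Copl m l := by unfold Copl at *; linarith
lemma Copl.refl (l : Ln) : Copl l l := by unfold Copl; ring

open Polynomial in
def res (l : Ln) : Poly →ₐ[ℝ] ℝ[X] :=
  aeval ![Polynomial.C l.a + Polynomial.X * Polynomial.C l.c, Polynomial.C l.b + Polynomial.X * Polynomial.C l.d, Polynomial.X]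

lemma eval_res (l : Ln) (f : Poly) (t : ℝ) : Polynomial.eval t (res l f) = eval (pt l t) f := by
  have h : (Polynomial.aeval t).comp (res l) = (aeval (pt l t) : Poly →ₐ[ℝ] ℝ) := by
    apply MvPolynomial.algHom_ext
    intro i
    fin_cases i <;> simp [res, pt] <;> ring
  have := DFunLike.congr_fun h f
  simpa [Polynomial.aeval_def, Polynomial.eval₂_eq_eval_map, aeval_eq_eval] using this

lemma natDegree_res (l : Ln) (f : Poly) : (res l f).natDegree ≤ f.totalDegree := by
  have := aeval_natDegree_le (F := f) (m := f.totalDegree) le_rfl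
    (f := ![Polynomial.C l.a + Polynomial.X * Polynomial.C l.c, Polynomial.C l.b + Polynomial.X * Polynomial.C l.d, Polynomial.X]) (n := 1) (by
      intro i
      fin_cases i
      · simp; compute_degree
      · simp; compute_degree
      · simp)
  simpa [res] using this

lemma van_iff (f : Poly) (l : Ln) : Van f l ↔ res l f = 0 := by
  constructor
  · intro h
    apply Polynomial.funext
    intro t; rw [eval_res, h t]; simp
  · intro h t
    rw [← eval_res, h]; simp

lemma van_of_many (f : Poly) (l : Ln) (T : Finset E3) (hT : ∀ x ∈ T, On x l) (h0 : ∀ x ∈ T, eval x f = 0)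
    (hc : f.totalDegree < T.card) : Van f l := by
  classical
  rw [van_iff]
  refine Polynomial.eq_zero_of_natDegree_lt_card_of_eval_eq_zero' (res l f) (T.image (fun x => x 2)) ?_ ?_
  · intro t ht
    obtain ⟨x, hx, rfl⟩ := Finset.mem_image.mp ht
    rw [eval_res, (hT x hx).eq, h0 x hx]
  · rw [Finset.card_image_of_injOn]
    · exact (natDegree_res l f).trans_lt hc
    · intro x hx y hy hxy
      dsimp only at hxy
      rw [← (hT x hx).eq, ← (hT y hy).eq, hxy]

lemma van_mul {f g : Poly} {l : Ln} : Van (f * g) l ↔ Van f l ∨ Van g l := by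
  simp only [van_iff, map_mul, mul_eq_zero]

end
end GK

namespace GK
noncomputable section
open Finsupp

section chains
variable {E : Type} 

abbrev Ch (E : Type) := List E →₀ ZMod 2

def ext2 {M : Type*} [AddCommGroup M] [Module (ZMod 2) M] (f : List E → M) : Ch E →ₗ[ZMod 2] M :=
  Finsupp.linearCombination (ZMod 2) f

def g1 (l : List E) : Ch E := Finsupp.single l 1

@[simp] lemma ext2_g1 {M : Type*} [AddCommGroup M] [Module (ZMod 2) M] (f : List E → M) (l : List E) :
    ext2 f (g1 l) = f l := by simp [ext2, g1]

lemma ch_ext {M : Type*} [AddCommGroup M] [Module (ZMod 2) M] {A B : Ch E →ₗ[ZMod 2] M}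
    (h : ∀ l, A (g1 l) = B (g1 l)) : A = B := by
  apply Finsupp.lhom_ext'
  intro l
  apply LinearMap.ext_ring
  exact h l

lemma two_self {M : Type*} [AddCommGroup M] [Module (ZMod 2) M] (x : M) : x + x = 0 := by
  have : (2 : ZMod 2) • x = 0 := by rw [show (2 : ZMod 2) = 0 from rfl, zero_smul]
  rw [← this, two_smul]

def cone (b : E) : Ch E →ₗ[ZMod 2] Ch E := ext2 (fun l => g1 (b :: l))

def bdl : List E → Ch E
  | [] => 0
  | v :: l => g1 l + cone v (bdl l)

def bd : Ch E →ₗ[ZMod 2] Ch E := ext2 bdl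

lemma bd_cone (b : E) (c : Ch E) : bd (cone b c) = c + cone b (bd c) := by
  have : bd ∘ₗ cone b = LinearMap.id + cone b ∘ₗ bd := by
    apply ch_ext; intro l
    simp [bd, cone, bdl]
  exact LinearMap.congr_fun this c

lemma bd_bd (c : Ch E) : bd (bd c) = 0 := by
  have : (bd ∘ₗ bd : Ch E →ₗ[ZMod 2] Ch E) = 0 := by
    apply ch_ext; intro l
    simp only [LinearMap.comp_apply, LinearMap.zero_apply]
    induction l with
    | nil => simp [bd, bdl]
    | cons v l ih =>
      have h1 : bd (g1 (v :: l)) = g1 l + cone v (bd (g1 l)) := by simp [bd, bdl]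
      rw [h1, map_add, bd_cone, ih, map_zero, add_zero]
      exact two_self _
  exact LinearMap.congr_fun this c

def sd (b : List E → E) : ℕ → (Ch E →ₗ[ZMod 2] Ch E)
  | 0 => LinearMap.id
  | k + 1 => ext2 (fun l => cone (b l) (sd b k (bd (g1 l))))

lemma bd_sd (b : List E → E) (k : ℕ) (c : Ch E) : bd (sd b (k+1) c) = sd b k (bd c) := by
  have : bd ∘ₗ sd b (k+1) = sd b k ∘ₗ bd := by
    induction k with
    | zero =>
      apply ch_ext; intro l
      simp [sd, bd_cone, bd_bd]
    | succ k ih =>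
      apply ch_ext; intro l
      have := LinearMap.congr_fun ih (bd (g1 l))
      simp only [LinearMap.comp_apply, bd_bd, map_zero] at this
      simp only [LinearMap.comp_apply]
      rw [sd, ext2_g1, bd_cone, this, map_zero, add_zero]
  exact LinearMap.congr_fun this c

lemma bd_sd_iter (b : List E → E) (k r : ℕ) (c : Ch E) :
    bd ((sd b (k+1))^[r] c) = (sd b k)^[r] (bd c) := by
  induction r with
  | zero => rfl
  | succ r ih => rw [Function.iterate_succ_apply', Function.iterate_succ_apply', bd_sd, ih]

/-- map on points -/
def nu (f : E → E) : Ch E →ₗ[ZMod 2] Ch E := ext2 (fun l => g1 (l.map f))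

lemma nu_cone (f : E → E) (b : E) (c : Ch E) : nu f (cone b c) = cone (f b) (nu f c) := by
  have : nu f ∘ₗ cone b = cone (f b) ∘ₗ nu f := by
    apply ch_ext; intro l; simp [nu, cone]
  exact LinearMap.congr_fun this c

lemma bd_nu (f : E → E) (c : Ch E) : bd (nu f c) = nu f (bd c) := by
  have : bd ∘ₗ nu f = nu f ∘ₗ bd := by
    apply ch_ext; intro l
    simp only [LinearMap.comp_apply]
    induction l with
    | nil => simp [bd, bdl, nu]
    | cons v l ih =>
      have h1 : ∀ v : E, ∀ l, bd (g1 (v :: l)) = g1 l + cone v (bd (g1 l)) := by intros; simp [bd, bdl]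
      have h2 : ∀ l, nu f (g1 l) = g1 (l.map f) := by intros; simp [nu]
      rw [h2, List.map_cons, h1, h1, map_add, nu_cone, ← ih, h2]
  exact LinearMap.congr_fun this c

lemma nu_sd (f : E → E) (b : List E → E) (hb : ∀ l, b (l.map f) = f (b l)) (k : ℕ) (c : Ch E) :
    nu f (sd b k c) = sd b k (nu f c) := by
  have : nu f ∘ₗ sd b k = sd b k ∘ₗ nu f := by
    induction k with
    | zero => rfl
    | succ k ih =>
      apply ch_ext; intro l
      have := LinearMap.congr_fun ih (bd (g1 l))
      simp only [LinearMap.comp_apply] at this ⊢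
      have h2 : nu f (g1 l) = g1 (l.map f) := by simp [nu]
      rw [h2, sd, ext2_g1, ext2_g1, nu_cone, this, hb, ← h2, bd_nu]
  exact LinearMap.congr_fun this c

lemma nu_sd_iter (f : E → E) (b : List E → E) (hb : ∀ l, b (l.map f) = f (b l)) (k r : ℕ) (c : Ch E) :
    nu f ((sd b k)^[r] c) = (sd b k)^[r] (nu f c) := by
  induction r with
  | zero => rfl
  | succ r ih => rw [Function.iterate_succ_apply', Function.iterate_succ_apply', nu_sd f b hb, ih]

lemma sd_iter_add (b : List E → E) (k r : ℕ) (c c' : Ch E) :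
    (sd b k)^[r] (c + c') = (sd b k)^[r] c + (sd b k)^[r] c' := by
  induction r with
  | zero => rfl
  | succ r ih => rw [Function.iterate_succ_apply', Function.iterate_succ_apply', Function.iterate_succ_apply', ih, map_add]

/-- chains supported on lists with property P -/
def Sup (P : List E → Prop) : Submodule (ZMod 2) (Ch E) := Finsupp.supported (ZMod 2) (ZMod 2) {l | P l}

lemma sup_map {P : List E → Prop} {M : Type*} [AddCommGroup M] [Module (ZMod 2) M]
    (A : Ch E →ₗ[ZMod 2] M) (Q : Submodule (ZMod 2) M)
    (h : ∀ l, P l → A (g1 l) ∈ Q) {c : Ch E} (hc : c ∈ Sup P) : A c ∈ Q := by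
  have : Sup P ≤ Q.comap A := by
    rw [Sup, Finsupp.supported_eq_span_single, Submodule.span_le]
    rintro _ ⟨l, hl, rfl⟩
    exact h l hl
  exact this hc

lemma g1_mem {P : List E → Prop} {l : List E} (h : P l) : g1 l ∈ Sup P :=
  Finsupp.single_mem_supported _ _ h

lemma sup_mono {P Q : List E → Prop} (h : ∀ l, P l → Q l) {c : Ch E} (hc : c ∈ Sup P) : c ∈ Sup Q :=
  Finsupp.supported_mono (fun l hl => h l hl) hc

lemma cone_mem {P Q : List E → Prop} (b : E) (h : ∀ l, P l → Q (b :: l)) {c : Ch E} (hc : c ∈ Sup P) :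
    cone b c ∈ Sup Q := by
  refine sup_map (cone b) _ (fun l hl => ?_) hc
  simp only [cone, ext2_g1]; exact g1_mem (h l hl)

lemma nu_mem {P Q : List E → Prop} (f : E → E) (h : ∀ l, P l → Q (l.map f)) {c : Ch E} (hc : c ∈ Sup P) :
    nu f c ∈ Sup Q := by
  refine sup_map (nu f) _ (fun l hl => ?_) hc
  simp only [nu, ext2_g1]; exact g1_mem (h l hl)

lemma bd_mem_sub (l : List E) : bd (g1 l) ∈ Sup (fun m : List E => m.length + 1 = l.length ∧ ∀ x ∈ m, x ∈ l) := by
  simp only [bd, ext2_g1]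
  induction l with
  | nil => simp [bdl]
  | cons v l ih =>
    rw [bdl]
    refine Submodule.add_mem _ (g1_mem ⟨by simp, fun x hx => by simp [hx]⟩) ?_
    refine cone_mem v ?_ ih
    rintro m ⟨h1, h2⟩
    refine ⟨by simp [h1], fun x hx => ?_⟩
    simp only [List.mem_cons] at hx ⊢
    rcases hx with h | h
    · exact Or.inl h
    · exact Or.inr (h2 x h)

/-- cochains -/
def om (u : ℕ → E → ZMod 2) : ℕ → List E → ZMod 2
  | 0, _ => 1
  | k + 1, (v :: v' :: l) => (u k v + u k v') * om u k (v' :: l)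
  | _ + 1, _ => 0

def hd (w : E → ZMod 2) : List E → ZMod 2
  | [] => 0
  | v :: _ => w v

def Om (u : ℕ → E → ZMod 2) (k : ℕ) : Ch E →ₗ[ZMod 2] ZMod 2 := ext2 (om u k)
def UOm (u : ℕ → E → ZMod 2) (k : ℕ) : Ch E →ₗ[ZMod 2] ZMod 2 := ext2 (fun l => hd (u k) l * om u k l)

lemma UOm_cone (u : ℕ → E → ZMod 2) (k : ℕ) (v : E) (c : Ch E) :
    UOm u k (cone v c) = u k v * Om u k (cone v c) := by
  have : UOm u k ∘ₗ cone v = (u k v) • (Om u k ∘ₗ cone v) := by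
    apply ch_ext; intro l; simp [UOm, Om, cone, hd]
  exact LinearMap.congr_fun this c

lemma om_cocycle (u : ℕ → E → ZMod 2) (k : ℕ) :
    (∀ l : List E, l.length = k + 2 → Om u k (bd (g1 l)) = 0) ∧
    (∀ l : List E, l.length = k + 2 → Om u (k+1) (g1 l) = UOm u k (bd (g1 l))) := by
  have key : ∀ k, (∀ l : List E, l.length = k + 2 → Om u k (bd (g1 l)) = 0) →
      (∀ l : List E, l.length = k + 2 → Om u (k+1) (g1 l) = UOm u k (bd (g1 l))) := by
    intro k h1 l hl
    match l, hl with
    | v :: v' :: l, hl =>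
      have h := h1 _ hl
      have h2 : bd (g1 (v :: v' :: l)) = g1 (v' :: l) + cone v (bd (g1 (v' :: l))) := by simp [bd, bdl]
      rw [h2, map_add] at h ⊢
      rw [UOm_cone]
      have h3 : Om u k (cone v (bd (g1 (v' :: l)))) = Om u k (g1 (v' :: l)) := by
        have := two_self (Om u k (g1 (v' :: l)))
        exact add_left_cancel (h.trans this.symm)
      rw [h3]
      simp only [Om, UOm, ext2_g1, om, hd]
      ring
  have h1 : ∀ l : List E, l.length = k + 2 → Om u k (bd (g1 l)) = 0 := by
    induction k with
    | zero =>
      intro l hl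
      match l, hl with
      | [v, v'], _ => simp [Om, bd, bdl, om, cone]; rfl
    | succ k ih =>
      intro l hl
      have : bd (g1 l) ∈ Sup (fun m : List E => m.length = k + 2) :=
        sup_mono (fun m hm => by omega) (bd_mem_sub l)
      have h4 := sup_map (Om u (k+1) - UOm u k ∘ₗ bd) ⊥ (fun m hm => by
        simp [key k ih m hm]) this
      simp only [Submodule.mem_bot, LinearMap.sub_apply, LinearMap.comp_apply, bd_bd, map_zero, sub_zero] at h4
      exact h4
  exact ⟨h1, key k h1⟩

lemma Om_succ (u : ℕ → E → ZMod 2) (k : ℕ) {c : Ch E} (hc : c ∈ Sup (fun l : List E => l.length = k + 2)) :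
    Om u (k+1) c = UOm u k (bd c) := by
  have h4 := sup_map (Om u (k+1) - UOm u k ∘ₗ bd) ⊥ (fun m hm => by
        simp [(om_cocycle u k).2 m hm]) hc
  simpa [sub_eq_zero] using h4

lemma om_map (u : ℕ → E → ZMod 2) (f : E → E) (G : E → Prop) (hu : ∀ k v, G v → u k v + u k (f v) = 1) (k : ℕ) :
    ∀ l : List E, (∀ v ∈ l, G v) → om u k (l.map f) = om u k l := by
  induction k with
  | zero => intro l _; rfl
  | succ k ih =>
    intro l hl
    match l, hl with
    | [], _ => rfl
    | [v], _ => rfl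
    | v :: v' :: l, hl =>
      have := ih (v' :: l) (fun x hx => hl x (List.mem_cons_of_mem _ hx))
      simp only [List.map_cons] at this ⊢
      simp only [om]
      rw [this]
      congr 1
      have e1 := hu k v (hl v (by simp))
      have e2 := hu k v' (hl v' (by simp))
      generalize u k v = a at *
      generalize u k v' = b at *
      generalize u k (f v) = a' at *
      generalize u k (f v') = b' at *
      revert a b a' b'; decide

lemma UOm_nu (u : ℕ → E → ZMod 2) (f : E → E) (G : E → Prop) (hu : ∀ k v, G v → u k v + u k (f v) = 1) (k : ℕ)
    {c : Ch E} (hc : c ∈ Sup (fun l : List E => l ≠ [] ∧ ∀ v ∈ l, G v)) :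
    UOm u k (c + nu f c) = Om u k c := by
  have h4 := sup_map (UOm u k + UOm u k ∘ₗ nu f - Om u k) ⊥ (fun m hm => by
    obtain ⟨h0, hm⟩ := hm
    simp only [LinearMap.sub_apply, LinearMap.add_apply, LinearMap.comp_apply, Submodule.mem_bot]
    simp only [UOm, Om, nu, ext2_g1]
    rw [om_map u f G hu k m hm, ← add_mul]
    match m, h0 with
    | v :: m, _ => simp [hd, hu k v (hm v (by simp))]) hc
  simp only [Submodule.mem_bot, LinearMap.sub_apply, LinearMap.add_apply, LinearMap.comp_apply, sub_eq_zero] at h4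
  rw [map_add, h4]

lemma om_zero_of_const (u : ℕ → E → ZMod 2) (i : ℕ) (a : ZMod 2) (k : ℕ) (hik : i < k) :
    ∀ l : List E, (∀ v ∈ l, u i v = a) → om u k l = 0 := by
  induction k with
  | zero => omega
  | succ k ih =>
    intro l hl
    match l, hl with
    | [], _ => rfl
    | [v], _ => rfl
    | v :: v' :: l, hl =>
      simp only [om]
      rcases Nat.lt_succ_iff_lt_or_eq.mp hik with h | h
      · rw [ih h (v' :: l) (fun x hx => hl x (List.mem_cons_of_mem _ hx)), mul_zero]
      · subst h
        rw [hl v (by simp), hl v' (by simp), two_self, zero_mul]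

end chains
end
end GK

namespace GK
noncomputable section

section geo
variable {E : Type} [NormedAddCommGroup E] [NormedSpace ℝ E]

def bary (l : List E) : E := (1 / (l.length : ℝ)) • ∑ i : Fin l.length, l.get i

lemma bary_neg (l : List E) : bary (l.map (fun x => -x)) = - bary l := by
  have : ∑ i : Fin (l.map (fun x : E => -x)).length, (l.map (fun x : E => -x)).get i = - ∑ i : Fin l.length, l.get i := by
    rw [← Finset.sum_neg_distrib]
    refine Fintype.sum_equiv (finCongr (by simp)) _ _ (fun i => by simp)
  rw [bary, bary, this, List.length_map, smul_neg]

lemma bary_mem {Q : Set E} (hQ : Convex ℝ Q) (l : List E) (h0 : l ≠ []) (h : ∀ x ∈ l, x ∈ Q) : bary l ∈ Q := by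
  have hl : (l.length : ℝ) ≠ 0 := by simpa using h0
  rw [bary, Finset.smul_sum]
  refine hQ.sum_mem (fun i _ => by positivity) ?_ (fun i _ => h _ (List.get_mem l i))
  simp [hl]

lemma bary_dist (l : List E) (k : ℕ) (hl : l.length = k + 1) (D : ℝ)
    (h : ∀ x ∈ l, ∀ y ∈ l, dist x y ≤ D) (x : E) (hx : x ∈ l) : dist x (bary l) ≤ (1 - 1 / ((k : ℝ) + 1)) * D := by
  have hl' : (l.length : ℝ) = k + 1 := by rw [hl]; push_cast; rfl
  have hk : (0 : ℝ) < (k : ℝ) + 1 := by positivity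
  have e1 : bary l - x = (1 / ((k : ℝ) + 1)) • ∑ i : Fin l.length, (l.get i - x) := by
    rw [bary, hl', Finset.sum_sub_distrib, smul_sub]
    simp only [Finset.sum_const, Finset.card_univ, Fintype.card_fin]
    rw [← Nat.cast_smul_eq_nsmul ℝ, hl', smul_smul, one_div_mul_cancel hk.ne', one_smul]
  rw [dist_comm, dist_eq_norm, e1, norm_smul]
  obtain ⟨j, hj⟩ := List.get_of_mem hx
  have e2 : ‖∑ i : Fin l.length, (l.get i - x)‖ ≤ k * D := by
    rw [← Finset.sum_erase_add _ _ (Finset.mem_univ j), hj, sub_self, add_zero]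
    refine (norm_sum_le_of_le _ (n := fun _ => D) (fun i _ => ?_)).trans ?_
    · rw [← dist_eq_norm]; exact h _ (List.get_mem l i) _ hx
    · simp [Finset.card_erase_of_mem, hl]
  rw [Real.norm_of_nonneg (by positivity)]
  calc _ ≤ 1 / ((k:ℝ)+1) * (k * D) := by gcongr
    _ = _ := by field_simp; ring

lemma sd_mem (k : ℕ) : ∀ (l : List E) (D : ℝ), 0 ≤ D → l.length = k → (∀ x ∈ l, ∀ y ∈ l, dist x y ≤ D) →
    sd bary k (g1 l) ∈ Sup (fun m : List E => m.length = k ∧ (∀ x ∈ m, x ∈ convexHull ℝ {x | x ∈ l}) ∧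
      ∀ x ∈ m, ∀ y ∈ m, dist x y ≤ (1 - 1 / (k : ℝ)) * D) := by
  induction k with
  | zero =>
    intro l D hD hl h
    have : l = [] := by simpa using hl
    subst this
    exact g1_mem (by simp)
  | succ k ih =>
    intro l D hD hl h
    have hne : l ≠ [] := by intro h; simp [h] at hl
    have hb := bary_dist l k hl D h
    have hbm : bary l ∈ convexHull ℝ {x | x ∈ l} :=
      bary_mem (convex_convexHull ℝ _) l hne (fun x hx => subset_convexHull ℝ _ hx)
    have hcd : ∀ x ∈ convexHull ℝ {x | x ∈ l}, dist x (bary l) ≤ (1 - 1 / ((k : ℝ) + 1)) * D := by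
      intro x hx
      have : convexHull ℝ {x | x ∈ l} ⊆ Metric.closedBall (bary l) ((1 - 1 / ((k : ℝ) + 1)) * D) :=
        convexHull_min (fun y hy => Metric.mem_closedBall.mpr (hb y hy)) (convex_closedBall _ _)
      exact Metric.mem_closedBall.mp (this hx)
    have hpos : 0 ≤ (1 - 1 / ((k : ℝ) + 1)) * D := by
      refine mul_nonneg ?_ hD
      rw [sub_nonneg, div_le_one (by positivity)]; linarith [(Nat.cast_nonneg k : (0:ℝ) ≤ k)]
    have e1 : sd bary k (bd (g1 l)) ∈ Sup (fun m : List E => m.length = k ∧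
        (∀ x ∈ m, x ∈ convexHull ℝ {x | x ∈ l}) ∧
        ∀ x ∈ m, ∀ y ∈ m, dist x y ≤ (1 - 1 / ((k : ℝ) + 1)) * D) := by
      refine sup_map (sd bary k) _ ?_ (bd_mem_sub l)
      rintro m ⟨hm1, hm2⟩
      refine sup_mono ?_ (ih m D hD (by omega) (fun x hx y hy => h x (hm2 x hx) y (hm2 y hy)))
      rintro m' ⟨h1, h2, h3⟩
      refine ⟨h1, fun x hx => convexHull_mono (fun y hy => hm2 y hy) (h2 x hx), fun x hx y hy => (h3 x hx y hy).trans ?_⟩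
      have hk : 0 < k := by rw [← h1]; exact List.length_pos_of_mem hx
      have hk' : (0:ℝ) < k := by exact_mod_cast hk
      gcongr
      linarith
    rw [sd, ext2_g1]
    refine cone_mem (bary l) ?_ e1
    rintro m ⟨h1, h2, h3⟩
    refine ⟨by simp [h1], ?_, ?_⟩
    · intro x hx
      rcases List.mem_cons.mp hx with rfl | hx
      · exact hbm
      · exact h2 x hx
    · push_cast
      intro x hx y hy
      rcases List.mem_cons.mp hx with rfl | hx <;> rcases List.mem_cons.mp hy with rfl | hy
      · simpa using hpos
      · rw [dist_comm]; exact hcd y (h2 y hy)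
      · exact hcd x (h2 x hx)
      · exact h3 x hx y hy

/-- lists of length k in a set of the family, with mutual distances at most D -/
def Sm (Fam : Set (Set E)) (k : ℕ) (D : ℝ) (m : List E) : Prop :=
  m.length = k ∧ (∃ Q ∈ Fam, ∀ x ∈ m, x ∈ Q) ∧ ∀ x ∈ m, ∀ y ∈ m, dist x y ≤ D

lemma sd_iter_mem (Fam : Set (Set E)) (hF : ∀ Q ∈ Fam, Convex ℝ Q) (k : ℕ) (D : ℝ) (hD : 0 ≤ D) (c : Ch E)
    (hc : c ∈ Sup (Sm Fam (k+1) D)) (r : ℕ) :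
    (sd bary (k+1))^[r] c ∈ Sup (Sm Fam (k+1) ((1 - 1 / ((k : ℝ) + 1)) ^ r * D)) := by
  induction r with
  | zero => simpa using hc
  | succ r ih =>
    rw [Function.iterate_succ_apply']
    refine sup_map _ _ ?_ ih
    rintro l ⟨h1, ⟨Q, hQ, h2⟩, h3⟩
    have hpos : 0 ≤ (1 - 1 / ((k : ℝ) + 1)) := by
      rw [sub_nonneg, div_le_one (by positivity)]; linarith [(Nat.cast_nonneg k : (0:ℝ) ≤ k)]
    refine sup_mono ?_ (sd_mem (k+1) l _ (by positivity) h1 h3)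
    rintro m ⟨g1, g2, g3⟩
    refine ⟨g1, ⟨Q, hQ, fun x hx => convexHull_min (fun y hy => h2 y hy) (hF Q hQ) (g2 x hx)⟩, fun x hx y hy => (g3 x hx y hy).trans (le_of_eq ?_)⟩
    push_cast; ring

end geo

section BU
variable (n : ℕ)
abbrev En (n : ℕ) := Fin (n+1) → ℝ

def ee (k : ℕ) : En n := fun j => if j.val = k then 1 else 0

def Face (s : Fin (n+1) → ℝ) : Set (En n) := {v | (∀ i, 0 ≤ s i * v i) ∧ ∑ i, s i * v i = 1}

def Fam : Set (Set (En n)) := {Q | ∃ s : Fin (n+1) → ℝ, (∀ i, s i = 1 ∨ s i = -1) ∧ Q = Face n s}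

lemma Fam_convex : ∀ Q ∈ Fam n, Convex ℝ Q := by
  rintro _ ⟨s, _, rfl⟩
  intro x hx y hy a b ha hb hab
  refine ⟨fun i => ?_, ?_⟩
  · have := hx.1 i; have := hy.1 i
    simp only [Pi.add_apply, Pi.smul_apply, smul_eq_mul]
    have : s i * (a * x i + b * y i) = a * (s i * x i) + b * (s i * y i) := by ring
    rw [this]; positivity
  · simp only [Pi.add_apply, Pi.smul_apply, smul_eq_mul]
    have : ∀ i, s i * (a * x i + b * y i) = a * (s i * x i) + b * (s i * y i) := by intro i; ring
    simp_rw [this, Finset.sum_add_distrib, ← Finset.mul_sum, hx.2, hy.2]; linarith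

lemma Face_l1 (s : Fin (n+1) → ℝ) (hs : ∀ i, s i = 1 ∨ s i = -1) (v : En n) (hv : v ∈ Face n s) :
    ∑ i, |v i| = 1 := by
  rw [← hv.2]
  refine Finset.sum_congr rfl (fun i _ => ?_)
  rw [← abs_of_nonneg (hv.1 i), abs_mul]
  rcases hs i with h | h <;> simp [h]

def hh : ℕ → Ch (En n)
  | 0 => g1 [ee n 0]
  | k + 1 => cone (ee n (k+1)) (hh k + nu (fun x => -x) (hh k))

lemma bd_hh (k : ℕ) : bd (hh n (k+1)) = hh n k + nu (fun x => -x) (hh n k) := by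
  have h : bd (hh n k + nu (fun x => -x) (hh n k)) = 0 := by
    induction k with
    | zero =>
      simp only [hh, nu, ext2_g1, map_add]
      simp only [bd, ext2_g1, bdl]
      simp [bdl, two_self]
    | succ k ih =>
      rw [map_add, bd_nu]
      have : bd (hh n (k+1)) = hh n k + nu (fun x => -x) (hh n k) := by
        rw [hh, bd_cone, ih, map_zero, add_zero]
      rw [this, map_add]
      have h2 : nu (fun x => -x) (nu (fun x => -x) (hh n k)) = hh n k := by
        have : nu (fun x : En n => -x) ∘ₗ nu (fun x : En n => -x) = LinearMap.id := by
          apply ch_ext; intro l; simp [nu, Function.comp_def]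
        exact LinearMap.congr_fun this _
      rw [h2, add_comm (nu _ _), two_self]
  rw [hh, bd_cone, h, map_zero, add_zero]

lemma hh_mem (k : ℕ) (hk : k ≤ n) : hh n k ∈ Sup (fun l : List (En n) => l.length = k + 1 ∧
    ∃ s : Fin (n+1) → ℝ, (∀ i, s i = 1 ∨ s i = -1) ∧ ∀ v ∈ l, v ∈ Face n s ∧ ∀ j, k < j.val → v j = 0) := by
  induction k with
  | zero =>
    refine g1_mem ⟨rfl, fun _ => 1, fun _ => Or.inl rfl, ?_⟩
    intro v hv
    have : v = ee n 0 := by simpa using hv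
    subst this
    refine ⟨⟨fun i => ?_, ?_⟩, fun j hj => ?_⟩
    · simp only [ee]; split_ifs <;> simp
    · simp only [ee, one_mul]
      rw [Finset.sum_eq_single (0 : Fin (n+1))] <;> simp
    · simp only [ee]; rw [if_neg (by omega)]
  | succ k ih =>
    have ih := ih (by omega)
    rw [hh]
    have h2 : nu (fun x => -x) (hh n k) ∈ Sup (fun l : List (En n) => l.length = k + 1 ∧
    ∃ s : Fin (n+1) → ℝ, (∀ i, s i = 1 ∨ s i = -1) ∧ ∀ v ∈ l, v ∈ Face n s ∧ ∀ j, k < j.val → v j = 0) := by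
      refine nu_mem _ ?_ ih
      rintro l ⟨hl, s, hs, h⟩
      refine ⟨by simp [hl], fun i => - s i, fun i => ?_, fun v hv => ?_⟩
      · rcases hs i with h | h <;> simp [h]
      · obtain ⟨w, hw, rfl⟩ := List.mem_map.mp hv
        have := h w hw
        refine ⟨⟨fun i => ?_, ?_⟩, fun j hj => ?_⟩
        · simpa using this.1.1 i
        · simpa using this.1.2
        · simpa using this.2 j hj
    refine cone_mem _ ?_ (Submodule.add_mem _ ih h2)
    rintro l ⟨hl, s, hs, h⟩
    refine ⟨by simp [hl], fun i => if i.val = k + 1 then 1 else s i, fun i => ?_, fun v hv => ?_⟩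
    · dsimp only; split_ifs
      · exact Or.inl rfl
      · exact hs i
    · rcases List.mem_cons.mp hv with rfl | hv
      · refine ⟨⟨fun i => ?_, ?_⟩, fun j hj => ?_⟩
        · simp only [ee]; split_ifs <;> simp
        · rw [Finset.sum_eq_single (⟨k+1, by omega⟩ : Fin (n+1))]
          · simp [ee]
          · intro j _ hj
            have : j.val ≠ k + 1 := fun h => hj (Fin.ext h)
            simp [ee, this]
          · simp
        · simp only [ee]; rw [if_neg (by omega)]
      · obtain ⟨h3, h4⟩ := h v hv
        have e : ∀ i : Fin (n+1), (if i.val = k + 1 then (1:ℝ) else s i) * v i = s i * v i := by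
          intro i
          split_ifs with hi
          · rw [h4 i (by omega)]; simp
          · rfl
        refine ⟨⟨fun i => ?_, ?_⟩, fun j hj => h4 j (by omega)⟩
        · rw [e]; exact h3.1 i
        · simp_rw [e]; exact h3.2

lemma hh_Sm (k : ℕ) (hk : k ≤ n) : hh n k ∈ Sup (Sm (Fam n) (k+1) 2) := by
  refine sup_mono ?_ (hh_mem n k hk)
  rintro l ⟨h1, s, hs, h⟩
  refine ⟨h1, ⟨_, ⟨s, hs, rfl⟩, fun v hv => (h v hv).1⟩, fun x hx y hy => ?_⟩
  have b : ∀ v ∈ l, ∀ i, |v i| ≤ 1 := by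
    intro v hv i
    rw [← Face_l1 n s hs v (h v hv).1]
    exact Finset.single_le_sum (f := fun i => |v i|) (fun _ _ => abs_nonneg _) (Finset.mem_univ i)
  rw [dist_pi_le_iff (by norm_num)]
  intro i
  rw [Real.dist_eq]
  have := b x hx i; have := b y hy i
  calc |x i - y i| ≤ |x i| + |y i| := abs_sub _ _
    _ ≤ 2 := by linarith

def uu (g : En n → Fin n → ℝ) (k : ℕ) (v : En n) : ZMod 2 := by
  classical exact
  if h : k < n then (if 0 < g v ⟨k, h⟩ ∨ (g v ⟨k, h⟩ = 0 ∧ 0 < toLex v) then 1 else 0)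
  else (if 0 < toLex v then 1 else 0)

lemma uu_neg (g : En n → Fin n → ℝ) (hg : ∀ v, g (-v) = - g v) (k : ℕ) (v : En n) (hv : v ≠ 0) :
    uu n g k v + uu n g k (-v) = 1 := by
  have hlex : (0 < toLex v ∧ ¬ 0 < toLex (-v)) ∨ (¬ 0 < toLex v ∧ 0 < toLex (-v)) := by
    have e : toLex (-v) = - toLex v := rfl
    rw [e, Left.neg_pos_iff]
    rcases lt_trichotomy (toLex v) 0 with h | h | h
    · exact Or.inr ⟨h.not_gt, h⟩
    · exact absurd h hv
    · exact Or.inl ⟨h, h.not_gt⟩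
  unfold uu
  split_ifs with h1 h2 h3 h4 h5 h6 h7 <;> simp [hg] at * <;> grind

theorem borsuk_ulam (g : En n → Fin n → ℝ) (hc : Continuous g) (hg : ∀ v, g (-v) = - g v) :
    ∃ v : En n, ∑ i, |v i| = 1 ∧ g v = 0 := by
  by_contra hno
  push Not at hno
  let Sph : Set (En n) := {v | ∑ i, |v i| = 1}
  have hcl : IsClosed Sph := isClosed_eq (by fun_prop) continuous_const
  have hcomp : IsCompact Sph := by
    refine Metric.isCompact_of_isClosed_isBounded hcl ?_
    refine (Metric.isBounded_closedBall (x := (0 : En n)) (r := 1)).subset ?_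
    intro v hv
    rw [mem_closedBall_zero_iff, pi_norm_le_iff_of_nonneg zero_le_one]
    intro i
    have : ∑ i, |v i| = 1 := hv
    rw [Real.norm_eq_abs, ← this]
    exact Finset.single_le_sum (f := fun i => |v i|) (fun _ _ => abs_nonneg _) (Finset.mem_univ i)
  have hne : Sph.Nonempty := by
    refine ⟨ee n 0, ?_⟩
    show ∑ i, |ee n 0 i| = 1
    rw [Finset.sum_eq_single (0 : Fin (n+1))] <;> simp [ee]
  obtain ⟨v0, hv0, hmin⟩ := hcomp.exists_isMinOn hne (hc.norm.continuousOn)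
  set η := ‖g v0‖ with hη
  have hηpos : 0 < η := norm_pos_iff.mpr (hno v0 hv0)
  obtain ⟨δ, hδ, hunif⟩ := Metric.uniformContinuousOn_iff.mp (hcomp.uniformContinuousOn_of_continuous hc.continuousOn) η hηpos
  -- choose r
  have hq : 1 - 1 / ((n : ℝ) + 1) < 1 := by
    have : 0 < 1 / ((n:ℝ)+1) := by positivity
    linarith
  obtain ⟨r, hr⟩ := exists_pow_lt_of_lt_one (show 0 < δ / 2 by positivity) hq
  let H : ℕ → Ch (En n) := fun k => (sd bary (k+1))^[r] (hh n k)
  have hHSm : ∀ k, k ≤ n → H k ∈ Sup (Sm (Fam n) (k+1) ((1 - 1 / ((k : ℝ) + 1)) ^ r * 2)) := fun k hk =>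
    sd_iter_mem (Fam n) (Fam_convex n) k 2 (by norm_num) _ (hh_Sm n k hk) r
  have hbd : ∀ k, bd (H (k+1)) = H k + nu (fun x => -x) (H k) := by
    intro k
    simp only [H]
    rw [bd_sd_iter, bd_hh, sd_iter_add, nu_sd_iter _ _ bary_neg]
  let u := uu n g
  have hFs : ∀ Q ∈ Fam n, ∀ v ∈ Q, v ∈ Sph := by
    rintro _ ⟨s, hs, rfl⟩ v hv
    exact Face_l1 n s hs v hv
  have hnz : ∀ v ∈ Sph, v ≠ 0 := by
    rintro v hv rfl
    have : ∑ i : Fin (n+1), |(0 : En n) i| = 1 := hv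
    simp at this
  have hPsi : ∀ k, k ≤ n → Om u k (H k) = 1 := by
    intro k
    induction k with
    | zero =>
      intro _
      have : H 0 = g1 [ee n 0] := by
        have h1 : sd bary (0+1) (g1 [ee n 0]) = g1 [ee n 0] := by
          simp [sd, bd, bdl, cone, bary]
        simp only [H, hh]
        exact Function.iterate_fixed h1 r
      rw [this]; simp [Om, om]
    | succ k ih =>
      intro hk
      rw [Om_succ u k (sup_mono (fun l hl => hl.1) (hHSm (k+1) hk)), hbd]
      rw [UOm_nu u (fun x => -x) (fun v => v ≠ 0) (fun k v hv => uu_neg n g hg k v hv), ih (by omega)]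
      refine sup_mono ?_ (hHSm k (by omega))
      rintro l ⟨h1, ⟨Q, hQ, h2⟩, _⟩
      refine ⟨?_, fun v hv => hnz v (hFs Q hQ v (h2 v hv))⟩
      rintro rfl; simp at h1
  have hlast : Om u n (H n) = 0 := by
    have := sup_map (Om u n) ⊥ ?_ (hHSm n le_rfl)
    · simpa using this
    rintro l ⟨h1, ⟨Q, hQ, h2⟩, h3⟩
    rw [Submodule.mem_bot, Om, ext2_g1]
    match l, h1 with
    | w :: l, h1 =>
    have hw : w ∈ Sph := hFs Q hQ w (h2 w (by simp))
    have hwη : η ≤ ‖g w‖ := hmin hw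
    have : ∃ i, η ≤ ‖g w i‖ := by
      by_contra hcon
      push Not at hcon
      exact absurd ((pi_norm_lt_iff hηpos).mpr hcon) (not_lt.mpr hwη)
    obtain ⟨i, hi⟩ := this
    refine om_zero_of_const u i.val (u i.val w) n i.isLt _ ?_
    intro v hv
    have hvS : v ∈ Sph := hFs Q hQ v (h2 v hv)
    have hd : dist v w < δ := by
      refine (h3 v hv w (by simp)).trans_lt ?_
      linarith
    have h4 := hunif v hvS w hw hd
    have h5 : |g v i - g w i| < η := by
      have := (dist_le_pi_dist (g v) (g w) i).trans_lt h4
      rwa [Real.dist_eq] at this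
    rw [Real.norm_eq_abs] at hi
    simp only [u, uu, i.isLt, dif_pos, Fin.eta]
    rw [abs_lt] at h5
    rcases le_abs.mp hi with h | h
    · rw [if_pos (Or.inl (by linarith)), if_pos (Or.inl (by linarith))]
    · rw [if_neg, if_neg]
      · rintro (h | h) <;> linarith
      · rintro (h | h) <;> linarith
  have := hPsi n le_rfl
  rw [hlast] at this
  exact absurd this (by decide)

end BU
end
end GK

namespace GK
noncomputable section
open MvPolynomial

def clamp (t : ℝ) : ℝ := max (-1) (min 1 t)
lemma clamp_cont : Continuous clamp := by unfold clamp; fun_prop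
lemma clamp_neg (t : ℝ) : clamp (-t) = - clamp t := by
  unfold clamp
  simp only [max_def, min_def]; split_ifs <;> linarith

open Filter Topology in
lemma ham {X : Type*} (n : ℕ) (φ : Fin (n+1) → X → ℝ) (S : Fin n → Finset X) :
    ∃ v : En n, v ≠ 0 ∧ ∀ i, 2 * ((S i).filter (fun x => 0 < ∑ j, v j * φ j x)).card ≤ (S i).card ∧
      2 * ((S i).filter (fun x => ∑ j, v j * φ j x < 0)).card ≤ (S i).card := by
  let f : En n → X → ℝ := fun v x => ∑ j, v j * φ j x
  have hfc : ∀ x, Continuous (fun v => f v x) := by intro x; simp only [f]; fun_prop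
  have hfn : ∀ v x, f (-v) x = - f v x := by intro v x; simp [f]
  have h1 : ∀ m : ℕ, ∃ v : En n, ∑ i, |v i| = 1 ∧ ∀ i, ∑ x ∈ S i, clamp (((m:ℝ)+1) * f v x) = 0 := by
    intro m
    obtain ⟨v, hv, h⟩ := borsuk_ulam n (fun v i => ∑ x ∈ S i, clamp (((m:ℝ)+1) * f v x))
      (by
        refine continuous_pi (fun i => continuous_finsetSum _ (fun x _ => clamp_cont.comp (continuous_const.mul (hfc x)))))
      (by intro v; funext i; simp [hfn, clamp_neg])
    exact ⟨v, hv, fun i => congrFun h i⟩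
  choose V hV1 hV2 using h1
  have hcomp : IsCompact {v : En n | ∑ i, |v i| = 1} := by
    have hcl : IsClosed {v : En n | ∑ i, |v i| = 1} := isClosed_eq (by fun_prop) continuous_const
    refine Metric.isCompact_of_isClosed_isBounded hcl ?_
    refine (Metric.isBounded_closedBall (x := (0 : En n)) (r := 1)).subset ?_
    intro v hv
    rw [mem_closedBall_zero_iff, pi_norm_le_iff_of_nonneg zero_le_one]
    intro i
    have : ∑ i, |v i| = 1 := hv
    rw [Real.norm_eq_abs, ← this]
    exact Finset.single_le_sum (f := fun i => |v i|) (fun _ _ => abs_nonneg _) (Finset.mem_univ i)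
  obtain ⟨v, hv, s, hs, hlim⟩ := hcomp.tendsto_subseq (x := V) (fun m => hV1 m)
  have hv0 : v ≠ 0 := by
    rintro rfl
    simp at hv
  have key : ∀ x, 0 < |f v x| → ∀ᶠ m in atTop, ∀ e : ℝ, (e = 1 ∨ e = -1) → 0 < e * f v x → 1 ≤ e * (((s m : ℕ):ℝ)+1) * f (V (s m)) x := by
    intro x hx
    have t1 : Tendsto (fun m => f (V (s m)) x) atTop (𝓝 (f v x)) := ((hfc x).tendsto v).comp hlim
    have t2 : Tendsto (fun m => ((s m : ℕ):ℝ)+1) atTop atTop :=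
      tendsto_atTop_add_const_right _ _ (tendsto_natCast_atTop_atTop.comp hs.tendsto_atTop)
    have a1 := t1.eventually (Metric.ball_mem_nhds _ (half_pos hx))
    have a2 := t2.eventually_ge_atTop (2 / |f v x|)
    filter_upwards [a1, a2] with m b1 b2 e he hpos
    rw [Real.dist_eq, abs_lt] at b1
    rw [div_le_iff₀ hx] at b2
    have : |f v x| / 2 ≤ e * f (V (s m)) x := by
      rcases he with rfl | rfl
      · rw [one_mul] at hpos ⊢; rw [abs_of_pos hpos] at b1 ⊢; linarith [b1.1]
      · have : f v x < 0 := by linarith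
        rw [abs_of_neg this] at b1 ⊢; linarith [b1.2]
    have hpos : (0:ℝ) < ((s m : ℕ):ℝ)+1 := by positivity
    nlinarith
  have key2 : ∀ i (e : ℝ), (e = 1 ∨ e = -1) → 2 * ((S i).filter (fun x => 0 < e * f v x)).card ≤ (S i).card := by
    intro i e he
    have : ∀ᶠ m in atTop, ∀ x ∈ (S i).filter (fun x => 0 < e * f v x), 1 ≤ e * (((s m : ℕ):ℝ)+1) * f (V (s m)) x := by
      rw [Filter.eventually_all_finset]
      intro x hx
      have hx := (Finset.mem_filter.mp hx).2
      filter_upwards [key x (abs_pos.mpr (by rintro h; rw [h] at hx; simp at hx))] with m hm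
      exact hm e he hx
    obtain ⟨m, hm⟩ := this.exists
    have hz := hV2 (s m) i
    have hz2 : ∑ x ∈ S i, clamp (e * (((s m : ℕ):ℝ)+1) * f (V (s m)) x) = 0 := by
      rcases he with rfl | rfl
      · simpa using hz
      · rw [← neg_eq_zero, ← Finset.sum_neg_distrib, ← hz]
        refine Finset.sum_congr rfl (fun x _ => ?_)
        rw [← clamp_neg]; ring_nf
    rw [← Finset.sum_filter_add_sum_filter_not _ (fun x => 0 < e * f v x)] at hz2
    have c1 : ∑ x ∈ (S i).filter (fun x => 0 < e * f v x), clamp (e * (((s m : ℕ):ℝ)+1) * f (V (s m)) x) = ((S i).filter (fun x => 0 < e * f v x)).card := by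
      rw [Finset.card_eq_sum_ones, Nat.cast_sum]
      refine Finset.sum_congr rfl (fun x hx => ?_)
      have := hm x hx
      rw [clamp, min_eq_left this]; norm_num
    have c2 : -(((S i).filter (fun x => ¬ 0 < e * f v x)).card : ℝ) ≤ ∑ x ∈ (S i).filter (fun x => ¬ 0 < e * f v x), clamp (e * (((s m : ℕ):ℝ)+1) * f (V (s m)) x) := by
      rw [Finset.card_eq_sum_ones, Nat.cast_sum, ← Finset.sum_neg_distrib]
      refine Finset.sum_le_sum (fun x hx => ?_)
      simp [clamp]
    have c3 := Finset.card_filter_add_card_filter_not (s := S i) (fun x => 0 < e * f v x)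
    have c4 : (((S i).filter (fun x => 0 < e * f v x)).card : ℝ) ≤ ((S i).filter (fun x => ¬ 0 < e * f v x)).card := by linarith
    have c5 : ((S i).filter (fun x => 0 < e * f v x)).card ≤ ((S i).filter (fun x => ¬ 0 < e * f v x)).card := by exact_mod_cast c4
    omega
  refine ⟨v, hv0, fun i => ⟨?_, ?_⟩⟩
  · have := key2 i 1 (Or.inl rfl); simpa [f] using this
  · have := key2 i (-1) (Or.inr rfl); simpa [f] using this

lemma ham_poly (d : ℕ) {ι : Type*} [Fintype ι] (S : ι → Finset E3) (hd : Fintype.card ι < (d+3).choose 3) :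
    ∃ f : Poly, f ≠ 0 ∧ f.totalDegree ≤ d ∧ ∀ i, 2 * ((S i).filter (fun x => 0 < eval x f)).card ≤ (S i).card ∧
      2 * ((S i).filter (fun x => eval x f < 0)).card ≤ (S i).card := by
  classical
  rw [← finrank_PD] at hd
  let n := Fintype.card ι
  let eq := Fintype.equivFin ι
  let B := Module.finBasis ℝ (PD d)
  let c : Fin (n+1) → Fin (Module.finrank ℝ (PD d)) := Fin.castLE hd
  obtain ⟨v, hv, h⟩ := ham n (fun j x => eval x (B (c j) : Poly)) (fun i => S (eq.symm i))
  have hli : LinearIndependent ℝ (fun j => (B (c j) : Poly)) := by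
    have := B.linearIndependent.map' (PD d).subtype (Submodule.ker_subtype _)
    exact this.comp c (Fin.castLE_injective hd)
  let f : Poly := ∑ j, v j • (B (c j) : Poly)
  refine ⟨f, ?_, ?_, ?_⟩
  · intro hf
    apply hv
    funext j
    exact Fintype.linearIndependent_iff.mp hli v hf j
  · rw [← mem_PD]
    exact Submodule.sum_mem _ (fun j _ => Submodule.smul_mem _ _ (B (c j)).2)
  · intro i
    have := h (eq i)
    simpa [f, smul_eval] using this
end
end GK

namespace GK
noncomputable section
open MvPolynomial

def Cell (F : ℕ → Poly) (j : ℕ) (σ : Fin j → Bool) (x : E3) : Prop :=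
  ∀ i : Fin j, if σ i then 0 < eval x (F i) else eval x (F i) < 0

open Classical in
lemma partition_steps (S : Finset E3) (j : ℕ) : ∃ F : ℕ → Poly, (∀ i < j, F i ≠ 0) ∧
    (∀ i < j, (F i).totalDegree ≤ 3 * 2 ^ (i / 3)) ∧
    ∀ σ : Fin j → Bool, 2 ^ j * (S.filter (Cell F j σ)).card ≤ S.card := by
  induction j with
  | zero =>
    refine ⟨fun _ => 0, by simp, by simp, fun σ => ?_⟩
    simpa using Finset.card_filter_le _ _
  | succ j ih =>
    obtain ⟨F, h1, h2, h3⟩ := ih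
    have hd : Fintype.card (Fin j → Bool) < (3 * 2 ^ (j/3) + 3).choose 3 := by
      have := choose3 (3 * 2 ^ (j/3))
      simp only [Fintype.card_fun, Fintype.card_bool, Fintype.card_fin]
      have h4 : 2 ^ j ≤ 4 * (2 ^ (j/3))^3 := by
        rw [← pow_mul, show (4:ℕ) = 2^2 by norm_num, ← pow_add]
        exact Nat.pow_le_pow_right (by norm_num) (by omega)
      have h5 : 0 < 2 ^ (j/3) := by positivity
      generalize 2 ^ (j/3) = q at *
      nlinarith [pow_pos h5 2, pow_pos h5 3]
    obtain ⟨f, hf0, hfd, hf⟩ := ham_poly (3 * 2 ^ (j/3)) (fun σ : Fin j → Bool => S.filter (Cell F j σ)) hd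
    refine ⟨fun i => if i = j then f else F i, ?_, ?_, ?_⟩
    · intro i hi
      dsimp only; split_ifs with h
      · exact hf0
      · exact h1 i (by omega)
    · intro i hi
      dsimp only; split_ifs with h
      · rw [h]; exact hfd
      · exact h2 i (by omega)
    · intro σ
      have hsub : S.filter (Cell (fun i => if i = j then f else F i) (j+1) σ) =
          (S.filter (Cell F j (fun i => σ i.castSucc))).filter (fun x => if σ (Fin.last j) then 0 < eval x f else eval x f < 0) := by
        ext x
        simp only [Finset.mem_filter, Cell, and_assoc, Fin.forall_fin_succ' (n := j), Fin.val_castSucc, Fin.val_last, if_true]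
        have : ∀ i : Fin j, (i : ℕ) ≠ j := fun i => by omega
        simp [this]
      rw [hsub]
      have := hf (fun i => σ i.castSucc)
      have h6 := h3 (fun i => σ i.castSucc)
      rw [pow_succ, mul_assoc]
      refine le_trans (Nat.mul_le_mul_left _ ?_) h6
      cases σ (Fin.last j)
      · simpa using this.2
      · simpa using this.1

/-- a nonzero polynomial, sign patterns of factors -/
lemma sign_same (p : Polynomial ℝ) (t t' : ℝ) (htt : t ≤ t') (h : ∀ s, t ≤ s → s ≤ t' → Polynomial.eval s p ≠ 0) :
    0 < Polynomial.eval t p ↔ 0 < Polynomial.eval t' p := by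
  by_contra hcon
  have hc : ContinuousOn (fun s => Polynomial.eval s p) (Set.Icc t t') := p.continuous.continuousOn
  have h1 := h t le_rfl htt
  have h2 := h t' htt le_rfl
  have : ∃ s ∈ Set.Icc t t', Polynomial.eval s p = 0 := by
    rcases lt_or_gt_of_ne h1 with a | a <;> rcases lt_or_gt_of_ne h2 with b | b
    · exact absurd ⟨fun h => absurd h a.not_gt, fun h => absurd h b.not_gt⟩ hcon
    · exact intermediate_value_Icc htt hc ⟨a.le, b.le⟩
    · exact intermediate_value_Icc' htt hc ⟨b.le, a.le⟩
    · exact absurd ⟨fun _ => b, fun _ => a⟩ hcon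
  obtain ⟨s, hs, h0⟩ := this
  exact h s hs.1 hs.2 h0

open Classical in
lemma patterns_le (j : ℕ) (p : Fin j → Polynomial ℝ) (D : ℕ) (hp : ∏ i, p i ≠ 0) (hD : (∏ i, p i).natDegree ≤ D)
    (T : Finset ℝ) (hT : ∀ t ∈ T, ∀ i, Polynomial.eval t (p i) ≠ 0) :
    (T.image (fun t => fun i => decide (0 < Polynomial.eval t (p i)))).card ≤ D + 1 := by
  set P := ∏ i, p i with hP
  let cnt : ℝ → ℕ := fun t => (P.roots.toFinset.filter (fun r => r < t)).card
  have hcnt : (T.image cnt).card ≤ D + 1 := by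
    have : T.image cnt ⊆ Finset.range (D+1) := by
      intro c hc
      obtain ⟨t, _, rfl⟩ := Finset.mem_image.mp hc
      rw [Finset.mem_range]
      have := (Finset.card_filter_le P.roots.toFinset (fun r => r < t)).trans ((Multiset.toFinset_card_le _).trans (Polynomial.card_roots' P))
      simp only [cnt]; omega
    simpa using Finset.card_le_card this
  have key : ∀ t ∈ T, ∀ t' ∈ T, t ≤ t' → cnt t = cnt t' → ∀ i, (0 < Polynomial.eval t (p i) ↔ 0 < Polynomial.eval t' (p i)) := by
    intro t ht t' ht' htt hc i
    refine sign_same _ _ _ htt ?_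
    intro s h1 h2 h0
    have hs : s ∈ P.roots.toFinset := by
      rw [Multiset.mem_toFinset, Polynomial.mem_roots hp, Polynomial.IsRoot, hP, Polynomial.eval_prod]
      exact Finset.prod_eq_zero (Finset.mem_univ i) h0
    have hst' : s < t' := lt_of_le_of_ne h2 (by rintro rfl; exact hT _ ht' i h0)
    have : cnt t < cnt t' := by
      apply Finset.card_lt_card
      rw [Finset.ssubset_iff_of_subset]
      · exact ⟨s, Finset.mem_filter.mpr ⟨hs, hst'⟩, fun h => absurd (Finset.mem_filter.mp h).2 h1.not_gt⟩
      · intro r hr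
        have := Finset.mem_filter.mp hr
        exact Finset.mem_filter.mpr ⟨this.1, this.2.trans_le htt⟩
    omega
  have key' : ∀ t ∈ T, ∀ t' ∈ T, cnt t = cnt t' → ∀ i, (0 < Polynomial.eval t (p i) ↔ 0 < Polynomial.eval t' (p i)) := by
    intro t ht t' ht' hc i
    rcases le_total t t' with h | h
    · exact key t ht t' ht' h hc i
    · exact (key t' ht' t ht h hc.symm i).symm
  refine le_trans ?_ hcnt
  -- choose representative
  have : ∀ c ∈ T.image (fun t => fun i => decide (0 < Polynomial.eval t (p i))), ∃ t ∈ T, (fun i => decide (0 < Polynomial.eval t (p i))) = c := by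
    intro c hc; simpa using hc
  choose! rep hr1 hr2 using this
  refine Finset.card_le_card_of_injOn (fun c => cnt (rep c)) (fun c hc => Finset.mem_image_of_mem _ (hr1 c hc)) ?_
  intro c hc c' hc' h
  rw [← hr2 c hc, ← hr2 c' hc']
  funext i
  have := key' _ (hr1 c hc) _ (hr1 c' hc') h i
  simp only [this]

open Classical in
theorem partition_bound (S : Finset E3) (V : Finset Ln) (m : ℕ) : ∃ f : Poly, f ≠ 0 ∧ f.totalDegree ≤ 9 * 2 ^ m ∧
    ∑ x ∈ S.filter (fun x => eval x f ≠ 0), (V.filter (fun l => On x l)).card ≤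
      (V.filter (fun l => ¬ Van f l)).card * (9 * 2 ^ m + 1) +
      (S.filter (fun x => eval x f ≠ 0)).card * (S.card / 8 ^ m) := by
  obtain ⟨F, hF0, hFd, hF⟩ := partition_steps S (3*m)
  let f : Poly := ∏ i : Fin (3*m), F i
  have hdeg : f.totalDegree ≤ 9 * 2 ^ m := by
    refine (totalDegree_finsetProd _ _).trans ?_
    have : ∑ i : Fin (3*m), (F i).totalDegree ≤ ∑ i ∈ Finset.range (3*m), 3 * 2^(i/3) := by
      rw [Finset.sum_range]
      exact Finset.sum_le_sum (fun i _ => hFd i i.isLt)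
    refine this.trans ?_
    clear * -
    have : ∑ i ∈ Finset.range (3*m), 3 * 2^(i/3) + 9 ≤ 9 * 2 ^ m := by
      induction m with
      | zero => simp
      | succ m ih =>
        rw [show 3 * (m+1) = 3*m+1+1+1 by ring, Finset.sum_range_succ, Finset.sum_range_succ, Finset.sum_range_succ]
        rw [show 3*m/3 = m by omega, show (3*m+1)/3 = m by omega, show (3*m+1+1)/3 = m by omega, pow_succ]
        omega
    omega
  have hf0 : f ≠ 0 := Finset.prod_ne_zero_iff.mpr (fun i _ => hF0 i i.isLt)
  refine ⟨f, hf0, hdeg, ?_⟩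
  set So := S.filter (fun x => eval x f ≠ 0) with hSo
  set Vo := V.filter (fun l => ¬ Van f l) with hVo
  have hne : ∀ x ∈ So, ∀ i : Fin (3*m), eval x (F i) ≠ 0 := by
    intro x hx i h
    have := (Finset.mem_filter.mp hx).2
    apply this
    simp only [f, map_prod]
    exact Finset.prod_eq_zero (Finset.mem_univ i) h
  let pat : E3 → (Fin (3*m) → Bool) := fun x i => decide (0 < eval x (F i))
  have hcell : ∀ σ, (So.filter (fun x => pat x = σ)).card ≤ S.card / 8 ^ m := by
    intro σ
    rw [Nat.le_div_iff_mul_le (by positivity), mul_comm]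
    have h8 : 8 ^ m = 2 ^ (3*m) := by rw [pow_mul]; norm_num
    rw [h8]
    refine le_trans (Nat.mul_le_mul_left _ (Finset.card_le_card ?_)) (hF σ)
    intro x hx
    have hpat := (Finset.mem_filter.mp hx).2
    replace hx := (Finset.mem_filter.mp hx).1
    subst hpat
    refine Finset.mem_filter.mpr ⟨(Finset.mem_filter.mp hx).1, fun i => ?_⟩
    simp only [pat, decide_eq_true_eq]
    split_ifs with h
    · exact h
    · exact lt_of_le_of_ne (not_lt.mp h) (hne x hx i)
  -- swap sums
  have hswap : ∑ x ∈ So, (V.filter (fun l => On x l)).card = ∑ l ∈ Vo, (So.filter (fun x => On x l)).card := by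
    have : ∀ x ∈ So, V.filter (fun l => On x l) = Vo.filter (fun l => On x l) := by
      intro x hx
      ext l
      simp only [hVo, Finset.mem_filter]
      constructor
      · rintro ⟨h1, h2⟩
        refine ⟨⟨h1, fun hv => (Finset.mem_filter.mp hx).2 ?_⟩, h2⟩
        rw [← h2.eq]; exact hv _
      · rintro ⟨⟨h1, _⟩, h2⟩; exact ⟨h1, h2⟩
    rw [Finset.sum_congr rfl (fun x hx => by rw [this x hx])]
    exact Finset.sum_card_bipartiteAbove_eq_sum_card_bipartiteBelow On
  rw [hswap]
  -- each line
  have hline : ∀ l ∈ Vo, (So.filter (fun x => On x l)).card ≤ (9 * 2 ^ m + 1) +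
      ((So.filter (fun x => On x l)).offDiag.filter (fun q => pat q.1 = pat q.2)).card := by
    intro l hl
    set A := So.filter (fun x => On x l) with hA
    have h1 : (A.image pat).card ≤ 9 * 2 ^ m + 1 := by
      have h2 := patterns_le (3*m) (fun i => res l (F i)) (9 * 2 ^ m) (by
          rw [← map_prod]
          exact fun h => (Finset.mem_filter.mp hl).2 ((van_iff _ _).mpr h))
        (by rw [← map_prod]; exact (natDegree_res l f).trans hdeg) (A.image (fun x => x 2)) (by
          intro t ht i
          obtain ⟨x, hx, rfl⟩ := Finset.mem_image.mp ht
          have hx := Finset.mem_filter.mp hx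
          rw [eval_res, hx.2.eq]; exact hne x hx.1 i)
      rw [Finset.image_image] at h2
      convert h2 using 2
      refine Finset.image_congr (fun x hx => ?_)
      have hx := Finset.mem_filter.mp hx
      funext i
      simp only [pat, Function.comp, eval_res, hx.2.eq]
    have h3 : A.card ≤ (A.image pat).card + (A.offDiag.filter (fun q => pat q.1 = pat q.2)).card := by
      have : ∀ c ∈ A.image pat, ∃ x ∈ A, pat x = c := by intro c hc; simpa using hc
      choose! rep r1 r2 using this
      have hsub : A ⊆ (A.image pat).image rep ∪ (A.offDiag.filter (fun q => pat q.1 = pat q.2 ∧ q.2 = rep (pat q.1))).image Prod.fst := by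
        intro x hx
        by_cases hxr : x = rep (pat x)
        · refine Finset.mem_union_left _ (Finset.mem_image.mpr ⟨pat x, Finset.mem_image_of_mem _ hx, hxr.symm⟩)
        · refine Finset.mem_union_right _ (Finset.mem_image.mpr ⟨(x, rep (pat x)), ?_, rfl⟩)
          have hm := Finset.mem_image_of_mem pat hx
          simp only [Finset.mem_filter, Finset.mem_offDiag]
          exact ⟨⟨hx, r1 _ hm, hxr⟩, (r2 _ hm).symm, trivial⟩
      refine (Finset.card_le_card hsub).trans ((Finset.card_union_le _ _).trans ?_)
      refine add_le_add Finset.card_image_le (Finset.card_image_le.trans (Finset.card_le_card ?_))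
      intro q hq
      simp only [Finset.mem_filter] at hq ⊢
      exact ⟨hq.1, hq.2.1⟩
    omega
  refine (Finset.sum_le_sum hline).trans ?_
  rw [Finset.sum_add_distrib, Finset.sum_const, smul_eq_mul]
  refine Nat.add_le_add_left ?_ _
  -- disjoint pairs
  rw [← Finset.card_biUnion]
  · calc _ ≤ (So.biUnion (fun x => (So.filter (fun y => pat y = pat x)).image (fun y => (x, y)))).card := by
          apply Finset.card_le_card
          intro q hq
          simp only [Finset.mem_biUnion, Finset.mem_filter, Finset.mem_offDiag] at hq
          obtain ⟨l, hl, ⟨⟨h1, _⟩, ⟨h2, _⟩, _⟩, h3⟩ := hq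
          simp only [Finset.mem_biUnion, Finset.mem_image, Finset.mem_filter]
          exact ⟨q.1, h1, q.2, ⟨h2, h3.symm⟩, rfl⟩
      _ ≤ ∑ x ∈ So, ((So.filter (fun y => pat y = pat x)).image (fun y => (x, y))).card := Finset.card_biUnion_le
      _ ≤ ∑ x ∈ So, (S.card / 8 ^ m) := Finset.sum_le_sum (fun x _ => Finset.card_image_le.trans (hcell _))
      _ = _ := by rw [Finset.sum_const, smul_eq_mul]
  · intro l hl l' hl' hll
    rw [Function.onFun, Finset.disjoint_left]
    intro q hq hq'
    simp only [Finset.mem_filter, Finset.mem_offDiag] at hq hq'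
    exact hll (line_unique hq.1.1.2 hq.1.2.1.2 hq'.1.1.2 hq'.1.2.1.2 hq.1.2.2)
end
end GK

namespace GK
noncomputable section
open MvPolynomial

lemma sep_exists (l m : Ln) (h : l ≠ m) : ∃ p : Poly, p.totalDegree ≤ 1 ∧ Van p m ∧ ¬ Van p l := by
  by_cases hac : l.a = m.a ∧ l.c = m.c
  · refine ⟨X 1 - C m.b - C m.d * X 2, ?_, ?_, ?_⟩
    · refine (totalDegree_sub _ _).trans (max_le ((totalDegree_sub _ _).trans (max_le ?_ ?_)) ((totalDegree_mul _ _).trans ?_)) <;> simp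
    · intro t; simp [pt]; ring
    · intro hv
      have h0 := hv 0; have h1 := hv 1
      simp [pt] at h0 h1
      exact h (Ln.ext4 hac.1 (by linarith) hac.2 (by linarith))
  · refine ⟨X 0 - C m.a - C m.c * X 2, ?_, ?_, ?_⟩
    · refine (totalDegree_sub _ _).trans (max_le ((totalDegree_sub _ _).trans (max_le ?_ ?_)) ((totalDegree_mul _ _).trans ?_)) <;> simp
    · intro t; simp [pt]; ring
    · intro hv
      have h0 := hv 0; have h1 := hv 1
      simp [pt] at h0 h1
      exact hac ⟨by linarith, by linarith⟩

lemma sep_all (V : Finset Ln) (l : Ln) (hl : l ∈ V) : ∃ p : Poly, p.totalDegree + 1 ≤ V.card ∧ (∀ m ∈ V, m ≠ l → Van p m) ∧ ¬ Van p l := by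
  classical
  have : ∀ m ∈ V.erase l, ∃ p : Poly, p.totalDegree ≤ 1 ∧ Van p m ∧ ¬ Van p l := fun m hm =>
    sep_exists l m (Finset.ne_of_mem_erase hm).symm
  choose! p h1 h2 h3 using this
  refine ⟨∏ m ∈ V.erase l, p m, ?_, ?_, ?_⟩
  · have : (∏ m ∈ V.erase l, p m).totalDegree ≤ ∑ m ∈ V.erase l, 1 :=
      (totalDegree_finsetProd _ _).trans (Finset.sum_le_sum h1)
    simp only [Finset.sum_const, smul_eq_mul, mul_one, Finset.card_erase_of_mem hl] at this
    have : 0 < V.card := Finset.card_pos.mpr ⟨l, hl⟩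
    omega
  · intro m hm hml t
    rw [map_prod]
    exact Finset.prod_eq_zero (Finset.mem_erase.mpr ⟨hml, hm⟩) (h2 m (Finset.mem_erase.mpr ⟨hml, hm⟩) t)
  · rw [van_iff, map_prod, Finset.prod_eq_zero_iff]
    rintro ⟨m, hm, h0⟩
    exact h3 m hm ((van_iff _ _).mpr h0)

lemma choose_arith (δ e k : ℕ) : ((k + δ + e + 3).choose 3 : ℤ) + (k+3).choose 3 - (k + e + 3).choose 3 - (k + δ + 3).choose 3 ≤ δ * e * (k + δ + e + 2) := by
  have c : ∀ m : ℕ, 6 * ((m+3).choose 3 : ℤ) = (m+1)*(m+2)*(m+3) := fun m => by exact_mod_cast choose3 m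
  have h1 := c (k + δ + e); have h2 := c k; have h3 := c (k+e); have h4 := c (k+δ)
  push_cast at *
  have hd : (0:ℤ) ≤ δ * e * (δ + e) := by positivity
  nlinarith

theorem bezout (g h : Poly) (hg : Irreducible g) (hgh : ¬ g ∣ h) (V : Finset Ln) (hV : ∀ l ∈ V, Van g l ∧ Van h l) :
    V.card ≤ g.totalDegree * h.totalDegree := by
  classical
  by_contra hcon
  push Not at hcon
  set δ := g.totalDegree with hδ
  set e := h.totalDegree with he
  set n := V.card with hn
  have hg0 : g ≠ 0 := hg.ne_zero
  have hh0 : h ≠ 0 := by rintro rfl; exact hgh (dvd_zero _)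
  have hrel : IsRelPrime g h := (hg.isRelPrime_iff_not_dvd).mpr hgh
  choose! u hu1 hu2 hu3 using sep_all V
  -- k large
  set k := n * (δ * e + 1) + n with hk
  set m := k + δ + e with hm
  set q := m + 2 - n with hq
  let z : Poly := X 2
  let A1 : (V → (Fin q → ℝ)) →ₗ[ℝ] Poly :=
    ∑ l : V, ∑ i : Fin q, (LinearMap.toSpanSingleton ℝ Poly (u l * z ^ (i:ℕ))) ∘ₗ (LinearMap.proj i) ∘ₗ (LinearMap.proj l)
  let A2 : PD (k + e) →ₗ[ℝ] Poly := (LinearMap.mulLeft ℝ g) ∘ₗ (PD (k+e)).subtype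
  let A3 : PD (k + δ) →ₗ[ℝ] Poly := (LinearMap.mulLeft ℝ h) ∘ₗ (PD (k+δ)).subtype
  let A := A1.coprod (A2.coprod A3)
  have hA1 : ∀ c, A1 c = ∑ l : V, ∑ i : Fin q, c l i • (u l * z ^ (i:ℕ)) := by
    intro c; simp [A1]
  have hrange : LinearMap.range A ≤ PD m := by
    rintro _ ⟨⟨c, p, r⟩, rfl⟩
    rw [LinearMap.coprod_apply, LinearMap.coprod_apply]
    refine Submodule.add_mem _ ?_ (Submodule.add_mem _ ?_ ?_)
    · rw [hA1]
      refine Submodule.sum_mem _ (fun l _ => Submodule.sum_mem _ (fun i _ => Submodule.smul_mem _ _ ?_))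
      rw [mem_PD]
      refine (totalDegree_mul _ _).trans ?_
      have h1 := hu1 l l.2
      have h2 : (z ^ (i:ℕ)).totalDegree ≤ i := by
        refine (totalDegree_pow _ _).trans ?_
        simp [z]
      have := i.isLt
      omega
    · show g * p.1 ∈ _
      rw [mem_PD]
      have := mem_PD.mp p.2
      refine (totalDegree_mul _ _).trans ?_; omega
    · show h * r.1 ∈ _
      rw [mem_PD]
      have := mem_PD.mp r.2
      refine (totalDegree_mul _ _).trans ?_; omega
  have hker : ∀ x ∈ LinearMap.ker A, ∃ r : PD k, x.1 = 0 ∧ (x.2.1 : Poly) = h * r ∧ (x.2.2 : Poly) = - (g * r) := by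
    rintro ⟨c, p, r⟩ hx
    rw [LinearMap.mem_ker, LinearMap.coprod_apply, LinearMap.coprod_apply] at hx
    change A1 c + (g * p.1 + h * r.1) = 0 at hx
    have hc : c = 0 := by
      funext l
      have h1 := congrArg (res l) hx
      rw [map_add, map_add, map_mul, map_mul, (van_iff _ _).mp (hV l l.2).1, (van_iff _ _).mp (hV l l.2).2, zero_mul, zero_mul,
        add_zero, add_zero, map_zero, hA1, map_sum, Finset.sum_eq_single l] at h1
      · have h2 : (∑ i : Fin q, Polynomial.C (c l i) * Polynomial.X ^ (i:ℕ)) * res l (u l) = 0 := by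
          rw [← h1, map_sum, Finset.sum_mul]
          refine Finset.sum_congr rfl (fun i _ => ?_)
          rw [map_smul, map_mul, map_pow, Polynomial.smul_eq_C_mul]
          have : res l z = Polynomial.X := by simp [res, z]
          rw [this]; ring
        rcases mul_eq_zero.mp h2 with h3 | h3
        · funext i
          have := congrArg (fun p => p.coeff i) h3
          simp only [Polynomial.finsetSum_coeff, Polynomial.coeff_C_mul, Polynomial.coeff_X_pow, Polynomial.coeff_zero] at this
          rw [Finset.sum_eq_single i] at this
          · simpa using this
          · intro j _ hj
            rw [if_neg (fun h => hj (Fin.ext h.symm)), mul_zero]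
          · simp
        · exact absurd ((van_iff _ _).mpr h3) (hu3 l l.2)
      · intro l' _ hl'
        rw [map_sum]
        refine Finset.sum_eq_zero (fun i _ => ?_)
        rw [map_smul, map_mul, (van_iff _ _).mp (hu2 l' l'.2 l l.2 (fun h => hl' (Subtype.ext h.symm))), zero_mul, smul_zero]
      · simp
    subst hc
    rw [map_zero, zero_add] at hx
    have hd : h ∣ p.1 := by
      have : h ∣ g * p.1 := ⟨-r.1, by linear_combination hx⟩
      exact hrel.symm.dvd_of_dvd_mul_left this
    obtain ⟨s, hs⟩ := hd
    have hsd : s ∈ PD k := by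
      rw [mem_PD]
      by_cases hs0 : s = 0
      · simp [hs0]
      have h1 := mem_PD.mp p.2
      rw [hs, totalDegree_mul_of_isDomain hh0 hs0] at h1
      omega
    refine ⟨⟨s, hsd⟩, rfl, hs, ?_⟩
    apply mul_left_cancel₀ hh0
    rw [hs] at hx
    show h * r.1 = h * (-(g * s))
    linear_combination hx
  have hkerdim : Module.finrank ℝ (LinearMap.ker A) ≤ Module.finrank ℝ (PD k) := by
    choose! φ h1 h2 h3 using hker
    -- linear injection: use surjection from PD k
    let B0 : PD k →ₗ[ℝ] PD (k+e) := LinearMap.codRestrict _ ((LinearMap.mulLeft ℝ h) ∘ₗ (PD k).subtype) (by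
      intro c; rw [mem_PD]; have := mem_PD.mp c.2
      refine (totalDegree_mul _ _).trans ?_
      simp; omega)
    let B1 : PD k →ₗ[ℝ] PD (k+δ) := LinearMap.codRestrict _ (-((LinearMap.mulLeft ℝ g) ∘ₗ (PD k).subtype)) (by
      intro c; rw [mem_PD]; have := mem_PD.mp c.2
      rw [LinearMap.neg_apply, totalDegree_neg]
      refine (totalDegree_mul _ _).trans ?_
      simp; omega)
    let B : PD k →ₗ[ℝ] (V → (Fin q → ℝ)) × PD (k+e) × PD (k+δ) := LinearMap.prod 0 (B0.prod B1)
    have : LinearMap.ker A ≤ LinearMap.range B := by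
      intro x hx
      refine ⟨φ x, ?_⟩
      refine Prod.ext (h1 x hx).symm (Prod.ext (Subtype.ext (h2 x hx).symm) (Subtype.ext (h3 x hx).symm))
    exact (Submodule.finrank_mono this).trans (LinearMap.finrank_range_le B)
  have hrn := LinearMap.finrank_range_add_finrank_ker A
  have hr := Submodule.finrank_mono hrange
  simp only [Module.finrank_prod, Module.finrank_pi_fintype, finrank_PD, Module.finrank_self, Finset.sum_const, Finset.card_univ,
    Fintype.card_fin, smul_eq_mul, mul_one, Fintype.card_coe] at hrn hr hkerdim
  have hca := choose_arith δ e k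
  have hfin : n * q ≤ δ * e * (m + 2) := by
    zify
    push_cast [hm]
    have : ((n * q + ((k + e + 3).choose 3 + (k + δ + 3).choose 3) : ℕ) : ℤ) ≤ (m+3).choose 3 + (k+3).choose 3 := by
      rw [hn, ← hrn]; push_cast; exact_mod_cast add_le_add hr hkerdim
    push_cast [hm] at this
    linarith
  have hqn : q + n = m + 2 := by omega
  have h1 : (δ * e + 1) * q ≤ n * q := Nat.mul_le_mul_right _ hcon
  have h2 : q ≤ δ * e * n := by nlinarith
  have h3 : δ * e * n ≤ k := by rw [hk]; nlinarith
  have h4 : k = n * (δ*e) + 2 * n := by rw [hk]; ring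
  nlinarith
end
end GK

namespace GK
noncomputable section
open MvPolynomial

def rk {ι : Type*} [Fintype ι] (k : ι → ℕ) (A : Finset ι) (m : ι) : ℕ := (A.filter (fun m' => k m' < k m)).card

lemma rk_lt {ι : Type*} [Fintype ι] (k : ι → ℕ) (A : Finset ι) (m m' : ι) (hm : m ∈ A) (h : k m < k m') : rk k A m < rk k A m' := by
  apply Finset.card_lt_card
  rw [Finset.ssubset_iff_of_subset]
  · exact ⟨m, Finset.mem_filter.mpr ⟨hm, h⟩, fun h => absurd (Finset.mem_filter.mp h).2 (lt_irrefl _)⟩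
  · intro r hr
    have := Finset.mem_filter.mp hr
    exact Finset.mem_filter.mpr ⟨this.1, this.2.trans h⟩

lemma sum_rk_le {ι : Type*} [Fintype ι] (k : ι → ℕ) (hk : Function.Injective k) (A : Finset ι) (d : ℕ) :
    2 * ∑ m ∈ A, (d + 1 - rk k A m) ≤ (d+1)*(d+2) := by
  classical
  have hinj : Set.InjOn (rk k A) A := by
    intro m hm m' hm' h
    by_contra hne
    rcases lt_or_gt_of_ne (fun h => hne (hk h)) with h1 | h1
    · exact absurd h (rk_lt k A m m' hm h1).ne
    · exact absurd h (rk_lt k A m' m hm' h1).ne'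
  have h1 : ∑ m ∈ A, (d + 1 - rk k A m) = ∑ j ∈ A.image (rk k A), (d + 1 - j) := (Finset.sum_image hinj).symm
  have h2 : ∑ j ∈ A.image (rk k A), (d + 1 - j) ≤ ∑ j ∈ Finset.range (d+1), (d + 1 - j) := by
    apply Finset.sum_le_sum_of_ne_zero
    intro j _ hj
    rw [Finset.mem_range]; omega
  have h3 : 2 * ∑ j ∈ Finset.range (d+1), (d + 1 - j) = (d+1)*(d+2) := by
    clear * -
    rw [← Finset.sum_range_reflect, mul_comm]
    have : ∀ j ∈ Finset.range (d+1), d + 1 - (d + 1 - 1 - j) = j + 1 := by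
      intro j hj; rw [Finset.mem_range] at hj; omega
    rw [Finset.sum_congr rfl this]
    induction d with
    | zero => rfl
    | succ d ih =>
      rw [Finset.sum_range_succ, add_mul, ih (fun j hj => by rw [Finset.mem_range] at hj; omega)]; ring
  rw [h1]; omega

lemma good_order {ι : Type*} [Fintype ι] [DecidableEq ι] (A : ι → Finset ι) (M d : ℕ) (hself : ∀ l, l ∈ A l) (hA : ∀ l, (A l).card = M + 1) :
    ∃ k : ι → ℕ, Function.Injective k ∧ 2 * (M+1) * ∑ l, (d + 1 - rk k (A l) l) ≤ Fintype.card ι * ((d+1)*(d+2)) := by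
  let e := Fintype.equivFin ι
  let key : Equiv.Perm ι → ι → ℕ := fun σ m => (e (σ m)).val
  have hkey : ∀ σ, Function.Injective (key σ) := fun σ =>
    Fin.val_injective.comp (e.injective.comp σ.injective)
  have hsym : ∀ l, ∀ m ∈ A l, ∑ σ : Equiv.Perm ι, (d + 1 - rk (key σ) (A l) m) = ∑ σ : Equiv.Perm ι, (d + 1 - rk (key σ) (A l) l) := by
    intro l m hm
    refine Fintype.sum_equiv (Equiv.mulRight (Equiv.swap l m)) _ _ (fun σ => ?_)
    congr 1
    unfold rk
    refine Finset.card_bij (fun x _ => Equiv.swap l m x) ?_ ?_ ?_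
    · intro x hx
      rw [Finset.mem_filter] at hx ⊢
      refine ⟨?_, ?_⟩
      · by_cases h1 : x = l
        · rw [h1, Equiv.swap_apply_left]; exact hm
        · by_cases h2 : x = m
          · rw [h2, Equiv.swap_apply_right]; exact hself l
          · rw [Equiv.swap_apply_of_ne_of_ne h1 h2]; exact hx.1
      · simpa [key] using hx.2
    · intro x _ y _ h; exact (Equiv.swap l m).injective h
    · intro y hy
      rw [Finset.mem_filter] at hy
      refine ⟨Equiv.swap l m y, ?_, by simp⟩
      rw [Finset.mem_filter]
      refine ⟨?_, ?_⟩
      · by_cases h1 : y = l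
        · rw [h1, Equiv.swap_apply_left]; exact hm
        · by_cases h2 : y = m
          · rw [h2, Equiv.swap_apply_right]; exact hself l
          · rw [Equiv.swap_apply_of_ne_of_ne h1 h2]; exact hy.1
      · simpa [key] using hy.2
  have hl : ∀ l, 2 * (M+1) * ∑ σ : Equiv.Perm ι, (d + 1 - rk (key σ) (A l) l) ≤ ∑ σ : Equiv.Perm ι, ((d+1)*(d+2)) := by
    intro l
    have h1 : (M+1) * ∑ σ : Equiv.Perm ι, (d + 1 - rk (key σ) (A l) l) = ∑ m ∈ A l, ∑ σ : Equiv.Perm ι, (d + 1 - rk (key σ) (A l) m) := by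
      rw [Finset.sum_congr rfl (hsym l), Finset.sum_const, hA, smul_eq_mul]
    rw [mul_assoc, h1, Finset.sum_comm, Finset.mul_sum]
    exact Finset.sum_le_sum (fun σ _ => sum_rk_le (key σ) (hkey σ) (A l) d)
  have htot : ∑ σ : Equiv.Perm ι, (2 * (M+1) * ∑ l, (d + 1 - rk (key σ) (A l) l)) ≤ ∑ σ : Equiv.Perm ι, Fintype.card ι * ((d+1)*(d+2)) := by
    rw [← Finset.mul_sum, Finset.sum_comm, Finset.mul_sum]
    refine (Finset.sum_le_sum (fun l _ => hl l)).trans (le_of_eq ?_)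
    simp; ring
  obtain ⟨σ, _, hσ⟩ := Finset.exists_le_of_sum_le (Finset.univ_nonempty) htot
  exact ⟨key σ, hkey σ, hσ⟩

theorem deg_red (V : Finset Ln) (M d : ℕ)
    (hM : ∀ l ∈ V, ∃ T : Finset E3, M ≤ T.card ∧ ∀ x ∈ T, On x l ∧ ∃ m ∈ V, m ≠ l ∧ On x m)
    (h : 3 * V.card < (M+1)*(d+3)) : ∃ f : Poly, f ≠ 0 ∧ f.totalDegree ≤ d ∧ ∀ l ∈ V, Van f l := by
  classical
  have hM' : ∀ l : V, ∃ T : Finset E3, T.card = M ∧ ∀ x ∈ T, On x l ∧ ∃ m ∈ V, m ≠ l ∧ On x m := by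
    intro l
    obtain ⟨T, hT, hT'⟩ := hM l l.2
    obtain ⟨T1, h1, h2⟩ := Finset.exists_subset_card_eq hT
    exact ⟨T1, h2, fun x hx => hT' x (h1 hx)⟩
  choose T hT1 hT2 using hM'
  have hx : ∀ l : V, ∀ x : E3, ∃ m : V, x ∈ T l → (m ≠ l ∧ On x m) := by
    intro l x
    by_cases hx : x ∈ T l
    · obtain ⟨_, m, hm, h1, h2⟩ := hT2 l x hx
      exact ⟨⟨m, hm⟩, fun _ => ⟨fun h => h1 (congrArg Subtype.val h), h2⟩⟩
    · exact ⟨l, fun h => absurd h hx⟩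
  choose c hc using hx
  have hcinj : ∀ l, Set.InjOn (c l) (T l) := by
    intro l x hx y hy hxy
    by_contra hne
    apply (hc l x hx).1
    apply Subtype.ext
    exact (line_unique (hT2 l x hx).1 (hT2 l y hy).1 (hc l x hx).2 (by rw [hxy]; exact (hc l y hy).2) hne).symm
  let A : V → Finset V := fun l => insert l ((T l).image (c l))
  have hnot : ∀ l, l ∉ (T l).image (c l) := by
    intro l hl
    obtain ⟨x, hx, h⟩ := Finset.mem_image.mp hl
    exact (hc l x hx).1 h
  obtain ⟨k, hk, hsum⟩ := good_order A M d (fun l => Finset.mem_insert_self _ _) (fun l => by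
    rw [Finset.card_insert_of_notMem (hnot l), Finset.card_image_of_injOn (hcinj l), hT1])
  -- extra points
  have hext : ∀ l : V, ∃ U : Finset E3, U.card = d + 1 - rk k (A l) l ∧ Disjoint U (T l) ∧ ∀ x ∈ U, On x l := by
    intro l
    have hinf : (Set.range (pt l) \ (T l : Set E3)).Infinite :=
      (Set.infinite_range_of_injective (fun _ _ h => pt_inj h)).sdiff (T l).finite_toSet
    obtain ⟨U, hU, hUc⟩ := hinf.exists_subset_card_eq (d + 1 - rk k (A l) l)
    refine ⟨U, hUc, ?_, ?_⟩
    · rw [Finset.disjoint_left]; intro x hx; exact (hU hx).2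
    · intro x hx
      obtain ⟨t, rfl⟩ := (hU hx).1
      exact on_pt _ _
  choose U hU1 hU2 hU3 using hext
  let W : Finset E3 := Finset.univ.biUnion U
  have hW : W.card < Module.finrank ℝ (PD d) := by
    have h1 : W.card ≤ ∑ l, (d + 1 - rk k (A l) l) := by
      refine Finset.card_biUnion_le.trans (le_of_eq ?_)
      exact Finset.sum_congr rfl (fun l _ => hU1 l)
    rw [finrank_PD]
    have h2 := choose3 d
    rw [Fintype.card_coe] at hsum
    generalize ∑ l, (d + 1 - rk k (A l) l) = s at *
    have h3 : (M+1) * (6 * s) < (M+1) * (6 * (d+3).choose 3) := by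
      rw [h2]
      calc (M+1) * (6 * s) = 3 * (2 * (M+1) * s) := by ring
        _ ≤ 3 * (V.card * ((d+1)*(d+2))) := Nat.mul_le_mul_left _ hsum
        _ = (3 * V.card) * ((d+1)*(d+2)) := by ring
        _ < ((M+1)*(d+3)) * ((d+1)*(d+2)) := Nat.mul_lt_mul_of_pos_right h (by positivity)
        _ = _ := by ring
    have := Nat.lt_of_mul_lt_mul_left h3
    omega
  obtain ⟨f, hf0, hf⟩ := exists_ne_zero_ker W (fun x : E3 => (aeval x : Poly →ₐ[ℝ] ℝ).toLinearMap ∘ₗ (PD d).subtype) hW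
  have hf' : ∀ x ∈ W, eval x f.1 = 0 := by
    intro x hx
    have := hf x hx
    simpa [aeval_eq_eval] using this
  refine ⟨f, fun h => hf0 (Subtype.ext h), mem_PD.mp f.2, ?_⟩
  have hind : ∀ N, ∀ l : V, k l = N → Van f.1 l := by
    intro N
    induction N using Nat.strong_induction_on with
    | _ N ih =>
      intro l hl
      let R := (T l).filter (fun x => k (c l x) < k l)
      have hR : rk k (A l) l = R.card := by
        unfold rk
        have : (A l).filter (fun m' => k m' < k l) = R.image (c l) := by
          ext m
          simp only [A, R, Finset.mem_filter, Finset.mem_insert, Finset.mem_image]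
          constructor
          · rintro ⟨rfl | ⟨x, hx, rfl⟩, h⟩
            · exact absurd h (lt_irrefl _)
            · exact ⟨x, ⟨hx, h⟩, rfl⟩
          · rintro ⟨x, ⟨hx, h⟩, rfl⟩
            exact ⟨Or.inr ⟨x, hx, rfl⟩, h⟩
        rw [this, Finset.card_image_of_injOn]
        exact (hcinj l).mono (Finset.filter_subset _ _)
      refine van_of_many f.1 l (U l ∪ R) ?_ ?_ ?_
      · intro x hx
        rcases Finset.mem_union.mp hx with h | h
        · exact hU3 l x h
        · exact (hT2 l x (Finset.mem_filter.mp h).1).1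
      · intro x hx
        rcases Finset.mem_union.mp hx with h | h
        · exact hf' x (Finset.mem_biUnion.mpr ⟨l, Finset.mem_univ _, h⟩)
        · have h' := Finset.mem_filter.mp h
          have := ih _ (hl ▸ h'.2) (c l x) rfl
          rw [← (hc l x h'.1).2.eq]; exact this _
      · have hdis : Disjoint (U l) R := Finset.disjoint_of_subset_right (Finset.filter_subset _ _) (hU2 l)
        rw [Finset.card_union_of_disjoint hdis, hU1, hR]
        have := mem_PD.mp f.2
        omega
  exact fun l hl => hind _ ⟨l, hl⟩ rfl
end
end GK

namespace GK
noncomputable section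
open MvPolynomial

/-- directional derivative -/
def dd (v : E3) : Derivation ℝ Poly Poly := mkDerivation ℝ (fun i => C (v i))

lemma dd_X (v : E3) (i : Fin 3) : dd v (X i) = C (v i) := mkDerivation_X _ _ _

lemma dd_C (v : E3) (r : ℝ) : dd v (C r) = 0 := derivation_C _ _

lemma dd_comm (u v : E3) (f : Poly) : dd u (dd v f) = dd v (dd u f) := by
  have h : ⁅dd u, dd v⁆ = 0 := by
    apply derivation_ext
    intro i
    rw [Derivation.commutator_apply, dd_X, dd_X, dd_C, dd_C]; simp
  have := DFunLike.congr_fun h f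
  rw [Derivation.commutator_apply] at this
  exact sub_eq_zero.mp this

lemma dd_comb (r s t : ℝ) (u v w : E3) (f : Poly) :
    dd (r • u + s • v + t • w) f = C r * dd u f + C s * dd v f + C t * dd w f := by
  have h : dd (r • u + s • v + t • w) = r • dd u + s • dd v + t • dd w := by
    apply derivation_ext
    intro i
    simp only [Derivation.add_apply, Derivation.smul_apply, dd_X, smul_eq_C_mul]
    simp
  rw [h]
  simp [smul_eq_C_mul]

lemma dd_eq (v : E3) (f : Poly) : dd v f = ∑ i, C (v i) * pderiv i f := by
  have h : dd v = ∑ i, v i • pderiv i := by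
    apply derivation_ext
    intro i
    rw [dd_X, Fin.sum_univ_three]
    simp only [Derivation.add_apply, Derivation.smul_apply, smul_eq_C_mul]
    fin_cases i <;> simp [pderiv_X]
  rw [h, Fin.sum_univ_three, Fin.sum_univ_three]
  simp [smul_eq_C_mul]

lemma pderiv_deg (i : Fin 3) (f : Poly) : (pderiv i f).totalDegree ≤ f.totalDegree - 1 := by
  classical
  conv_lhs => rw [f.as_sum, map_sum]
  refine (totalDegree_finsetSum _ _).trans (Finset.sup_le fun s hs => ?_)
  rw [pderiv_monomial]
  by_cases h : s i = 0
  · simp [h]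
  · refine (totalDegree_monomial_le _ _).trans ?_
    have h1 := le_totalDegree hs
    have h2 : (s - Finsupp.single i 1) + Finsupp.single i 1 = s := by
      apply tsub_add_cancel_of_le
      rw [Finsupp.single_le_iff]; omega
    have h3 := congrArg Finsupp.degree h2
    rw [map_add, Finsupp.degree_single] at h3
    have h4 : Finsupp.degree s ≤ f.totalDegree := by
      rw [Finsupp.degree_apply]; exact h1
    have h5 : ((s - Finsupp.single i 1).sum fun _ e => e) = Finsupp.degree (s - Finsupp.single i 1) := by
      rw [Finsupp.degree_apply]; rfl
    have h6 := h5.le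
    refine le_trans h6 ?_
    omega

lemma dd_deg (v : E3) (f : Poly) : (dd v f).totalDegree ≤ f.totalDegree - 1 := by
  rw [dd_eq]
  refine (totalDegree_finsetSum _ _).trans (Finset.sup_le fun i _ => ?_)
  refine (totalDegree_mul _ _).trans ?_
  rw [totalDegree_C, zero_add]
  exact pderiv_deg i f

/-- restriction to a parametrized line -/
def resP (p v : E3) : Poly →ₐ[ℝ] Polynomial ℝ := aeval (fun i => Polynomial.C (p i) + Polynomial.X * Polynomial.C (v i))

lemma eval_resP (p v : E3) (f : Poly) (t : ℝ) : Polynomial.eval t (resP p v f) = eval (p + t • v) f := by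
  have h : (Polynomial.aeval t).comp (resP p v) = (aeval (p + t • v) : Poly →ₐ[ℝ] ℝ) := by
    apply MvPolynomial.algHom_ext
    intro i
    simp [resP]; ring
  have := DFunLike.congr_fun h f
  simpa [Polynomial.aeval_def, Polynomial.eval₂_eq_eval_map, aeval_eq_eval] using this

lemma natDegree_resP (p v : E3) (f : Poly) : (resP p v f).natDegree ≤ f.totalDegree := by
  have := aeval_natDegree_le (F := f) (m := f.totalDegree) le_rfl
    (f := fun i => Polynomial.C (p i) + Polynomial.X * Polynomial.C (v i)) (n := 1) (by
      intro i; compute_degree)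
  simpa [resP] using this

lemma resP_deriv (p v : E3) (f : Poly) : Polynomial.derivative (resP p v f) = resP p v (dd v f) := by
  induction f using MvPolynomial.induction_on with
  | C r => simp [resP]
  | add f g hf hg => simp [hf, hg]
  | mul_X f i hf =>
    rw [map_mul, Polynomial.derivative_mul, hf, Derivation.leibniz, dd_X]
    simp [resP]; ring

def dirL (l : Ln) : E3 := ![l.c, l.d, 1]

lemma pt_add (l : Ln) (s t : ℝ) : pt l s + t • dirL l = pt l (s + t) := by
  funext i; fin_cases i <;> simp [pt, dirL] <;> ring

lemma van_resP {f : Poly} {l : Ln} (h : Van f l) {x : E3} (hx : On x l) : resP x (dirL l) f = 0 := by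
  apply Polynomial.funext
  intro t
  rw [eval_resP, ← hx.eq, pt_add, h]; simp

open PowerSeries (derivative)

abbrev R4 := MvPolynomial (Option (Fin 3)) ℝ
def io : Poly →ₐ[ℝ] R4 := rename some
def ww : R4 := X none

lemma io_X (i : Fin 3) : io (X i) = X (some i) := rename_X _ _
lemma io_C (r : ℝ) : io (C r) = C r := rename_C _ _

variable (g : Poly) (n : E3)

def Der (v : E3) : Derivation ℝ R4 R4 := mkDerivation ℝ (fun o => o.elim
  (-ww ^ 2 * (io (dd v (dd n g)) - ww * io (dd v g) * io (dd n (dd n g))))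
  (fun i => C (v i) - ww * io (dd v g) * C (n i)))

lemma der_w (v : E3) : Der g n v ww = -ww ^ 2 * (io (dd v (dd n g)) - ww * io (dd v g) * io (dd n (dd n g))) :=
  mkDerivation_X _ _ _

lemma der_io (v : E3) (f : Poly) : Der g n v (io f) = io (dd v f) - ww * io (dd v g) * io (dd n f) := by
  induction f using MvPolynomial.induction_on with
  | C r => rw [io_C, derivation_C, dd_C, dd_C]; simp
  | add f h hf hh => simp only [map_add, hf, hh]; ring
  | mul_X f i hf =>
    have hX : Der g n v (X (some i)) = C (v i) - ww * io (dd v g) * C (n i) := mkDerivation_X _ _ _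
    rw [map_mul, io_X, Derivation.leibniz, hf, hX, Derivation.leibniz, Derivation.leibniz, dd_X, dd_X]
    simp only [smul_eq_mul, map_add, map_mul, io_X, io_C]; ring

lemma der_comm (u v : E3) (s : R4) : Der g n u (Der g n v s) = Der g n v (Der g n u s) := by
  have key : ∀ f, Der g n u (Der g n v (io f)) = Der g n v (Der g n u (io f)) := by
    intro f
    simp only [der_io, map_sub, Derivation.leibniz, der_w, smul_eq_mul]
    rw [dd_comm u v f, dd_comm u v g, dd_comm n v f, dd_comm n u f, dd_comm n u g, dd_comm n v g]
    ring
  have h : ⁅Der g n u, Der g n v⁆ = 0 := by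
    apply derivation_ext
    intro i
    rw [Derivation.commutator_apply, Derivation.zero_apply, sub_eq_zero]
    cases i with
    | some i => rw [← io_X]; exact key _
    | none =>
      change Der g n u (Der g n v ww) = Der g n v (Der g n u ww)
      have hw : ∀ v, Der g n v ww = - ww ^ 2 * Der g n v (io (dd n g)) := by
        intro v; rw [der_w, der_io]
      have := key (dd n g)
      rw [hw, hw, Derivation.leibniz, Derivation.leibniz, this]
      simp only [map_neg, pow_two, Derivation.leibniz, hw, smul_eq_mul]
      ring
  have := DFunLike.congr_fun h s
  rw [Derivation.commutator_apply] at this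
  exact sub_eq_zero.mp this

lemma der_comb (r s t : ℝ) (u v w : E3) (f : R4) :
    Der g n (r • u + s • v + t • w) f = C r * Der g n u f + C s * Der g n v f + C t * Der g n w f := by
  have h : Der g n (r • u + s • v + t • w) = r • Der g n u + s • Der g n v + t • Der g n w := by
    apply derivation_ext
    intro i
    simp only [Derivation.add_apply, Derivation.smul_apply, smul_eq_C_mul]
    cases i with
    | some i =>
      have hX : ∀ v, Der g n v (X (some i)) = C (v i) - ww * io (dd v g) * C (n i) := fun v => mkDerivation_X _ _ _
      simp only [hX, dd_comb, map_add, map_mul, io_C, Pi.add_apply, Pi.smul_apply, smul_eq_mul]; ring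
    | none =>
      change Der g n _ ww = _ * Der g n u ww + _ * Der g n v ww + _ * Der g n w ww
      simp only [der_w, dd_comb, map_add, map_mul, io_C]; ring
  rw [h]
  simp [smul_eq_C_mul]

/-- the ideal -/
def JJ : Ideal R4 := Ideal.span {io g, 1 - ww * io (dd n g)}

lemma g_mem : io g ∈ JJ g n := Ideal.subset_span (by simp)
lemma w_mem : 1 - ww * io (dd n g) ∈ JJ g n := Ideal.subset_span (by simp)

lemma der_JJ (v : E3) {s : R4} (hs : s ∈ JJ g n) : Der g n v s ∈ JJ g n := by
  unfold JJ at hs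
  induction hs using Submodule.span_induction with
  | mem x hx =>
    rcases hx with rfl | hx
    · rw [der_io]
      have : io (dd v g) - ww * io (dd v g) * io (dd n g) = io (dd v g) * (1 - ww * io (dd n g)) := by ring
      rw [this]; exact Ideal.mul_mem_left _ _ (w_mem g n)
    · rw [Set.mem_singleton_iff.mp hx]
      have : Der g n v (1 - ww * io (dd n g)) = - ww * (Der g n v (io (dd n g))) * (1 - ww * io (dd n g)) := by
        rw [map_sub, Derivation.leibniz, der_w, der_io]
        simp; ring
      rw [this]; exact Ideal.mul_mem_left _ _ (w_mem g n)
  | zero => simp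
  | add x y hx hy h1 h2 => rw [map_add]; exact Ideal.add_mem _ h1 h2
  | smul a x hx h =>
    rw [smul_eq_mul, Derivation.leibniz]
    exact Ideal.add_mem _ (Ideal.mul_mem_left _ _ h) (by rw [smul_eq_mul]; exact Ideal.mul_mem_right _ _ hx)

open PowerSeries in
def ev (p v : E3) : R4 →ₐ[ℝ] ℝ⟦X⟧ := aeval (fun o => o.elim
  (((resP p v (dd n g) : Polynomial ℝ) : ℝ⟦X⟧)⁻¹) (fun i => ((resP p v (X i) : Polynomial ℝ) : ℝ⟦X⟧)))

lemma ev_w (p v : E3) : ev g n p v ww = ((resP p v (dd n g) : Polynomial ℝ) : PowerSeries ℝ)⁻¹ := by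
  simp [ev, ww]

lemma ev_io (p v : E3) (f : Poly) : ev g n p v (io f) = ((resP p v f : Polynomial ℝ) : PowerSeries ℝ) := by
  have : (ev g n p v).comp io = (Polynomial.coeToPowerSeries.algHom ℝ).comp (resP p v) := by
    apply MvPolynomial.algHom_ext
    intro i
    simp [ev, io_X, Polynomial.coeToPowerSeries.algHom_apply]
  have h2 := DFunLike.congr_fun this f
  simpa [Polynomial.coeToPowerSeries.algHom_apply] using h2

variable {g n}

lemma ev_w_mul {p v : E3} (hn : eval p (dd n g) ≠ 0) :
    ev g n p v ww * ((resP p v (dd n g) : Polynomial ℝ) : PowerSeries ℝ) = 1 := by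
  rw [ev_w]
  apply PowerSeries.inv_mul_cancel
  rw [Polynomial.constantCoeff_coe, Polynomial.coeff_zero_eq_eval_zero, eval_resP]
  simpa using hn

lemma ev_JJ {p v : E3} (hg : resP p v g = 0) (hn : eval p (dd n g) ≠ 0) {s : R4} (hs : s ∈ JJ g n) :
    ev g n p v s = 0 := by
  have : JJ g n ≤ RingHom.ker (ev g n p v) := by
    unfold JJ
    rw [Ideal.span_le]
    rintro x (rfl | hx)
    · rw [SetLike.mem_coe, RingHom.mem_ker, ev_io, hg]; simp
    · rw [Set.mem_singleton_iff.mp hx, SetLike.mem_coe, RingHom.mem_ker, map_sub, map_mul, ev_io, ev_w_mul hn]; simp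
  exact this hs

lemma ev_der {p v : E3} (hg : resP p v g = 0) (s : R4) :
    derivative ℝ (ev g n p v s) = ev g n p v (Der g n v s) := by
  have hv : resP p v (dd v g) = 0 := by rw [← resP_deriv, hg]; simp
  induction s using MvPolynomial.induction_on with
  | C r => 
    rw [derivation_C, map_zero]
    have : ev g n p v (C r) = PowerSeries.C r := by simp [ev]
    rw [this, PowerSeries.derivative_C]
  | add f h hf hh => simp only [map_add, hf, hh]
  | mul_X f i hf =>
    have hX : derivative ℝ (ev g n p v (X i)) = ev g n p v (Der g n v (X i)) := by
      cases i with
      | some i =>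
        rw [← io_X, ev_io, PowerSeries.derivative_coe, resP_deriv, der_io]
        simp [ev_io, hv]
      | none =>
        change derivative ℝ (ev g n p v ww) = ev g n p v (Der g n v ww)
        rw [ev_w, PowerSeries.derivative_inv', PowerSeries.derivative_coe, resP_deriv, der_w]
        simp [ev_io, hv, ev_w]
    rw [map_mul, Derivation.leibniz, hf, hX, Derivation.leibniz]
    simp

lemma ev_dern {p v : E3} (hn : eval p (dd n g) ≠ 0) (s : R4) : ev g n p v (Der g n n s) = 0 := by
  have hw := ev_w_mul (v := v) hn
  induction s using MvPolynomial.induction_on with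
  | C r => rw [derivation_C, map_zero]
  | add f h hf hh => simp only [map_add, hf, hh, add_zero]
  | mul_X f i hf =>
    have hX : ev g n p v (Der g n n (X i)) = 0 := by
      cases i with
      | some i =>
        rw [← io_X, der_io, map_sub, map_mul, map_mul, ev_io, ev_io, hw]; ring
      | none =>
        change ev g n p v (Der g n n ww) = 0
        rw [der_w, map_mul, map_sub, map_mul, map_mul, ev_io, ev_io, hw]; ring
    rw [Derivation.leibniz, map_add, smul_eq_mul, smul_eq_mul, map_mul, map_mul, hf, hX]; ring

end
end GK

namespace GK
noncomputable section
open MvPolynomial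

def Hs (g : Poly) (m : ℕ) : Submodule ℝ R4 :=
  Submodule.span ℝ {s | ∃ j N, j ≤ m ∧ N.totalDegree ≤ j * g.totalDegree ∧ s = ww ^ j * io N}

variable {g : Poly} {n : E3}

lemma mem_Hs {m : ℕ} (j : ℕ) (N : Poly) (hj : j ≤ m) (hN : N.totalDegree ≤ j * g.totalDegree) : ww ^ j * io N ∈ Hs g m :=
  Submodule.subset_span ⟨j, N, hj, hN, rfl⟩

lemma Hs_mono {m k : ℕ} (h : m ≤ k) : Hs g m ≤ Hs g k := by
  apply Submodule.span_mono
  rintro s ⟨j, N, hj, hN, rfl⟩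
  exact ⟨j, N, hj.trans h, hN, rfl⟩

lemma Hs_mul {m k : ℕ} {s t : R4} (hs : s ∈ Hs g m) (ht : t ∈ Hs g k) : s * t ∈ Hs g (m + k) := by
  have : s * t ∈ Hs g m * Hs g k := Submodule.mul_mem_mul hs ht
  unfold Hs at this
  rw [Submodule.span_mul_span] at this
  refine Submodule.span_mono ?_ this
  rintro x ⟨y, ⟨j, N, hj, hN, rfl⟩, z, ⟨i, M, hi, hM, rfl⟩, rfl⟩
  refine ⟨j + i, N * M, by omega, ?_, ?_⟩
  · refine (totalDegree_mul _ _).trans ?_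
    rw [add_mul]; omega
  · simp only [map_mul]; ring

lemma Hs_C {m : ℕ} (r : ℝ) {s : R4} (hs : s ∈ Hs g m) : C r * s ∈ Hs g m := by
  rw [← smul_eq_C_mul]; exact Submodule.smul_mem _ _ hs

lemma Hs_der {m : ℕ} {s : R4} (v : E3) (hs : s ∈ Hs g m) : Der g n v s ∈ Hs g (m + 2) := by
  unfold Hs at hs
  induction hs using Submodule.span_induction with
  | zero => simp
  | add x y _ _ h1 h2 => rw [map_add]; exact Submodule.add_mem _ h1 h2
  | smul a x _ h => rw [Derivation.map_smul]; exact Submodule.smul_mem _ _ h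
  | mem x hx =>
    obtain ⟨j, N, hj, hN, rfl⟩ := hx
    have e : Der g n v (ww ^ j * io N) = C (-(j:ℝ)) * (ww ^ (j+1) * io (dd v (dd n g) * N))
        + C (j:ℝ) * (ww ^ (j+2) * io (dd v g * dd n (dd n g) * N))
        + ww ^ j * io (dd v N) + C (-1) * (ww ^ (j+1) * io (dd v g * dd n N)) := by
      rw [Derivation.leibniz, Derivation.leibniz_pow, der_w, der_io]
      simp only [smul_eq_mul, map_mul, nsmul_eq_mul, map_neg, map_one, map_natCast]
      cases j with
      | zero => simp; ring
      | succ j => simp only [Nat.add_sub_cancel]; push_cast; ring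
    have d1 := dd_deg v g
    have d2 := dd_deg n g
    have d3 := dd_deg v (dd n g)
    have d4 := dd_deg n (dd n g)
    have d5 := dd_deg v N
    have d6 := dd_deg n N
    rw [e]
    refine Submodule.add_mem _ (Submodule.add_mem _ (Submodule.add_mem _ (Hs_C _ (mem_Hs _ _ (by omega) ?_))
      (Hs_C _ (mem_Hs _ _ (by omega) ?_))) (mem_Hs _ _ (by omega) ?_)) (Hs_C _ (mem_Hs _ _ (by omega) ?_))
    · refine (totalDegree_mul _ _).trans ?_
      rw [add_mul]; omega
    · refine (totalDegree_mul _ _).trans ((Nat.add_le_add_right (totalDegree_mul _ _) _).trans ?_)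
      rw [add_mul]; omega
    · omega
    · refine (totalDegree_mul _ _).trans ?_
      rw [add_mul]; omega

lemma w_pow_mem (j : ℕ) : 1 - (ww * io (dd n g)) ^ j ∈ JJ g n :=
  Ideal.mem_of_dvd _ (one_sub_dvd_one_sub_pow _ _) (w_mem g n)

lemma Hs_num {m : ℕ} {s : R4} (hs : s ∈ Hs g m) :
    ∃ N : Poly, N.totalDegree ≤ m * g.totalDegree ∧ s * io (dd n g) ^ m - io N ∈ JJ g n := by
  unfold Hs at hs
  induction hs using Submodule.span_induction with
  | zero => exact ⟨0, by simp, by simp⟩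
  | add x y _ _ h1 h2 =>
    obtain ⟨N, hN, h1⟩ := h1
    obtain ⟨M, hM, h2⟩ := h2
    refine ⟨N + M, (totalDegree_add _ _).trans (max_le hN hM), ?_⟩
    convert Ideal.add_mem _ h1 h2 using 1
    rw [map_add]; ring
  | smul a x _ h =>
    obtain ⟨N, hN, h1⟩ := h
    refine ⟨a • N, (totalDegree_smul_le _ _).trans hN, ?_⟩
    convert Ideal.mul_mem_left _ (C a) h1 using 1
    rw [map_smul, smul_eq_C_mul, smul_eq_C_mul]; ring
  | mem x hx =>
    obtain ⟨j, N, hj, hN, rfl⟩ := hx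
    refine ⟨N * (dd n g) ^ (m - j), ?_, ?_⟩
    · refine (totalDegree_mul _ _).trans ?_
      have h1 := totalDegree_pow (dd n g) (m - j)
      have h2 : (m - j) * (dd n g).totalDegree ≤ (m - j) * g.totalDegree :=
        Nat.mul_le_mul_left _ ((dd_deg n g).trans (Nat.sub_le _ _))
      have h3 : m * g.totalDegree = j * g.totalDegree + (m - j) * g.totalDegree := by
        rw [← add_mul]; congr 1; omega
      omega
    · have : ww ^ j * io N * io (dd n g) ^ m - io (N * (dd n g) ^ (m - j)) =
          - (io N * io (dd n g) ^ (m - j)) * (1 - (ww * io (dd n g)) ^ j) := by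
        conv_lhs => rw [show m = j + (m - j) by omega]
        simp only [map_mul, map_pow, Nat.add_sub_cancel_left]; ring
      rw [this]
      exact Ideal.mul_mem_left _ _ (w_pow_mem j)

/-- value at a point -/
def val (g : Poly) (n x : E3) : R4 →ₐ[ℝ] ℝ := aeval (fun o => o.elim (eval x (dd n g))⁻¹ (fun i => x i))

lemma val_ev (p v : E3) (s : R4) : PowerSeries.constantCoeff (ev g n p v s) = val g n p s := by
  have h0 : ∀ f, PowerSeries.constantCoeff ((resP p v f : Polynomial ℝ) : PowerSeries ℝ) = eval p f := by
    intro f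
    rw [Polynomial.constantCoeff_coe, Polynomial.coeff_zero_eq_eval_zero, eval_resP]; simp
  induction s using MvPolynomial.induction_on with
  | C r => simp [ev, val]
  | add f h hf hh => simp only [map_add, hf, hh]
  | mul_X f i hf =>
    rw [map_mul, map_mul, map_mul, hf]
    congr 1
    cases i with
    | some i => rw [← io_X, ev_io, h0]; simp [val, io_X]
    | none =>
      change PowerSeries.constantCoeff (ev g n p v ww) = _
      rw [ev_w, PowerSeries.constantCoeff_inv, h0]; simp [val]

lemma val_io (x : E3) (f : Poly) : val g n x (io f) = eval x f := by
  rw [← val_ev x 0, ev_io, Polynomial.constantCoeff_coe, Polynomial.coeff_zero_eq_eval_zero, eval_resP]; simp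

lemma val_JJ {x : E3} (hg : eval x g = 0) (hn : eval x (dd n g) ≠ 0) {s : R4} (hs : s ∈ JJ g n) : val g n x s = 0 := by
  have : JJ g n ≤ RingHom.ker (val g n x) := by
    unfold JJ
    rw [Ideal.span_le]
    rintro y (rfl | hy)
    · rw [SetLike.mem_coe, RingHom.mem_ker, val_io, hg]
    · rw [Set.mem_singleton_iff.mp hy, SetLike.mem_coe, RingHom.mem_ker, map_sub, map_mul, val_io]
      have : val g n x ww = (eval x (dd n g))⁻¹ := by simp [val, ww]
      rw [this, inv_mul_cancel₀ hn]; simp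
  exact this hs

variable (g n)
def z1 (v : E3) : R4 := - (ww * io (dd v g))

lemma z1_symm (u v : E3) : Der g n u (z1 g v) = Der g n v (z1 g u) := by
  simp only [z1, map_neg, Derivation.leibniz, der_w, der_io, smul_eq_mul]
  rw [dd_comm u v g, dd_comm u n g, dd_comm v n g]; ring

def E1 (b e : E3) : R4 :=
  Der g n b (Der g n b (z1 g b)) * (C 4 * (Der g n b (z1 g e)) ^ 2 - Der g n b (z1 g b) * Der g n e (z1 g e))
  - C 6 * Der g n b (z1 g b) * Der g n b (z1 g e) * Der g n b (Der g n b (z1 g e))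
  + C 3 * (Der g n b (z1 g b)) ^ 2 * Der g n e (Der g n b (z1 g e))

lemma z1_Hs (v : E3) : z1 g v ∈ Hs g 1 := by
  have : z1 g v = C (-1) * (ww ^ 1 * io (dd v g)) := by simp [z1]
  rw [this]
  exact Hs_C _ (mem_Hs _ _ le_rfl (by have := dd_deg v g; omega))

lemma E1_Hs (b e : E3) : E1 g n b e ∈ Hs g 11 := by
  have h1 : ∀ u v, Der g n u (z1 g v) ∈ Hs g 3 := fun u v => Hs_der u (z1_Hs g v)
  have h2 : ∀ u v w, Der g n w (Der g n u (z1 g v)) ∈ Hs g 5 := fun u v w => Hs_der w (h1 u v)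
  unfold E1
  refine Submodule.add_mem _ (Submodule.sub_mem _ ?_ ?_) ?_
  · refine Hs_mul (m := 5) (k := 6) (h2 _ _ _) (Submodule.sub_mem _ (Hs_C _ ?_) (Hs_mul (m := 3) (k := 3) (h1 _ _) (h1 _ _)))
    rw [pow_two]; exact Hs_mul (m := 3) (k := 3) (h1 _ _) (h1 _ _)
  · exact Hs_mul (m := 6) (k := 5) (Hs_mul (m := 3) (k := 3) (Hs_C _ (h1 _ _)) (h1 _ _)) (h2 _ _ _)
  · refine Hs_mul (m := 6) (k := 5) (Hs_C _ ?_) (h2 _ _ _)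
    rw [pow_two]; exact Hs_mul (m := 3) (k := 3) (h1 _ _) (h1 _ _)

variable {g n}

/-- first, second and third order conditions along a line -/
lemma line_conds {x b e v : E3} {v1 v2 v3 : ℝ} (hv : v = v1 • b + v2 • e + v3 • n)
    (hg : resP x v g = 0) (hn : eval x (dd n g) ≠ 0) :
    v3 = v1 * val g n x (z1 g b) + v2 * val g n x (z1 g e) ∧
    v1^2 * val g n x (Der g n b (z1 g b)) + 2 * v1 * v2 * val g n x (Der g n b (z1 g e)) + v2^2 * val g n x (Der g n e (z1 g e)) = 0 ∧
    v1^3 * val g n x (Der g n b (Der g n b (z1 g b))) + 3 * v1^2 * v2 * val g n x (Der g n b (Der g n b (z1 g e)))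
      + 3 * v1 * v2^2 * val g n x (Der g n e (Der g n b (z1 g e))) + v2^3 * val g n x (Der g n e (Der g n e (z1 g e))) = 0 := by
  have hstep : ∀ s, PowerSeries.derivative ℝ (ev g n x v s) = ev g n x v (C v1 * Der g n b s + C v2 * Der g n e s) := by
    intro s
    rw [ev_der hg, hv, der_comb, ← hv, map_add, map_mul _ _ (Der g n n s), ev_dern hn]; simp
  have h0 : ev g n x v (C v1 * z1 g b + C v2 * z1 g e) = PowerSeries.C v3 := by
    have h1 : resP x v (dd v g) = 0 := by rw [← resP_deriv, hg]; simp
    have h2 : ev g n x v (z1 g v) = 0 := by simp [z1, ev_io, h1]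
    have h3 : z1 g v = C v1 * z1 g b + C v2 * z1 g e - C v3 * (ww * io (dd n g)) := by
      rw [hv]; simp only [z1, dd_comb, map_add, map_mul, io_C]; ring
    rw [h3, map_sub, map_mul _ (C v3), map_mul _ ww, ev_io, ev_w_mul hn] at h2
    rw [sub_eq_zero.mp h2, mul_one]
    simp [ev]
  have h1 := hstep (C v1 * z1 g b + C v2 * z1 g e)
  rw [h0, PowerSeries.derivative_C] at h1
  have h2 := hstep (C v1 * Der g n b (C v1 * z1 g b + C v2 * z1 g e) + C v2 * Der g n e (C v1 * z1 g b + C v2 * z1 g e))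
  rw [← h1, map_zero] at h2
  have c0 := congrArg PowerSeries.constantCoeff h0
  have c1 := congrArg PowerSeries.constantCoeff h1
  have c2 := congrArg PowerSeries.constantCoeff h2
  rw [val_ev] at c0 c1 c2
  have hC : ∀ r, val g n x (C r) = r := fun r => by simp [val]
  have s1 := z1_symm g n e b
  have s2 : Der g n e (Der g n b (z1 g b)) = Der g n b (Der g n b (z1 g e)) := by
    rw [der_comm, s1]
  have s3 : Der g n b (Der g n e (z1 g e)) = Der g n e (Der g n b (z1 g e)) := by
    rw [der_comm]
  simp only [map_add, Derivation.leibniz, derivation_C, smul_eq_mul, mul_zero, add_zero, map_mul, hC, map_zero,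
    PowerSeries.constantCoeff_C] at c0 c1 c2
  simp only [s1, s2, s3] at c1 c2
  have s4 : Der g n e (Der g n b (z1 g e)) = Der g n b (Der g n e (z1 g e)) := s3.symm
  refine ⟨c0.symm, ?_, ?_⟩
  · rw [c1]; ring
  · rw [c2]; ring

lemma E1_val {x b e v w : E3} {v1 v2 v3 w1 w2 w3 : ℝ} (hv : v = v1 • b + v2 • e + v3 • n)
    (hw : w = w1 • b + w2 • e + w3 • n) (hgv : resP x v g = 0) (hgw : resP x w g = 0) (hn : eval x (dd n g) ≠ 0)
    (hvw : v1 * w2 - v2 * w1 ≠ 0) : val g n x (E1 g n b e) = 0 := by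
  obtain ⟨-, q1, c1⟩ := line_conds hv hgv hn
  obtain ⟨-, q2, c2⟩ := line_conds hw hgw hn
  have hC : ∀ r, val g n x (C r) = r := fun r => by simp [val]
  simp only [E1, map_add, map_sub, map_mul, map_pow, hC]
  generalize val g n x (Der g n b (z1 g b)) = A at *
  generalize val g n x (Der g n b (z1 g e)) = B at *
  generalize val g n x (Der g n e (z1 g e)) = D at *
  generalize val g n x (Der g n b (Der g n b (z1 g b))) = c0 at *
  generalize val g n x (Der g n b (Der g n b (z1 g e))) = k1 at *
  generalize val g n x (Der g n e (Der g n b (z1 g e))) = k2 at *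
  generalize val g n x (Der g n e (Der g n e (z1 g e))) = k3 at *
  by_cases hv2 : v2 = 0
  · have hv1 : v1 ≠ 0 := by rintro rfl; apply hvw; rw [hv2]; ring
    rw [hv2] at q1 c1
    have hA : A = 0 := by
      have : v1^2 * A = 0 := by linarith
      simpa [hv1] using this
    have hc : c0 = 0 := by
      have : v1^3 * c0 = 0 := by linarith
      simpa [hv1] using this
    rw [hA, hc]; ring
  by_cases hw2 : w2 = 0
  · have hw1 : w1 ≠ 0 := by rintro rfl; apply hvw; rw [hw2]; ring
    rw [hw2] at q2 c2
    have hA : A = 0 := by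
      have : w1^2 * A = 0 := by linarith
      simpa [hw1] using this
    have hc : c0 = 0 := by
      have : w1^3 * c0 = 0 := by linarith
      simpa [hw1] using this
    rw [hA, hc]; ring
  obtain ⟨p, rfl⟩ : ∃ p, v1 = p * v2 := ⟨v1 / v2, by field_simp⟩
  obtain ⟨q, rfl⟩ : ∃ q, w1 = q * w2 := ⟨w1 / w2, by field_simp⟩
  have hpq : p - q ≠ 0 := by
    intro h; apply hvw
    have : p = q := by linarith
    rw [this]; ring
  have Q1 : A * p^2 + 2 * B * p + D = 0 := by
    have : v2^2 * (A * p^2 + 2 * B * p + D) = 0 := by linarith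
    simpa [hv2] using this
  have Q2 : A * q^2 + 2 * B * q + D = 0 := by
    have : w2^2 * (A * q^2 + 2 * B * q + D) = 0 := by linarith
    simpa [hw2] using this
  have K1 : c0 * p^3 + 3 * k1 * p^2 + 3 * k2 * p + k3 = 0 := by
    have : v2^3 * (c0 * p^3 + 3 * k1 * p^2 + 3 * k2 * p + k3) = 0 := by linarith
    simpa [hv2] using this
  have K2 : c0 * q^3 + 3 * k1 * q^2 + 3 * k2 * q + k3 = 0 := by
    have : w2^3 * (c0 * q^3 + 3 * k1 * q^2 + 3 * k2 * q + k3) = 0 := by linarith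
    simpa [hw2] using this
  have e1 : 2 * B = - A * (p + q) := by
    apply mul_left_cancel₀ hpq; linarith
  have e2 : D = A * p * q := by linear_combination Q1 - p * e1
  have e3 : c0 * (p^2+p*q+q^2) + 3 * k1 * (p + q) + 3 * k2 = 0 := by
    apply mul_left_cancel₀ hpq; linear_combination K1 - K2
  rw [e2]
  linear_combination A^2 * e3 + (c0 * (2 * B - A * (p + q)) - 3 * A * k1) * e1

lemma indep {x b e : E3} {l m : Ln} {v1 v2 v3 w1 w2 w3 : ℝ} (hv : dirL l = v1 • b + v2 • e + v3 • n)
    (hw : dirL m = w1 • b + w2 • e + w3 • n) (hxl : On x l) (hxm : On x m)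
    (hgv : resP x (dirL l) g = 0) (hgw : resP x (dirL m) g = 0) (hgn : eval x (dd n g) ≠ 0) (hml : m ≠ l) :
    v1 * w2 - v2 * w1 ≠ 0 := by
  intro h0
  apply hml
  obtain ⟨a1, -⟩ := line_conds hv hgv hgn
  obtain ⟨a2, -⟩ := line_conds hw hgw hgn
  have hz : ∀ i, v2 * dirL m i = w2 * dirL l i ∧ v1 * dirL m i = w1 * dirL l i := by
    intro i
    have e1 := congrFun hv i
    have e2 := congrFun hw i
    simp only [Pi.add_apply, Pi.smul_apply, smul_eq_mul] at e1 e2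
    rw [e1, e2, a1, a2]
    constructor
    · linear_combination (b i + val g n x (z1 g b) * n i) * (-h0)
    · linear_combination (e i + val g n x (z1 g e) * n i) * h0
  have hne : v2 ≠ 0 ∨ v1 ≠ 0 := by
    by_contra hcon
    push Not at hcon
    have e1 := congrFun hv 2
    rw [hcon.1, hcon.2] at a1
    rw [hcon.1, hcon.2, a1] at e1
    simp [dirL] at e1
  have hdir : dirL m = dirL l := by
    rcases hne with h | h
    · have h2 := (hz 2).1
      simp [dirL] at h2
      funext i
      have := (hz i).1
      rw [← h2] at this
      exact mul_left_cancel₀ h this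
    · have h2 := (hz 2).2
      simp [dirL] at h2
      funext i
      have := (hz i).2
      rw [← h2] at this
      exact mul_left_cancel₀ h this
  refine line_unique (x := x) (y := x + (1:ℝ) • dirL l) hxm ?_ hxl ?_ ?_
  · rw [← hdir, ← hxm.eq, pt_add]; exact on_pt _ _
  · rw [← hxl.eq, pt_add]; exact on_pt _ _
  · intro h; have := congrFun h 2; simp [dirL] at this

/-- any frame makes E1 vanish on Z(g) if many lines of Z(g) are crossed by other lines often -/
theorem flec (hg : Irreducible g) (V : Finset Ln) (hV : ∀ l ∈ V, Van g l)
    (hT : ∀ l ∈ V, ∃ T : Finset E3, 12 * g.totalDegree < T.card ∧ ∀ x ∈ T, On x l ∧ ∃ m, m ≠ l ∧ Van g m ∧ On x m)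
    (hc : 12 * g.totalDegree ^ 2 < V.card) (b e : E3) (hn : dd n g ≠ 0)
    (hfr : ∀ v, ∃ v1 v2 v3 : ℝ, v = v1 • b + v2 • e + v3 • n) : E1 g n b e ∈ JJ g n := by
  obtain ⟨N, hN, hNJ⟩ := Hs_num (n := n) (E1_Hs g n b e)
  have hd := dd_deg n g
  have hpos : g.totalDegree ≠ 0 := by
    intro h0
    rw [totalDegree_eq_zero_iff_eq_C.mp h0, dd_C] at hn
    exact hn rfl
  have hdeg : (N * dd n g).totalDegree ≤ 12 * g.totalDegree := (totalDegree_mul _ _).trans (by omega)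
  have hdvd : g ∣ N * dd n g := by
    by_contra hnd
    have := bezout g (N * dd n g) hg hnd V (by
      intro l hl
      refine ⟨hV l hl, ?_⟩
      obtain ⟨T, hT1, hT2⟩ := hT l hl
      refine van_of_many _ l T (fun x hx => (hT2 x hx).1) ?_ (hdeg.trans_lt hT1)
      intro x hx
      obtain ⟨hxl, m, hml, hm, hxm⟩ := hT2 x hx
      rw [map_mul]
      by_cases hgn : eval x (dd n g) = 0
      · rw [hgn, mul_zero]
      obtain ⟨v1, v2, v3, hv⟩ := hfr (dirL l)
      obtain ⟨w1, w2, w3, hw⟩ := hfr (dirL m)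
      have hgv := van_resP (hV l hl) hxl
      have hgw := van_resP hm hxm
      have hx0 : eval x g = 0 := by rw [← hxl.eq]; exact hV l hl _
      have hval : val g n x (E1 g n b e) = 0 := by
        refine E1_val hv hw hgv hgw hgn ?_
        exact indep hv hw hxl hxm hgv hgw hgn hml
      have h2 := val_JJ hx0 hgn hNJ
      rw [map_sub, map_mul, hval, val_io] at h2
      have : eval x N = 0 := by linarith
      rw [this, zero_mul])
    have h3 : g.totalDegree * (N * dd n g).totalDegree ≤ g.totalDegree * (12 * g.totalDegree) := Nat.mul_le_mul_left _ hdeg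
    nlinarith
  have hgN : g ∣ N := by
    rcases hg.prime.dvd_or_dvd hdvd with h | h
    · exact h
    · exfalso
      have := totalDegree_le_of_dvd_of_isDomain h hn
      omega
  have hNm : io N ∈ JJ g n := by
    obtain ⟨k, rfl⟩ := hgN
    rw [map_mul]; exact Ideal.mul_mem_right _ _ (g_mem g n)
  have h1 : E1 g n b e * io (dd n g) ^ 11 ∈ JJ g n := by
    have := Ideal.add_mem _ hNJ hNm
    simpa using this
  have h2 : E1 g n b e = E1 g n b e * (1 - (ww * io (dd n g)) ^ 11) + ww ^ 11 * (E1 g n b e * io (dd n g) ^ 11) := by ring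
  rw [h2]
  exact Ideal.add_mem _ (Ideal.mul_mem_left _ _ (w_pow_mem 11)) (Ideal.mul_mem_left _ _ h1)

end
end GK

namespace GK
noncomputable section
open MvPolynomial
open PowerSeries (derivative)

lemma ode1 {a : PowerSeries ℝ} (h : 4 * (derivative ℝ a)^2 * derivative ℝ (derivative ℝ (derivative ℝ a)) =
      6 * derivative ℝ a * (derivative ℝ (derivative ℝ a))^2)
    (h0 : PowerSeries.constantCoeff a = 0) (h1 : PowerSeries.constantCoeff (derivative ℝ a) = 1)
    (h2 : PowerSeries.constantCoeff (derivative ℝ (derivative ℝ a)) = 0) : a = PowerSeries.X := by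
  set y := derivative ℝ a with hy
  have hy0 : y ≠ 0 := by intro h; rw [h] at h1; simp at h1
  have hinv : y⁻¹ * y = 1 := PowerSeries.inv_mul_cancel _ (by rw [h1]; norm_num)
  have htwo : (2 : PowerSeries ℝ) ≠ 0 := fun h => by
    have := congrArg PowerSeries.constantCoeff h
    rw [map_ofNat, map_zero] at this; norm_num at this
  have h3 : 2 * y * derivative ℝ (derivative ℝ y) = 3 * (derivative ℝ y)^2 := by
    have h4 : (2 * y) * (2 * y * derivative ℝ (derivative ℝ y)) = (2 * y) * (3 * (derivative ℝ y)^2) := by linear_combination h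
    exact mul_left_cancel₀ (mul_ne_zero htwo hy0) h4
  have h5 : (derivative ℝ y)^2 * (y⁻¹)^3 = 0 := by
    apply PowerSeries.derivative.ext
    · rw [map_zero, Derivation.leibniz, PowerSeries.derivative_pow, PowerSeries.derivative_pow, PowerSeries.derivative_inv']
      simp only [smul_eq_mul]
      have : (derivative ℝ y) ^ 2 * ((3:ℕ) * y⁻¹ ^ (3 - 1) * (-y⁻¹ ^ 2 * derivative ℝ y)) +
        y⁻¹ ^ 3 * ((2:ℕ) * derivative ℝ y ^ (2 - 1) * derivative ℝ (derivative ℝ y)) =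
        y⁻¹^4 * derivative ℝ y * (2 * y * derivative ℝ (derivative ℝ y) - 3 * (derivative ℝ y)^2)
        + (1 - y⁻¹ * y) * (2 * y⁻¹^3 * derivative ℝ y * derivative ℝ (derivative ℝ y)) := by push_cast; ring
      rw [this, h3, hinv]; ring
    · simp [h2]
  have h6 : derivative ℝ y = 0 := by
    have : (derivative ℝ y)^2 = 0 := by
      have h7 : (derivative ℝ y)^2 * (y⁻¹)^3 * y^3 = (derivative ℝ y)^2 * (y⁻¹ * y)^3 := by ring
      rw [h5, hinv] at h7
      simpa using h7.symm
    simpa using this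
  have h8 : y = 1 := by
    apply PowerSeries.derivative.ext
    · rw [h6, PowerSeries.derivative_one]
    · rw [h1]; simp
  apply PowerSeries.derivative.ext
  · rw [← hy, h8, PowerSeries.derivative_X]
  · rw [h0]; simp

lemma ode2 {β : PowerSeries ℝ} (h : derivative ℝ (derivative ℝ (derivative ℝ β)) = 0) :
    ∃ α γ1 γ2 : ℝ, β = ((Polynomial.C (2*α) + Polynomial.C (2*γ1) * Polynomial.X + Polynomial.C (2*γ2) * Polynomial.X^2 : Polynomial ℝ) : PowerSeries ℝ) := by
  refine ⟨PowerSeries.coeff 0 β / 2, PowerSeries.coeff 1 β / 2, PowerSeries.coeff 2 β / 2, ?_⟩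
  ext k
  rw [Polynomial.coeff_coe]
  rcases k with _ | _ | _ | k
  · simp only [Polynomial.coeff_add, Polynomial.coeff_C_mul, Polynomial.coeff_X_pow, Polynomial.coeff_X, Polynomial.coeff_C]
    norm_num
    try ring
  · simp only [Polynomial.coeff_add, Polynomial.coeff_C_mul, Polynomial.coeff_X_pow, Polynomial.coeff_X, Polynomial.coeff_C]
    norm_num
    try ring
  · simp only [Polynomial.coeff_add, Polynomial.coeff_C_mul, Polynomial.coeff_X_pow, Polynomial.coeff_X, Polynomial.coeff_C]
    norm_num
    try ring
  · have := congrArg (PowerSeries.coeff k) h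
    rw [PowerSeries.coeff_derivative, PowerSeries.coeff_derivative, PowerSeries.coeff_derivative] at this
    have hk : PowerSeries.coeff (k+1+1+1) β = 0 := by
      have h1 : (k:ℝ) + 1 ≠ 0 := by positivity
      have h2 : ((k+1:ℕ):ℝ) + 1 ≠ 0 := by positivity
      have h3 : ((k+1+1:ℕ):ℝ) + 1 ≠ 0 := by positivity
      simp only [map_zero, mul_eq_zero, h1, h2, h3, or_false] at this
      exact this
    rw [hk]
    simp only [Polynomial.coeff_add, Polynomial.coeff_C_mul, Polynomial.coeff_X_pow, Polynomial.coeff_X, Polynomial.coeff_C]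
    simp

variable {g : Poly} {n : E3}

lemma val_transfer {x b : E3} (hg : resP x b g = 0) (hn : eval x (dd n g) ≠ 0) {m : ℕ} {s : R4} (hs : s ∈ Hs g m)
    {u : Polynomial ℝ} (hu : ev g n x b s = (u : PowerSeries ℝ)) {t : ℝ} (ht : eval (x + t • b) (dd n g) ≠ 0) :
    val g n (x + t • b) s = u.eval t := by
  obtain ⟨N, -, hN⟩ := Hs_num (n := n) hs
  have h1 := ev_JJ hg hn hN
  rw [map_sub, map_mul, map_pow, hu, ev_io, ev_io, sub_eq_zero] at h1
  have h2 : u * (resP x b (dd n g))^m = resP x b N := by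
    apply Polynomial.coe_injective ℝ
    push_cast
    exact h1
  have h3 := val_JJ (x := x + t • b) (by rw [← eval_resP, hg]; simp) ht hN
  rw [map_sub, map_mul, map_pow, val_io, val_io, sub_eq_zero, ← eval_resP x b N, ← h2, Polynomial.eval_mul,
    Polynomial.eval_pow, eval_resP] at h3
  exact mul_right_cancel₀ (pow_ne_zero _ ht) h3

theorem caseB {x b e : E3} (hg : resP x b g = 0) (hE : E1 g n b e ∈ JJ g n)
    (he : eval x (dd e g) = 0) (hn : eval x (dd n g) ≠ 0) (hn1 : eval x (dd n g) = - eval x (dd b (dd e g)))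
    (hn2 : 2 * eval x (dd b (dd n g)) = - eval x (dd b (dd b (dd e g)))) :
    ∃ α γ1 γ2 : ℝ, ∀ t, eval (x + t • b) (dd n g) ≠ 0 → ∀ v v1 v2 v3, v = v1 • b + v2 • e + v3 • n →
      resP (x + t • b) v g = 0 → v3 = t * v2 ∧ v2 * (v1 + (α + γ1 * t + γ2 * t^2) * v2) = 0 := by
  have hd : ∀ s, ev g n x b (Der g n b s) = derivative ℝ (ev g n x b s) := fun s => (ev_der hg s).symm
  have hzb : ev g n x b (z1 g b) = 0 := by
    have : resP x b (dd b g) = 0 := by rw [← resP_deriv, hg]; simp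
    simp [z1, ev_io, this]
  set a := ev g n x b (z1 g e) with ha
  set β := ev g n x b (Der g n e (z1 g e)) with hβ
  -- initial conditions
  have haG : a * (resP x b (dd n g) : Polynomial ℝ) = -((resP x b (dd e g) : Polynomial ℝ) : PowerSeries ℝ) := by
    have := ev_w_mul (v := b) hn
    rw [ha, z1, map_neg, map_mul, ev_io]
    linear_combination -((resP x b (dd e g) : Polynomial ℝ) : PowerSeries ℝ) * this
  have haG1 := congrArg (derivative ℝ) haG
  have haG2 := congrArg (derivative ℝ) haG1
  simp only [Derivation.leibniz, map_neg, map_add, PowerSeries.derivative_coe, resP_deriv, smul_eq_mul] at haG1 haG2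
  have cc : ∀ f, PowerSeries.constantCoeff ((resP x b f : Polynomial ℝ) : PowerSeries ℝ) = eval x f := by
    intro f
    rw [Polynomial.constantCoeff_coe, Polynomial.coeff_zero_eq_eval_zero, eval_resP]; simp
  have c0 := congrArg PowerSeries.constantCoeff haG
  have c1 := congrArg PowerSeries.constantCoeff haG1
  have c2 := congrArg PowerSeries.constantCoeff haG2
  simp only [map_mul, map_neg, map_add, cc] at c0 c1 c2
  have a0 : PowerSeries.constantCoeff a = 0 := by
    rw [he, neg_zero] at c0
    exact (mul_eq_zero.mp c0).resolve_right hn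
  have a1 : PowerSeries.constantCoeff (derivative ℝ a) = 1 := by
    rw [a0] at c1
    apply mul_left_cancel₀ hn
    linarith
  have a2 : PowerSeries.constantCoeff (derivative ℝ (derivative ℝ a)) = 0 := by
    rw [a0, a1] at c2
    apply mul_left_cancel₀ hn
    linarith
  -- relations
  have s1 : Der g n e (Der g n b (z1 g b)) = Der g n b (Der g n b (z1 g e)) := by
    rw [der_comm, z1_symm g n e b]
  have s2 : Der g n e (Der g n b (z1 g e)) = Der g n b (Der g n e (z1 g e)) := der_comm _ _ _ _ _
  have k1 : ev g n x b (Der g n e (E1 g n b e)) = 0 := ev_JJ hg hn (der_JJ g n e hE)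
  have k2 : ev g n x b (Der g n e (Der g n e (E1 g n b e))) = 0 := ev_JJ hg hn (der_JJ g n e (der_JJ g n e hE))
  have hC : ∀ r : ℝ, ev g n x b (C r) = PowerSeries.C r := fun r => by simp [ev]
  have e1 : Der g n e (E1 g n b e) =
      Der g n b (Der g n b (Der g n b (z1 g e))) * (C 4 * (Der g n b (z1 g e)) ^ 2 - Der g n b (z1 g b) * Der g n e (z1 g e))
      + Der g n b (Der g n b (z1 g b)) * (C 8 * Der g n b (z1 g e) * Der g n b (Der g n e (z1 g e)) - Der g n b (Der g n b (z1 g e)) * Der g n e (z1 g e)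
        - Der g n b (z1 g b) * Der g n e (Der g n e (z1 g e)))
      - C 6 * (Der g n b (Der g n b (z1 g e)) * Der g n b (z1 g e) * Der g n b (Der g n b (z1 g e))
        + Der g n b (z1 g b) * Der g n b (Der g n e (z1 g e)) * Der g n b (Der g n b (z1 g e))
        + Der g n b (z1 g b) * Der g n b (z1 g e) * Der g n b (Der g n b (Der g n e (z1 g e))))
      + C 6 * Der g n b (z1 g b) * Der g n b (Der g n b (z1 g e)) * Der g n b (Der g n e (z1 g e))
      + C 3 * (Der g n b (z1 g b)) ^ 2 * Der g n b (Der g n e (Der g n e (z1 g e))) := by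
    have s3 : Der g n e (Der g n b (Der g n b (z1 g b))) = Der g n b (Der g n b (Der g n b (z1 g e))) := by
      rw [der_comm, s1]
    have s4 : Der g n e (Der g n b (Der g n b (z1 g e))) = Der g n b (Der g n b (Der g n e (z1 g e))) := by
      rw [der_comm, s2]
    have s5 : Der g n e (Der g n b (Der g n e (z1 g e))) = Der g n b (Der g n e (Der g n e (z1 g e))) := der_comm _ _ _ _ _
    unfold E1
    simp only [map_add, map_sub, pow_two, Derivation.leibniz, derivation_C, smul_eq_mul, s1, s2, s3, s4, s5]
    simp only [show (C 4 : R4) = 4 from map_ofNat C 4, show (C 8 : R4) = 8 from map_ofNat C 8, show (C 6 : R4) = 6 from map_ofNat C 6, show (C 3 : R4) = 3 from map_ofNat C 3]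
    ring
  have hode : 4 * (derivative ℝ a)^2 * derivative ℝ (derivative ℝ (derivative ℝ a)) =
      6 * derivative ℝ a * (derivative ℝ (derivative ℝ a))^2 := by
    rw [e1] at k1
    simp only [map_add, map_sub, map_mul, map_pow, hd, hzb, hC, ← ha, ← hβ, map_zero] at k1
    simp only [show (PowerSeries.C (4:ℝ)) = 4 from map_ofNat PowerSeries.C 4, show (PowerSeries.C (6:ℝ)) = 6 from map_ofNat PowerSeries.C 6] at k1
    linear_combination k1
  have haX := ode1 hode a0 a1 a2
  have hβ3 : derivative ℝ (derivative ℝ (derivative ℝ β)) = 0 := by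
    have s3 : ∀ r, Der g n e (Der g n b r) = Der g n b (Der g n e r) := fun r => der_comm _ _ _ _ _
    have s0 : Der g n e (z1 g b) = Der g n b (z1 g e) := z1_symm _ _ _ _
    rw [e1] at k2
    simp only [map_add, map_sub, pow_two, Derivation.leibniz, derivation_C, smul_eq_mul, s3, s0] at k2
    simp only [map_add, map_sub, map_mul, map_pow, hd, hzb, hC, ← ha, ← hβ, map_zero, haX, PowerSeries.derivative_X,
      PowerSeries.derivative_one] at k2
    simp only [show (PowerSeries.C (4:ℝ)) = 4 from map_ofNat PowerSeries.C 4, mul_zero, zero_mul, add_zero, zero_add, sub_zero, mul_one] at k2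
    exact (mul_eq_zero.mp (by linear_combination k2 : (4:PowerSeries ℝ) * _ = 0)).resolve_left (fun h => by
      have := congrArg PowerSeries.constantCoeff h
      rw [map_ofNat, map_zero] at this; norm_num at this)
  obtain ⟨α, γ1, γ2, hβp⟩ := ode2 hβ3
  refine ⟨α, γ1, γ2, ?_⟩
  intro t ht v v1 v2 v3 hv hgv
  obtain ⟨q1, q2, -⟩ := line_conds hv hgv ht
  have hH : ∀ u v, Der g n u (z1 g v) ∈ Hs g 3 := fun u v => Hs_der u (z1_Hs g v)
  have w1 := val_transfer hg hn (z1_Hs g b) (u := 0) (by rw [hzb]; simp) ht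
  have w2 := val_transfer hg hn (z1_Hs g e) (u := Polynomial.X) (by rw [← ha, haX]; simp) ht
  have w3 := val_transfer hg hn (hH b b) (u := 0) (by rw [hd, hzb]; simp) ht
  have w4 := val_transfer hg hn (hH b e) (u := 1) (by rw [hd, ← ha, haX]; simp) ht
  have w5 := val_transfer hg hn (hH e e) (hβ ▸ hβp) ht
  simp at w1 w2 w3 w4 w5
  rw [w1, w2] at q1
  rw [w3, w4, w5] at q2
  constructor
  · linarith
  · linarith

end
end GK

namespace GK
noncomputable section
open MvPolynomial

def det3 (u v w : E3) : ℝ := u 0 * (v 1 * w 2 - v 2 * w 1) - u 1 * (v 0 * w 2 - v 2 * w 0) + u 2 * (v 0 * w 1 - v 1 * w 0)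
def dot (u v : E3) : ℝ := u 0 * v 0 + u 1 * v 1 + u 2 * v 2

lemma copl_of_det {x y : E3} {l m : Ln} (hx : On x l) (hy : On y m) (h : det3 (x - y) (dirL l) (dirL m) = 0) : Copl l m := by
  unfold det3 at h
  simp only [Pi.sub_apply, hx.z0, hx.z1, hy.z0, hy.z1, dirL] at h
  simp at h
  unfold Copl
  linear_combination h

lemma det3_comb (b e n : E3) (u1 u2 u3 v1 v2 v3 w1 w2 w3 : ℝ) :
    det3 (u1 • b + u2 • e + u3 • n) (v1 • b + v2 • e + v3 • n) (w1 • b + w2 • e + w3 • n) =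
      (u1 * (v2 * w3 - v3 * w2) - u2 * (v1 * w3 - v3 * w1) + u3 * (v1 * w2 - v2 * w1)) * det3 b e n := by
  simp only [det3, Pi.add_apply, Pi.smul_apply, smul_eq_mul]; ring

lemma frame_dual {b e n : E3} (h : det3 b e n ≠ 0) : ∃ k1 k2 k3 : E3, (∀ v, v = dot k1 v • b + dot k2 v • e + dot k3 v • n) ∧
    (∀ v1 v2 v3 : ℝ, dot k1 (v1 • b + v2 • e + v3 • n) = v1 ∧ dot k2 (v1 • b + v2 • e + v3 • n) = v2 ∧
      dot k3 (v1 • b + v2 • e + v3 • n) = v3) := by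
  refine ⟨fun i => (det3 b e n)⁻¹ * det3 (Pi.single i 1) e n, fun i => (det3 b e n)⁻¹ * det3 b (Pi.single i 1) n,
    fun i => (det3 b e n)⁻¹ * det3 b e (Pi.single i 1), ?_, ?_⟩
  · intro v
    have h' := mul_inv_cancel₀ h
    set D := (det3 b e n)⁻¹ with hD
    have key : ∀ i, v i = v i * (det3 b e n * D) := by intro i; rw [h', mul_one]
    funext i
    rw [key i]
    fin_cases i <;> simp [dot, det3] <;> ring
  · intro v1 v2 v3
    have h' := mul_inv_cancel₀ h
    set D := (det3 b e n)⁻¹ with hD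
    refine ⟨?_, ?_, ?_⟩
    · have key : v1 = v1 * (det3 b e n * D) := by rw [h', mul_one]
      conv_rhs => rw [key]
      simp [dot, det3]; ring
    · have key : v2 = v2 * (det3 b e n * D) := by rw [h', mul_one]
      conv_rhs => rw [key]
      simp [dot, det3]; ring
    · have key : v3 = v3 * (det3 b e n * D) := by rw [h', mul_one]
      conv_rhs => rw [key]
      simp [dot, det3]; ring

/-- affine function -/
def aff (k x : E3) : Poly := ∑ i, C (k i) * (X i - C (x i))

lemma eval_aff (k x y : E3) : eval y (aff k x) = dot k (y - x) := by
  simp [aff, Fin.sum_univ_three, dot]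

lemma aff_deg (k x : E3) : (aff k x).totalDegree ≤ 1 := by
  refine (totalDegree_finsetSum _ _).trans (Finset.sup_le fun i _ => ?_)
  refine (totalDegree_mul _ _).trans ?_
  rw [totalDegree_C, zero_add]
  refine (totalDegree_sub _ _).trans ?_
  rw [totalDegree_X, totalDegree_C]; simp

def QQ (k1 k2 k3 x : E3) (α γ1 γ2 : ℝ) : Poly :=
  aff k1 x * aff k2 x - aff k3 x + C α * (aff k2 x * aff k2 x) + C γ1 * (aff k2 x * aff k3 x) + C γ2 * (aff k3 x * aff k3 x)

lemma QQ_deg (k1 k2 k3 x : E3) (α γ1 γ2 : ℝ) : (QQ k1 k2 k3 x α γ1 γ2).totalDegree ≤ 2 := by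
  have h : ∀ k k', (aff k x * aff k' x).totalDegree ≤ 2 := fun k k' =>
    (totalDegree_mul _ _).trans (add_le_add (aff_deg k x) (aff_deg k' x))
  have h2 : ∀ r k k', (C r * (aff k x * aff k' x)).totalDegree ≤ 2 := fun r k k' =>
    (totalDegree_mul _ _).trans (by rw [totalDegree_C, zero_add]; exact h k k')
  unfold QQ
  refine (totalDegree_add _ _).trans (max_le ((totalDegree_add _ _).trans (max_le ((totalDegree_add _ _).trans (max_le
    ((totalDegree_sub _ _).trans (max_le (h _ _) ?_)) (h2 _ _ _))) (h2 _ _ _))) (h2 _ _ _))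
  exact (aff_deg k3 x).trans (by norm_num)

lemma On_add {x : E3} {l : Ln} (h : On x l) (t : ℝ) : On (x + t • dirL l) l := by
  rw [← h.eq, pt_add]; exact on_pt _ _

lemma On_exists {x y : E3} {l : Ln} (h : On x l) (h' : On y l) : ∃ t : ℝ, y = x + t • dirL l :=
  ⟨y 2 - x 2, by rw [← h.eq, pt_add, ← h'.eq]; simp [pt]⟩

lemma van_iff_On {f : Poly} {l : Ln} {x : E3} (hx : On x l) : Van f l ↔ ∀ t : ℝ, eval (x + t • dirL l) f = 0 := by
  constructor
  · intro h t; rw [← (On_add hx t).eq]; exact h _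
  · intro h t
    obtain ⟨s, hs⟩ := On_exists hx (on_pt l t)
    rw [hs]; exact h s

section geom
variable {b e n k1 k2 k3 x : E3} (α γ1 γ2 : ℝ)
  (hk : ∀ v1 v2 v3 : ℝ, dot k1 (v1 • b + v2 • e + v3 • n) = v1 ∧ dot k2 (v1 • b + v2 • e + v3 • n) = v2 ∧
      dot k3 (v1 • b + v2 • e + v3 • n) = v3)
include hk

lemma eval_QQ (y1 y2 y3 : ℝ) : eval (x + (y1 • b + y2 • e + y3 • n)) (QQ k1 k2 k3 x α γ1 γ2) =
    y1 * y2 - y3 + α * (y2 * y2) + γ1 * (y2 * y3) + γ2 * (y3 * y3) := by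
  simp only [QQ, map_add, map_sub, map_mul, eval_aff, eval_C, add_sub_cancel_left, (hk _ _ _).1, (hk _ _ _).2.1, (hk _ _ _).2.2]

lemma QQ_van {m : Ln} {t r : ℝ} (hm : On (x + t • b) m)
    (hd : dirL m = (-(α + γ1 * t + γ2 * t^2) * r) • b + r • e + (t * r) • n) : Van (QQ k1 k2 k3 x α γ1 γ2) m := by
  rw [van_iff_On hm]
  intro s
  have : x + t • b + s • dirL m = x + ((t + s * (-(α + γ1 * t + γ2 * t^2) * r)) • b + (s * r) • e + (s * (t * r)) • n) := by
    rw [hd]; module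
  rw [this, eval_QQ α γ1 γ2 hk]; ring

lemma grid_copl {m0 m1 m' : Ln} {t0 r0 t1 r1 : ℝ} {y : E3} (hm0 : On (x + t0 • b) m0)
    (hk' : ∀ v, v = dot k1 v • b + dot k2 v • e + dot k3 v • n)
    (hd0 : dirL m0 = (-(α + γ1 * t0 + γ2 * t0^2) * r0) • b + r0 • e + (t0 * r0) • n)
    (hm1 : On (x + t1 • b) m1)
    (hd1 : dirL m1 = (-(α + γ1 * t1 + γ2 * t1^2) * r1) • b + r1 • e + (t1 * r1) • n)
    (hr0 : r0 ≠ 0)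
    (hy0 : On y m0) (hyx : y ≠ x + t0 • b) (hy' : On y m') (hm' : m' ≠ m0) (hQ : Van (QQ k1 k2 k3 x α γ1 γ2) m') :
    Copl m' m1 := by
  obtain ⟨s, hs⟩ := On_exists hm0 hy0
  have hs0 : s * r0 ≠ 0 := by
    apply mul_ne_zero _ hr0
    rintro rfl; apply hyx; rw [hs]; simp
  generalize hB : -(α + γ1 * t0 + γ2 * t0^2) = B at *
  generalize hσ : s * r0 = σ at *
  have hyc : y = x + ((t0 + σ * B) • b + σ • e + (t0 * σ) • n) := by
    rw [hs, hd0, ← hσ]; module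
  have hd' := hk' (dirL m')
  generalize dot k1 (dirL m') = d1 at hd'
  generalize dot k2 (dirL m') = d2 at hd'
  generalize dot k3 (dirL m') = d3 at hd'
  have hq : ∀ τ : ℝ, (t0 + σ * B + τ * d1) * (σ + τ * d2) - (t0 * σ + τ * d3) + α * ((σ + τ * d2) * (σ + τ * d2))
      + γ1 * ((σ + τ * d2) * (t0 * σ + τ * d3)) + γ2 * ((t0 * σ + τ * d3) * (t0 * σ + τ * d3)) = 0 := by
    intro τ
    rw [← (van_iff_On hy').mp hQ τ, ← eval_QQ α γ1 γ2 hk (b := b) (e := e) (n := n)]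
    congr 2
    rw [hyc, hd']; module
  have q1 := hq 1
  have q2 := hq (-1)
  have q0 := hq 0
  have L : σ * (d1 - B * d2) - (d3 - t0 * d2) + γ1 * σ * (d3 - t0 * d2) + 2 * γ2 * t0 * σ * (d3 - t0 * d2) = 0 := by
    rw [← hB] at *
    linear_combination (q1 - q2) / 2
  have Qd : d2 * ((d1 - B * d2) + γ1 * (d3 - t0 * d2) + 2 * γ2 * t0 * (d3 - t0 * d2)) + γ2 * (d3 - t0 * d2)^2 = 0 := by
    rw [← hB] at *
    linear_combination (q1 + q2) / 2 - q0
  have hne : d3 - t0 * d2 ≠ 0 := by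
    intro h0
    rw [h0] at L
    have h1 : d1 - B * d2 = 0 := by
      have : σ * (d1 - B * d2) = 0 := by linarith
      exact (mul_eq_zero.mp this).resolve_left hs0
    apply hm'
    have hdd : r0 • dirL m' = d2 • dirL m0 := by
      rw [hd', hd0, show d1 = B * d2 by linarith, show d3 = t0 * d2 by linarith]; module
    have h2 := congrFun hdd 2
    simp [dirL] at h2
    rw [← h2] at hdd
    have hdir : dirL m' = dirL m0 := smul_right_injective _ hr0 hdd
    refine line_unique (x := y) (y := y + (1:ℝ) • dirL m') hy' (On_add hy' 1) hy0 ?_ ?_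
    · rw [hdir]; exact On_add hy0 1
    · intro h; have := congrFun h 2; simp [dirL] at this
  have hd2 : d2 + γ2 * σ * (d3 - t0 * d2) = 0 := by
    apply mul_left_cancel₀ hne
    linear_combination σ * Qd - d2 * L
  apply copl_of_det hy' hm1
  have e1 : y - (x + t1 • b) = (t0 + σ * B - t1) • b + σ • e + (t0 * σ) • n := by rw [hyc]; module
  rw [e1, hd', hd1, det3_comb]
  apply mul_eq_zero_of_left
  rw [← hB] at *
  linear_combination r1 * (-(t1 - t0)^2) * hd2 - r1 * (t1 - t0) * L

end geom
end
end GK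

namespace GK
noncomputable section
open MvPolynomial

lemma exists_dd (g : Poly) (hg : Irreducible g) : ∃ n, dd n g ≠ 0 ∧ ¬ g ∣ dd n g := by
  have hex : ∃ n, dd n g ≠ 0 := by
    by_contra hcon
    push Not at hcon
    have hc : ∀ y : E3, eval y g = eval 0 g := by
      intro y
      have h1 : Polynomial.derivative (resP 0 y g) = 0 := by rw [resP_deriv, hcon]; simp
      have h2 := Polynomial.derivative_eq_zero.mp h1
      rw [Polynomial.natDegree_eq_zero] at h2
      obtain ⟨c, hc⟩ := h2
      have e1 := eval_resP 0 y g 1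
      have e0 := eval_resP 0 y g 0
      rw [← hc] at e1 e0
      rw [one_smul, zero_add] at e1
      rw [zero_smul, zero_add] at e0
      simp only [Polynomial.eval_C] at e1 e0
      rw [← e1, ← e0]
    have : g = C (eval 0 g) := MvPolynomial.funext fun y => by rw [hc y, eval_C]
    rcases eq_or_ne (eval 0 g) 0 with h | h
    · rw [h, C_0] at this; exact hg.ne_zero this
    · apply hg.not_isUnit; rw [this]; exact (isUnit_iff_ne_zero.mpr h).map C
  obtain ⟨n, hn⟩ := hex
  refine ⟨n, hn, fun hd => ?_⟩
  have h1 := totalDegree_le_of_dvd_of_isDomain hd hn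
  have h2 := dd_deg n g
  have h0 : g.totalDegree = 0 := by omega
  rw [totalDegree_eq_zero_iff_eq_C.mp h0, dd_C] at hn
  exact hn rfl

def NZ (f : Poly) (x : E3) : Prop := eval x f ≠ 0

open Classical in
lemma good_count (f : Poly) (l : Ln) (hf : ¬ Van f l) (T : Finset E3) (hT : ∀ x ∈ T, On x l) :
    T.card ≤ (T.filter (NZ f)).card + f.totalDegree := by
  have h1 := Finset.card_sdiff_add_card_eq_card (Finset.filter_subset (NZ f) T)
  by_contra hc
  apply hf
  refine van_of_many f l (T \ T.filter (NZ f)) (fun x hx => hT x (Finset.mem_sdiff.mp hx).1)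
    (fun x hx => ?_) (by omega)
  by_contra h
  exact (Finset.mem_sdiff.mp hx).2 (Finset.mem_filter.mpr ⟨(Finset.mem_sdiff.mp hx).1, h⟩)

open Classical in
lemma cross_count (l : Ln) (T : Finset E3) (hT : ∀ x ∈ T, On x l) (V : Finset Ln) (r : ℕ)
    (h : ∀ x ∈ T, r + 1 ≤ (V.filter (On x ·)).card) :
    T.card * r ≤ (V.filter (fun m => m ≠ l ∧ ∃ x ∈ T, On x m)).card := by
  have hsub : T.biUnion (fun x => (V.filter (On x ·)).erase l) ⊆ V.filter (fun m => m ≠ l ∧ ∃ x ∈ T, On x m) := by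
    intro m hm
    obtain ⟨x, hx, hm⟩ := Finset.mem_biUnion.mp hm
    obtain ⟨h1, h2⟩ := Finset.mem_erase.mp hm
    obtain ⟨h2, h3⟩ := Finset.mem_filter.mp h2
    exact Finset.mem_filter.mpr ⟨h2, h1, x, hx, h3⟩
  refine le_trans ?_ (Finset.card_le_card hsub)
  rw [Finset.card_biUnion]
  · rw [← smul_eq_mul]
    refine Finset.card_nsmul_le_sum _ _ _ fun x hx => ?_
    have := Finset.pred_card_le_card_erase (s := V.filter (On x ·)) (a := l)
    have := h x hx
    omega
  · intro x hx y hy hxy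
    rw [Function.onFun, Finset.disjoint_left]
    intro m hm hm'
    simp only [Finset.mem_erase, Finset.mem_filter] at hm hm'
    exact hm.1 (line_unique hm.2.2 hm'.2.2 (hT x hx) (hT y hy) hxy)

lemma poly_prop (A G : Polynomial ℝ) (h0 : A.eval 0 = 0) (hG : G.eval 0 ≠ 0)
    (hW : A * Polynomial.derivative G = Polynomial.derivative A * G) : A = 0 := by
  by_contra hA
  have hr : A.IsRoot 0 := h0
  have hpos : 0 < A.rootMultiplicity 0 := (Polynomial.rootMultiplicity_pos hA).mpr hr
  have hd : Polynomial.derivative A ≠ 0 := by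
    intro hd
    have h2 := Polynomial.derivative_eq_zero.mp hd
    rw [Polynomial.natDegree_eq_zero] at h2
    obtain ⟨c, rfl⟩ := h2
    simp at h0; subst h0; simp at hA
  have hG0 : G ≠ 0 := by rintro rfl; simp at hG
  have hne : A * Polynomial.derivative G ≠ 0 := by rw [hW]; exact mul_ne_zero hd hG0
  have e := congrArg (Polynomial.rootMultiplicity 0) hW
  rw [Polynomial.rootMultiplicity_mul hne, Polynomial.rootMultiplicity_mul (hW ▸ hne),
    Polynomial.derivative_rootMultiplicity_of_root hr, Polynomial.rootMultiplicity_eq_zero hG] at e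
  omega

/-- eval of combos -/
lemma dd_sub_smul (c : ℝ) (e n : E3) (f : Poly) : dd (e - c • n) f = dd e f - C c * dd n f := by
  have := dd_comb 1 (-c) 0 e n 0 f
  rw [show (1:ℝ) • e + (-c) • n + (0:ℝ) • (0:E3) = e - c • n by module] at this
  rw [this]; simp; ring
lemma dd_two (r s : ℝ) (u v : E3) (f : Poly) : dd (r • u + s • v) f = C r * dd u f + C s * dd v f := by
  have := dd_comb r s 0 u v 0 f
  rw [show r • u + s • v + (0:ℝ) • (0:E3) = r • u + s • v by module] at this
  rw [this]; simp
lemma dd_Cmul (v : E3) (c : ℝ) (f : Poly) : dd v (C c * f) = C c * dd v f := by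
  rw [Derivation.leibniz, dd_C]; simp

variable {g : Poly}

lemma dd_dir {l : Ln} (hV : Van g l) {x : E3} (hx : On x l) : eval x (dd (dirL l) g) = 0 := by
  have h := resP_deriv x (dirL l) g
  rw [van_resP hV hx] at h
  have := eval_resP x (dirL l) (dd (dirL l) g) 0
  rw [← h] at this
  simpa using this.symm

lemma val_z1 {n x : E3} (e : E3) : val g n x (z1 g e) = -((eval x (dd n g))⁻¹ * eval x (dd e g)) := by
  have : val g n x ww = (eval x (dd n g))⁻¹ := by simp [val, ww]
  rw [z1, map_neg, map_mul, val_io, this]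

lemma val_dz1 {n x b e : E3} (hb : eval x (dd b g) = 0) (hn : eval x (dd n g) ≠ 0) (h0 : val g n x (Der g n b (z1 g e)) = 0) :
    eval x (dd e g * dd b (dd n g) - dd b (dd e g) * dd n g) = 0 := by
  have hw : val g n x ww = (eval x (dd n g))⁻¹ := by simp [val, ww]
  simp only [z1, map_neg, Derivation.leibniz, der_w, der_io, smul_eq_mul, map_add, map_mul, map_sub, map_pow, val_io, hw, hb] at h0
  field_simp at h0
  simp only [map_sub, map_mul]
  apply mul_left_cancel₀ hn
  linear_combination h0

open Classical in
lemma caseA {l : Ln} {x0 e n : E3} (V : Finset Ln) (hV : ∀ m ∈ V, Van g m) (hl : Van g l) (hx0 : On x0 l)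
    (hdet : det3 (dirL l) e n ≠ 0) (hn : ¬ Van (dd n g) l) (he : Van (dd e g) l) (T : Finset E3) (hT : ∀ x ∈ T, On x l)
    (r : ℕ) (h : ∀ x ∈ T, r + 1 ≤ (V.filter (On x ·)).card) :
    ∃ W ⊆ V, (∀ m ∈ W, ∀ m' ∈ W, Copl m m') ∧ (T.card - g.totalDegree) * r ≤ W.card := by
  obtain ⟨k1, k2, k3, hk, -⟩ := frame_dual hdet
  refine ⟨V.filter (fun m => m ≠ l ∧ ∃ x ∈ T.filter (NZ (dd n g)), On x m), Finset.filter_subset _ _, ?_, ?_⟩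
  · have key : ∀ m ∈ V.filter (fun m => m ≠ l ∧ ∃ x ∈ T.filter (NZ (dd n g)), On x m),
        ∃ t v1 v2 : ℝ, On (x0 + t • dirL l) m ∧ dirL m = v1 • dirL l + v2 • e + (0:ℝ) • n := by
      intro m hm
      obtain ⟨hm, hml, x, hx, hxm⟩ := Finset.mem_filter.mp hm
      obtain ⟨hx, hxn⟩ := Finset.mem_filter.mp hx
      obtain ⟨t, rfl⟩ := On_exists hx0 (hT x hx)
      refine ⟨t, dot k1 (dirL m), dot k2 (dirL m), hxm, ?_⟩
      have h3 := (line_conds (hk (dirL m)) (van_resP (hV m hm) hxm) hxn).1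
      rw [val_z1, val_z1, dd_dir hl (hT _ hx), show eval (x0 + t • dirL l) (dd e g) = 0 from (van_iff_On hx0).mp he t] at h3
      simp only [mul_zero, neg_zero, add_zero] at h3
      conv_lhs => rw [hk (dirL m)]
      rw [h3]
    intro m hm m' hm'
    obtain ⟨t, v1, v2, h1, h2⟩ := key m hm
    obtain ⟨t', v1', v2', h1', h2'⟩ := key m' hm'
    apply copl_of_det h1 h1'
    rw [h2, h2', show x0 + t • dirL l - (x0 + t' • dirL l) = (t - t') • dirL l + (0:ℝ) • e + (0:ℝ) • n by module, det3_comb]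
    ring
  · refine le_trans (Nat.mul_le_mul_right _ ?_) (cross_count l _ (fun x hx => hT x (Finset.mem_filter.mp hx).1) V r
      (fun x hx => h x (Finset.mem_filter.mp hx).1))
    have := good_count _ l hn T hT
    have := dd_deg n g
    omega

open Classical in
lemma caseW {l : Ln} {e n : E3} (V : Finset Ln) (hV : ∀ m ∈ V, Van g m) (hl : Van g l)
    (hdet : det3 (dirL l) e n ≠ 0) (hn : ¬ Van (dd n g) l) (T : Finset E3) (hT : ∀ x ∈ T, On x l)
    (h : ∀ x ∈ T, 3 ≤ (V.filter (On x ·)).card) (hc : 3 * g.totalDegree < T.card) :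
    Van (dd e g * dd (dirL l) (dd n g) - dd (dirL l) (dd e g) * dd n g) l := by
  obtain ⟨k1, k2, k3, hk, -⟩ := frame_dual hdet
  have hd1 := good_count _ l hn T hT
  have hd2 := dd_deg n g
  refine van_of_many _ l (T.filter (NZ (dd n g))) (fun x hx => hT x (Finset.mem_filter.mp hx).1) ?_ ?_
  · intro x hx
    obtain ⟨hx, hxn⟩ := Finset.mem_filter.mp hx
    apply val_dz1 (dd_dir hl (hT _ hx)) hxn
    have h3 := h x hx
    obtain ⟨m, hm, m', hm', hmm⟩ := Finset.one_lt_card.mp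
      (show 1 < ((V.filter (On x ·)).erase l).card by
        have := Finset.pred_card_le_card_erase (s := V.filter (On x ·)) (a := l); omega)
    simp only [Finset.mem_erase, Finset.mem_filter] at hm hm'
    have hb : dirL l = (1:ℝ) • dirL l + (0:ℝ) • e + (0:ℝ) • n := by module
    have rl := van_resP hl (hT x hx)
    have rm := van_resP (hV m hm.2.1) hm.2.2
    have rm' := van_resP (hV m' hm'.2.1) hm'.2.2
    have q0 := (line_conds hb rl hxn).2.1
    have q1 := (line_conds (hk (dirL m)) rm hxn).2.1
    have q2 := (line_conds (hk (dirL m')) rm' hxn).2.1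
    have i1 := indep hb (hk (dirL m)) (hT x hx) hm.2.2 rl rm hxn hm.1
    have i2 := indep hb (hk (dirL m')) (hT x hx) hm'.2.2 rl rm' hxn hm'.1
    have i3 := indep (hk (dirL m)) (hk (dirL m')) hm.2.2 hm'.2.2 rm rm' hxn (Ne.symm hmm)
    generalize dot k1 (dirL m) = v1 at *
    generalize dot k2 (dirL m) = v2 at *
    generalize dot k1 (dirL m') = w1 at *
    generalize dot k2 (dirL m') = w2 at *
    generalize val g n x (Der g n (dirL l) (z1 g (dirL l))) = z at *
    generalize val g n x (Der g n (dirL l) (z1 g e)) = β at *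
    generalize val g n x (Der g n e (z1 g e)) = γ at *
    have hz : z = 0 := by linarith
    have i1 : v2 ≠ 0 := by simpa using i1
    have i2 : w2 ≠ 0 := by simpa using i2
    subst hz
    apply mul_left_cancel₀ (mul_ne_zero (mul_ne_zero i1 i2) i3)
    linear_combination (1/2) * (w2^2 * q1 - v2^2 * q2)
  · have a1 : (dd e g * dd (dirL l) (dd n g)).totalDegree ≤ 2 * g.totalDegree := by
      refine (totalDegree_mul _ _).trans ?_
      have := dd_deg e g; have := dd_deg (dirL l) (dd n g); omega
    have a2 : (dd (dirL l) (dd e g) * dd n g).totalDegree ≤ 2 * g.totalDegree := by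
      refine (totalDegree_mul _ _).trans ?_
      have := dd_deg e g; have := dd_deg (dirL l) (dd e g); omega
    have := totalDegree_sub (dd e g * dd (dirL l) (dd n g)) (dd (dirL l) (dd e g) * dd n g)
    have := max_le a1 a2
    omega

lemma exists_e {l : Ln} (hl : Van g l) {n : E3} (hn : ¬ Van (dd n g) l) : ∃ e, det3 (dirL l) e n ≠ 0 := by
  by_contra hcon
  push Not at hcon
  apply hn
  intro t
  have h0 := hcon ![1, 0, 0]
  have h1 := hcon ![0, 1, 0]
  simp [det3, dirL] at h0 h1
  have hN : n = n 2 • dirL l := by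
    funext i; fin_cases i <;> simp [dirL] <;> linarith
  have := dd_two (n 2) 0 (dirL l) 0 g
  rw [show n 2 • dirL l + (0:ℝ) • (0:E3) = n by rw [← hN]; simp] at this
  rw [this]
  simp [dd_dir hl (on_pt l t)]

/-- if the Wronskian vanishes on `l`, some `e` has `g_e = 0` along `l` -/
lemma wron {l : Ln} {e n : E3} (hdet : det3 (dirL l) e n ≠ 0) (hn : ¬ Van (dd n g) l)
    (hW : Van (dd e g * dd (dirL l) (dd n g) - dd (dirL l) (dd e g) * dd n g) l) :
    ∃ e', det3 (dirL l) e' n ≠ 0 ∧ Van (dd e' g) l := by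
  unfold Van at hn
  push Not at hn
  obtain ⟨t, ht⟩ := hn
  refine ⟨e - (eval (pt l t) (dd e g) / eval (pt l t) (dd n g)) • n, ?_, ?_⟩
  · have := det3_comb (dirL l) e n 1 0 0 0 1 (-(eval (pt l t) (dd e g) / eval (pt l t) (dd n g))) 0 0 1
    rw [show (1:ℝ) • dirL l + (0:ℝ) • e + (0:ℝ) • n = dirL l by module, show (0:ℝ) • dirL l + (0:ℝ) • e + (1:ℝ) • n = n by module] at this
    rw [show e - (eval (pt l t) (dd e g) / eval (pt l t) (dd n g)) • n = (0:ℝ) • dirL l + (1:ℝ) • e +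
      (-(eval (pt l t) (dd e g) / eval (pt l t) (dd n g))) • n by module, this]
    simpa using hdet
  · generalize hc : eval (pt l t) (dd e g) / eval (pt l t) (dd n g) = c
    have hrW := van_resP hW (on_pt l t)
    have : resP (pt l t) (dirL l) (dd (e - c • n) g) = 0 := by
      apply poly_prop _ (resP (pt l t) (dirL l) (dd n g))
      · rw [eval_resP, dd_sub_smul, ← hc]; simp; field_simp; ring
      · rw [eval_resP]; simpa using ht
      · rw [map_sub, map_mul, map_mul] at hrW
        have hC : resP (pt l t) (dirL l) (C c) = Polynomial.C c := by
          simp only [resP, aeval_C]; rfl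
        rw [resP_deriv, resP_deriv, dd_sub_smul, map_sub (dd (dirL l)), dd_Cmul]
        simp only [map_sub (resP (pt l t) (dirL l)), map_mul (resP (pt l t) (dirL l)), hC]
        linear_combination hrW
    rw [van_iff_On (on_pt l t)]
    intro s
    rw [← eval_resP, this]; simp

end
end GK

namespace GK
noncomputable section
open MvPolynomial
variable {g : Poly}

/-- good frame in the non-developable case -/
lemma frameB {l : Ln} {e n : E3} (hl : Van g l) (hdet : det3 (dirL l) e n ≠ 0) (hn : ¬ Van (dd n g) l)
    (hW : ¬ Van (dd e g * dd (dirL l) (dd n g) - dd (dirL l) (dd e g) * dd n g) l) :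
    ∃ x e1 n1, On x l ∧ det3 (dirL l) e1 n1 ≠ 0 ∧ eval x (dd e1 g) = 0 ∧ eval x (dd n1 g) ≠ 0 ∧
      eval x (dd n1 g) = -eval x (dd (dirL l) (dd e1 g)) ∧
      2 * eval x (dd (dirL l) (dd n1 g)) = -eval x (dd (dirL l) (dd (dirL l) (dd e1 g))) := by
  have h1 : ¬ Van ((dd e g * dd (dirL l) (dd n g) - dd (dirL l) (dd e g) * dd n g) * dd n g) l := by
    rw [van_mul]; tauto
  unfold Van at h1
  push Not at h1
  obtain ⟨t, ht⟩ := h1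
  have hx : On (pt l t) l := on_pt l t
  generalize pt l t = x at *
  rw [map_mul] at ht
  obtain ⟨hw, hG⟩ := mul_ne_zero_iff.mp ht
  rw [map_sub, map_mul, map_mul] at hw
  obtain ⟨c, hc⟩ : ∃ c, eval x (dd e g) = c * eval x (dd n g) := ⟨_ / _, (div_mul_cancel₀ _ hG).symm⟩
  have e1 : eval x (dd (e - c • n) g) = 0 := by rw [dd_sub_smul]; simp [hc]
  have e2 : eval x (dd (dirL l) (dd (e - c • n) g)) ≠ 0 := by
    rw [dd_sub_smul, map_sub (dd (dirL l)), dd_Cmul]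
    simp only [map_sub, map_mul, eval_C]
    intro h0
    apply hw
    rw [hc]
    linear_combination (-(eval x) ((dd n) g)) * h0
  generalize hA : eval x (dd (dirL l) (dd (e - c • n) g)) = A at *
  obtain ⟨lam, hlam⟩ : ∃ lam, lam * eval x (dd n g) = -A := ⟨_ / _, div_mul_cancel₀ _ hG⟩
  obtain ⟨mu, hmu⟩ : ∃ mu, mu * A = -eval x (dd (dirL l) (dd (dirL l) (dd (e - c • n) g))) / 2 - lam * eval x (dd (dirL l) (dd n g)) :=
    ⟨_ / _, div_mul_cancel₀ _ e2⟩
  have hlam0 : lam ≠ 0 := by rintro rfl; apply e2; linarith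
  have e3 : eval x (dd (lam • n + mu • (e - c • n)) g) = -A := by
    rw [dd_two]; simp only [map_add, map_mul, eval_C, e1, hlam]; ring
  refine ⟨x, e - c • n, lam • n + mu • (e - c • n), hx, ?_, e1, by rw [e3]; exact neg_ne_zero.mpr e2, by rw [e3, hA], ?_⟩
  · have := det3_comb (dirL l) e n 1 0 0 0 1 (-c) 0 mu (lam - mu * c)
    rw [show (1:ℝ) • dirL l + (0:ℝ) • e + (0:ℝ) • n = dirL l by module,
      show (0:ℝ) • dirL l + (1:ℝ) • e + (-c) • n = e - c • n by module,
      show (0:ℝ) • dirL l + mu • e + (lam - mu * c) • n = lam • n + mu • (e - c • n) by module] at this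
    rw [this]
    refine mul_ne_zero ?_ hdet
    ring_nf; simpa using hlam0
  · rw [dd_two, map_add (dd (dirL l)), dd_Cmul, dd_Cmul]
    simp only [map_add, map_mul, eval_C, hA]
    linear_combination 2 * hmu

open Classical in
theorem coreB (hg : Irreducible g) (V : Finset Ln) (hV : ∀ l ∈ V, Van g l) (hc : 12 * g.totalDegree ^ 2 < V.card)
    (κ M : ℕ) (hκ : 2 ≤ κ) (hM : 20 * g.totalDegree ≤ M)
    (hT : ∀ l ∈ V, ∃ T : Finset E3, M ≤ T.card ∧ ∀ x ∈ T, On x l ∧ κ ≤ (V.filter (On x ·)).card) :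
    (∃ W ⊆ V, (∀ m ∈ W, ∀ m' ∈ W, Copl m m') ∧ (M - g.totalDegree) * (κ - 1) ≤ W.card) ∨
    (κ = 2 ∧ ∃ I1 ⊆ V, ∃ I2 ⊆ V, (∀ m ∈ I1, ∀ m' ∈ I2, Copl m m') ∧ M - g.totalDegree ≤ I1.card ∧ M - g.totalDegree ≤ I2.card) := by
  obtain ⟨n, hn0, hgn⟩ := exists_dd g hg
  have hpos : 0 < g.totalDegree := by
    rw [pos_iff_ne_zero]; intro h0
    rw [totalDegree_eq_zero_iff_eq_C.mp h0, dd_C] at hn0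
    exact hn0 rfl
  obtain ⟨l, hlV, hn⟩ : ∃ l ∈ V, ¬ Van (dd n g) l := by
    by_contra hcon
    push Not at hcon
    have h1 := bezout g _ hg hgn V (fun l hl => ⟨hV l hl, hcon l hl⟩)
    have := dd_deg n g
    have : g.totalDegree * (dd n g).totalDegree ≤ g.totalDegree * g.totalDegree := Nat.mul_le_mul_left _ (by omega)
    nlinarith
  have hl := hV l hlV
  obtain ⟨e, hdet⟩ := exists_e hl hn
  obtain ⟨T, hTM, hT'⟩ := hT l hlV
  by_cases hW : Van (dd e g * dd (dirL l) (dd n g) - dd (dirL l) (dd e g) * dd n g) l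
  · left
    obtain ⟨e', hdet', he'⟩ := wron hdet hn hW
    obtain ⟨W, h1, h2, h3⟩ := caseA V hV hl (on_pt l 0) hdet' hn he' T (fun x hx => (hT' x hx).1) (κ - 1)
      (fun x hx => by have := (hT' x hx).2; omega)
    exact ⟨W, h1, h2, le_trans (Nat.mul_le_mul_right _ (by omega)) h3⟩
  right
  have hκ2 : κ = 2 := by
    by_contra hne
    exact hW (caseW V hV hl hdet hn T (fun x hx => (hT' x hx).1) (fun x hx => by have := (hT' x hx).2; omega) (by omega))
  subst hκ2
  refine ⟨rfl, ?_⟩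
  obtain ⟨x, e1, n1, hx, hdet1, he1, hn1, hn2, hn3⟩ := frameB hl hdet hn hW
  obtain ⟨k1, k2, k3, hk, hk'⟩ := frame_dual hdet1
  have hn10 : dd n1 g ≠ 0 := by intro h; rw [h] at hn1; simp at hn1
  have hnV : ¬ Van (dd n1 g) l := by intro h; apply hn1; rw [← hx.eq]; exact h _
  have hex : ∀ l' x', 2 ≤ (V.filter (On x' ·)).card → ∃ m ∈ V, m ≠ l' ∧ On x' m := by
    intro l' x' h
    obtain ⟨m, hm, hml⟩ := Finset.exists_mem_ne (by omega : 1 < (V.filter (On x' ·)).card) l'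
    exact ⟨m, (Finset.mem_filter.mp hm).1, hml, (Finset.mem_filter.mp hm).2⟩
  have hE := flec (n := n1) hg V hV (fun l' hl' => by
    obtain ⟨T, h1, h2⟩ := hT l' hl'
    refine ⟨T, by omega, fun x' hx' => ⟨(h2 x' hx').1, ?_⟩⟩
    obtain ⟨m, hm, h3, h4⟩ := hex l' x' (h2 x' hx').2
    exact ⟨m, h3, hV m hm, h4⟩) hc (dirL l) e1 hn10 (fun v => ⟨_, _, _, hk v⟩)
  obtain ⟨α, γ1, γ2, hB⟩ := caseB (van_resP hl hx) hE he1 hn1 hn2 hn3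
  have hdir : ∀ m ∈ V.filter (fun m => m ≠ l ∧ ∃ x ∈ T.filter (NZ (dd n1 g)), On x m),
      ∃ t r : ℝ, r ≠ 0 ∧ On (x + t • dirL l) m ∧ dirL m = (-(α + γ1 * t + γ2 * t^2) * r) • dirL l + r • e1 + (t * r) • n1 := by
    intro m hm
    obtain ⟨hm, hml, y, hy, hym⟩ := Finset.mem_filter.mp hm
    obtain ⟨hy, hyn⟩ := Finset.mem_filter.mp hy
    obtain ⟨t, rfl⟩ := On_exists hx (hT' y hy).1
    have hb : dirL l = (1:ℝ) • dirL l + (0:ℝ) • e1 + (0:ℝ) • n1 := by module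
    have rm := van_resP (hV m hm) hym
    have hi := indep hb (hk (dirL m)) (On_add hx t) hym (van_resP hl (On_add hx t)) rm hyn hml
    have hr : dot k2 (dirL m) ≠ 0 := by simpa using hi
    obtain ⟨h3, h4⟩ := hB t hyn _ _ _ _ (hk (dirL m)) rm
    refine ⟨t, dot k2 (dirL m), hr, hym, ?_⟩
    have h5 := (mul_eq_zero.mp h4).resolve_left hr
    conv_lhs => rw [hk (dirL m)]
    rw [h3, show dot k1 (dirL m) = -(α + γ1 * t + γ2 * t^2) * dot k2 (dirL m) by linarith]
  have hI1 := cross_count l (T.filter (NZ (dd n1 g))) (fun x hx => (hT' x (Finset.mem_filter.mp hx).1).1) V 1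
    (fun x hx => (hT' x (Finset.mem_filter.mp hx).1).2)
  have hgc := good_count _ l hnV T (fun x hx => (hT' x hx).1)
  have hdd := dd_deg n1 g
  have hI1V := Finset.filter_subset (fun m => m ≠ l ∧ ∃ x ∈ T.filter (NZ (dd n1 g)), On x m) V
  generalize V.filter (fun m => m ≠ l ∧ ∃ x ∈ T.filter (NZ (dd n1 g)), On x m) = I1 at *
  have hdvd : g ∣ QQ k1 k2 k3 x α γ1 γ2 := by
    by_contra hnd
    have := bezout g _ hg hnd I1 (fun m hm => by
      obtain ⟨t, r, -, h1, h2⟩ := hdir m hm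
      exact ⟨hV m (hI1V hm), QQ_van α γ1 γ2 hk' h1 h2⟩)
    have h2 := Nat.mul_le_mul_left g.totalDegree (QQ_deg k1 k2 k3 x α γ1 γ2)
    omega
  obtain ⟨m0, hm0⟩ : I1.Nonempty := by rw [← Finset.card_pos]; omega
  obtain ⟨t0, r0, hr0, h01, h02⟩ := hdir m0 hm0
  obtain ⟨T0, hT0, hT0'⟩ := hT m0 (hI1V hm0)
  refine ⟨I1, hI1V, V.filter (fun m => m ≠ m0 ∧ ∃ y ∈ T0.erase (x + t0 • dirL l), On y m), Finset.filter_subset _ _, ?_, by omega, ?_⟩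
  · intro m1 hm1 m' hm'
    obtain ⟨hm', hmm, y, hy, hym⟩ := Finset.mem_filter.mp hm'
    obtain ⟨hyne, hy⟩ := Finset.mem_erase.mp hy
    obtain ⟨t1, r1, hr1, h11, h12⟩ := hdir m1 hm1
    refine (grid_copl α γ1 γ2 hk' h01 hk h02 h11 h12 hr0 (hT0' y hy).1 hyne hym hmm ?_).symm
    obtain ⟨q, hq⟩ := hdvd
    rw [hq, van_mul]; exact Or.inl (hV m' hm')
  · have := cross_count m0 (T0.erase (x + t0 • dirL l)) (fun y hy => (hT0' y (Finset.mem_of_mem_erase hy)).1) V 1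
      (fun y hy => (hT0' y (Finset.mem_of_mem_erase hy)).2)
    have := Finset.pred_card_le_card_erase (s := T0) (a := x + t0 • dirL l)
    omega

end
end GK

namespace GK
noncomputable section
open MvPolynomial

lemma not_van_of_unit {f : Poly} (hf : IsUnit f) (l : Ln) : ¬ Van f l := fun h => by
  have := hf.map (eval (pt l 0))
  rw [h 0] at this
  exact not_isUnit_zero this

open Classical in
lemma pigeon (c : ℕ) (f : Poly) : f ≠ 0 → ∀ V : Finset Ln, (∀ l ∈ V, Van f l) → c * f.totalDegree < V.card →
    ∃ g, Irreducible g ∧ g ∣ f ∧ c * g.totalDegree < (V.filter (Van g ·)).card := by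
  induction f using UniqueFactorizationMonoid.induction_on_prime with
  | h₁ => exact fun h => absurd rfl h
  | h₂ f hf =>
    intro _ V hV hc
    obtain ⟨l, hl⟩ : V.Nonempty := by rw [← Finset.card_pos]; omega
    exact absurd (hV l hl) (not_van_of_unit hf l)
  | h₃ a p ha hp ih =>
    intro _ V hV hc
    rw [totalDegree_mul_of_isDomain hp.ne_zero ha, mul_add] at hc
    by_cases h : c * p.totalDegree < (V.filter (Van p ·)).card
    · exact ⟨p, hp.irreducible, dvd_mul_right _ _, h⟩
    have hsub : V ⊆ V.filter (Van p ·) ∪ V.filter (Van a ·) := by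
      intro l hl
      have := van_mul.mp (hV l hl)
      simp only [Finset.mem_union, Finset.mem_filter]; tauto
    have h2 := (Finset.card_le_card hsub).trans (Finset.card_union_le _ _)
    obtain ⟨g, h3, h4, h5⟩ := ih ha (V.filter (Van a ·)) (fun l hl => (Finset.mem_filter.mp hl).2) (by omega)
    refine ⟨g, h3, h4.mul_left _, h5.trans_le (Finset.card_le_card ?_)⟩
    exact Finset.filter_subset_filter _ (Finset.filter_subset _ _)

lemma van_pow {f : Poly} {l : Ln} {k : ℕ} (h : Van (f ^ k) l) : Van f l := fun t => by
  have := h t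
  rw [map_pow] at this
  exact eq_zero_of_pow_eq_zero this

open Classical in
theorem thmB (f : Poly) (hf : f ≠ 0) (d : ℕ) (hd : f.totalDegree ≤ d) (V : Finset Ln) (hV : ∀ l ∈ V, Van f l)
    (hVc : 100 * d ^ 2 < V.card) (S : Finset E3) (M κ : ℕ) (hM : 100 * d ≤ M) (hκ : 2 ≤ κ)
    (hl : ∀ l ∈ V, M ≤ (S.filter (On · l)).card) (hx : ∀ x ∈ S, κ ≤ (V.filter (On x ·)).card) :
    (∃ W ⊆ V, (∀ m ∈ W, ∀ m' ∈ W, Copl m m') ∧ M * (κ - 1) ≤ 2 * W.card) ∨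
    (κ = 2 ∧ ∃ I1 ⊆ V, ∃ I2 ⊆ V, (∀ m ∈ I1, ∀ m' ∈ I2, Copl m m') ∧ M ≤ 2 * I1.card ∧ M ≤ 2 * I2.card) := by
  obtain ⟨g, hg, hgf, hgc⟩ := pigeon (100 * d) f hf V hV (by nlinarith)
  have hgd : g.totalDegree ≤ d := (totalDegree_le_of_dvd_of_isDomain hgf hf).trans hd
  obtain ⟨h, hfe, hgh⟩ := (FiniteMultiplicity.of_not_isUnit hg.not_isUnit hf).exists_eq_pow_mul_and_not_dvd
  have hhd : h.totalDegree ≤ d := (totalDegree_le_of_dvd_of_isDomain ⟨_, hfe.trans (mul_comm _ _)⟩ hf).trans hd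
  have hb := bezout g h hg hgh ((V.filter (Van g ·)).filter (Van h ·)) (fun l hl => by
    obtain ⟨h1, h2⟩ := Finset.mem_filter.mp hl
    exact ⟨(Finset.mem_filter.mp h1).2, h2⟩)
  have hb' : g.totalDegree * h.totalDegree ≤ g.totalDegree * d := Nat.mul_le_mul_left _ hhd
  have hsum := Finset.card_filter_add_card_filter_not (s := V.filter (Van g ·)) (Van h ·)
  have hmem : ∀ l, l ∈ (V.filter (Van g ·)).filter (fun l => ¬ Van h l) ↔ l ∈ V ∧ Van g l ∧ ¬ Van h l := by
    intro l; simp only [Finset.mem_filter]; tauto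
  have hV'V : (V.filter (Van g ·)).filter (fun l => ¬ Van h l) ⊆ V := fun l hl => ((hmem l).mp hl).1
  generalize (V.filter (Van g ·)).filter (fun l => ¬ Van h l) = V' at *
  have hdd : g.totalDegree ^ 2 ≤ g.totalDegree * d := by rw [pow_two]; exact Nat.mul_le_mul_left _ hgd
  have hcc : 100 * d * g.totalDegree = 100 * (g.totalDegree * d) := by ring
  have hcard : 12 * g.totalDegree ^ 2 < V'.card := by omega
  have hcore := coreB hg V' (fun l hl => ((hmem l).mp hl).2.1) hcard κ (M - d) hκ (by omega) (by
    intro l hlV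
    obtain ⟨h1, h2, h3⟩ := (hmem l).mp hlV
    refine ⟨(S.filter (On · l)).filter (NZ h), ?_, ?_⟩
    · have := good_count h l h3 (S.filter (On · l)) (fun x hx => (Finset.mem_filter.mp hx).2)
      have := hl l h1
      omega
    · intro x hxT
      obtain ⟨h4, h5⟩ := Finset.mem_filter.mp hxT
      obtain ⟨h4, h6⟩ := Finset.mem_filter.mp h4
      refine ⟨h6, (hx x h4).trans (Finset.card_le_card ?_)⟩
      intro m hm
      obtain ⟨hm, hxm⟩ := Finset.mem_filter.mp hm
      have hnh : ¬ Van h m := fun h' => h5 (by rw [← hxm.eq]; exact h' _)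
      refine Finset.mem_filter.mpr ⟨(hmem m).mpr ⟨hm, ?_, hnh⟩, hxm⟩
      have := hV m hm
      rw [hfe] at this
      exact van_pow ((van_mul.mp this).resolve_right hnh))
  rcases hcore with ⟨W, h1, h2, h3⟩ | ⟨h0, I1, h1, I2, h2, h3, h4, h5⟩
  · refine Or.inl ⟨W, h1.trans hV'V, h2, ?_⟩
    have : M ≤ 2 * (M - d - g.totalDegree) := by omega
    calc M * (κ - 1) ≤ 2 * (M - d - g.totalDegree) * (κ - 1) := Nat.mul_le_mul_right _ this
      _ = 2 * ((M - d - g.totalDegree) * (κ - 1)) := by ring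
      _ ≤ _ := Nat.mul_le_mul_left _ h3
  · exact Or.inr ⟨h0, I1, h1.trans hV'V, I2, h2.trans hV'V, h3, by omega, by omega⟩

end
end GK

namespace GK
noncomputable section
open MvPolynomial

open Classical in
lemma dbl (V : Finset Ln) (S : Finset E3) : ∑ x ∈ S, (V.filter (On x ·)).card = ∑ l ∈ V, (S.filter (On · l)).card := by
  simp only [Finset.card_filter]; exact Finset.sum_comm

open Classical in
lemma refine_cfg (V : Finset Ln) (S : Finset E3) (k M : ℕ) (hx : ∀ x ∈ S, k ≤ (V.filter (On x ·)).card)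
    (h : (k + 1) * S.card + 2 * M * V.card < 2 * (k * S.card)) :
    ∃ V' ⊆ V, ∃ S' ⊆ S, V'.Nonempty ∧ (∀ l ∈ V', M ≤ (S'.filter (On · l)).card) ∧
      ∀ x ∈ S', k + 1 ≤ 2 * (V'.filter (On x ·)).card := by
  let Φ : Finset Ln × Finset E3 → ℤ := fun p =>
    2 * ((∑ x ∈ p.2, (p.1.filter (On x ·)).card : ℕ) : ℤ) - (k + 1) * p.2.card - 2 * M * p.1.card
  obtain ⟨⟨V', S'⟩, hmem, hmax⟩ := Finset.exists_max_image (V.powerset ×ˢ S.powerset) Φ ⟨(V, S), by simp⟩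
  simp only [Finset.mem_product, Finset.mem_powerset] at hmem hmax
  have hpos : 0 < Φ (V', S') := by
    refine lt_of_lt_of_le ?_ (hmax (V, S) ⟨subset_rfl, subset_rfl⟩)
    have : k * S.card ≤ ∑ x ∈ S, (V.filter (On x ·)).card := by
      rw [mul_comm, ← smul_eq_mul]; exact Finset.card_nsmul_le_sum _ _ _ hx
    simp only [Φ]
    push_cast
    zify at this h
    linarith
  refine ⟨V', hmem.1, S', hmem.2, ?_, ?_, ?_⟩
  · rw [Finset.nonempty_iff_ne_empty]; rintro rfl
    simp [Φ] at hpos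
    have : (0:ℤ) ≤ (k + 1) * S'.card := by positivity
    linarith
  · intro l hl
    have h1 := hmax (V'.erase l, S') ⟨(Finset.erase_subset _ _).trans hmem.1, hmem.2⟩
    simp only [Φ, dbl] at h1
    rw [← Finset.add_sum_erase V' _ hl] at h1
    have h2 := Finset.card_erase_add_one hl
    push_cast at h1
    zify at h2 ⊢
    rw [← h2] at h1
    linarith
  · intro x hx
    have h1 := hmax (V', S'.erase x) ⟨hmem.1, (Finset.erase_subset _ _).trans hmem.2⟩
    simp only [Φ] at h1
    rw [← Finset.add_sum_erase S' _ hx] at h1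
    have h2 := Finset.card_erase_add_one hx
    push_cast at h1
    zify at h2 ⊢
    rw [← h2] at h1
    linarith

open Classical in
lemma exists_f (V : Finset Ln) (S : Finset E3) (M κ : ℕ) (hne : V.Nonempty) (hκ : 2 ≤ κ) (hM : 2700 < M)
    (hl : ∀ l ∈ V, M ≤ (S.filter (On · l)).card) (hx : ∀ x ∈ S, κ ≤ (V.filter (On x ·)).card)
    (hS : 2 * 5400 ^ 3 * S.card ≤ κ * M ^ 3) :
    ∃ f : Poly, f ≠ 0 ∧ ∃ d, f.totalDegree ≤ d ∧ (∀ l ∈ V, Van f l) ∧ 100 * d ^ 2 < V.card ∧ 100 * d ≤ M := by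
  by_cases hL : 900 * V.card < M ^ 2
  · have hdm := Nat.div_add_mod (3 * V.card) M
    have hlt := Nat.mod_lt (3 * V.card) (show 0 < M by omega)
    have hcp := hne.card_pos
    generalize 3 * V.card / M = d at *
    obtain ⟨f, h1, h2, h3⟩ := deg_red V M d (fun l hlV => by
      refine ⟨S.filter (On · l), hl l hlV, fun x hxS => ?_⟩
      obtain ⟨hxS, hxl⟩ := Finset.mem_filter.mp hxS
      obtain ⟨m, hm, hml⟩ := Finset.exists_mem_ne (lt_of_lt_of_le (by omega) (hx x hxS)) l
      exact ⟨hxl, m, (Finset.mem_filter.mp hm).1, hml, (Finset.mem_filter.mp hm).2⟩) (by nlinarith)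
    have hMd : M * d ≤ 3 * V.card := by omega
    refine ⟨f, h1, d, h2, h3, ?_, ?_⟩
    · by_contra hc
      push Not at hc
      have h5 : (M * d) * (M * d) ≤ (3 * V.card) * (3 * V.card) := Nat.mul_le_mul hMd hMd
      have h6 : V.card * M ^ 2 ≤ 100 * d ^ 2 * M ^ 2 := Nat.mul_le_mul_right _ hc
      have h7 : V.card * (900 * V.card) < V.card * M ^ 2 := Nat.mul_lt_mul_of_pos_left hL hcp
      nlinarith
    · by_contra hc
      push Not at hc
      nlinarith
  · push Not at hL
    obtain ⟨m, hm1, hm2⟩ : ∃ m, 2700 * 2 ^ m < M ∧ M ≤ 5400 * 2 ^ m := by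
      have hex : ∃ m, M ≤ 5400 * 2 ^ m := ⟨M, by have := Nat.lt_two_pow_self (n := M); omega⟩
      refine ⟨Nat.find hex, ?_, Nat.find_spec hex⟩
      rcases Nat.eq_zero_or_pos (Nat.find hex) with h0 | h0
      · rw [h0]; simpa using hM
      · have := Nat.find_min hex (m := Nat.find hex - 1) (by omega)
        obtain ⟨j, hj⟩ : ∃ j, Nat.find hex = j + 1 := ⟨_, (Nat.succ_pred_eq_of_pos h0).symm⟩
        rw [hj] at this ⊢
        simp only [Nat.add_sub_cancel] at this
        rw [pow_succ]; omega
    obtain ⟨f, hf, hfd, hI⟩ := partition_bound S V m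
    generalize hD : 9 * 2 ^ m = D at *
    have hDM : 300 * D < M := by omega
    refine ⟨f, hf, D, hfd, ?_, by nlinarith, by omega⟩
    by_contra hcon
    push Not at hcon
    obtain ⟨l0, hl0, hl0'⟩ := hcon
    have hoff : (V.filter (¬ Van f ·)).card * (M - D) ≤ ∑ x ∈ S.filter (fun x => eval x f ≠ 0), (V.filter (On x ·)).card := by
      rw [dbl, ← smul_eq_mul]
      refine (Finset.card_nsmul_le_sum _ _ _ ?_).trans (Finset.sum_le_sum_of_subset (Finset.filter_subset _ _))
      intro l hlV
      obtain ⟨h1, h2⟩ := Finset.mem_filter.mp hlV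
      have h3 := good_count f l h2 (S.filter (On · l)) (fun x hx => (Finset.mem_filter.mp hx).2)
      have h4 := hl l h1
      have h5 : ((S.filter (On · l)).filter (NZ f)).card ≤ ((S.filter (fun x => eval x f ≠ 0)).filter (On · l)).card := by
        apply Finset.card_le_card
        intro x hx
        simp only [Finset.mem_filter, NZ] at hx ⊢; tauto
      omega
    have hpt : κ * (S.filter (fun x => eval x f ≠ 0)).card ≤ ∑ x ∈ S.filter (fun x => eval x f ≠ 0), (V.filter (On x ·)).card := by
      rw [mul_comm, ← smul_eq_mul]
      exact Finset.card_nsmul_le_sum _ _ _ (fun x hx' => hx x (Finset.mem_filter.mp hx').1)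
    have hLo : 0 < (V.filter (¬ Van f ·)).card := Finset.card_pos.mpr ⟨l0, Finset.mem_filter.mpr ⟨hl0, hl0'⟩⟩
    have hs : 2 * (S.card / 8 ^ m) ≤ κ := by
      have h1 : M ^ 3 ≤ 5400 ^ 3 * 8 ^ m := by
        calc M ^ 3 ≤ (5400 * 2 ^ m) ^ 3 := Nat.pow_le_pow_left hm2 3
          _ = 5400 ^ 3 * 8 ^ m := by rw [mul_pow, ← pow_mul, mul_comm m 3, pow_mul]; norm_num
      have h2 : κ * M ^ 3 ≤ κ * (5400 ^ 3 * 8 ^ m) := Nat.mul_le_mul_left _ h1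
      have h3 : S.card / 8 ^ m * 8 ^ m ≤ S.card := Nat.div_mul_le_self _ _
      have h8 : 0 < 8 ^ m := by positivity
      apply Nat.le_of_mul_le_mul_right _ h8
      nlinarith
    generalize S.card / 8 ^ m = s at *
    have e1 : S.filter (fun x => eval x f ≠ 0) = S.filter (fun x => ¬ eval x f = 0) := by rfl
    generalize (V.filter (¬ Van f ·)).card = Lo at *
    generalize (∑ x ∈ S.filter (fun x => eval x f ≠ 0), (V.filter (On x ·)).card) = I at *
    generalize (S.filter (fun x => eval x f ≠ 0)).card = So at *
    have h1 : So * (2 * s) ≤ So * κ := Nat.mul_le_mul_left _ hs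
    have h2 : I ≤ 2 * (Lo * (D + 1)) := by nlinarith
    have h3 : Lo * (M - D) ≤ Lo * (2 * (D + 1)) := by nlinarith
    have h4 := Nat.le_of_mul_le_mul_left h3 hLo
    omega

open Classical in
theorem gk_inc (N : ℕ) (V : Finset Ln) (hVN : V.card ≤ N ^ 2)
    (Hp : ∀ W ⊆ V, (∀ m ∈ W, ∀ m' ∈ W, Copl m m') → W.card ≤ N)
    (Hg : ∀ I1 ⊆ V, ∀ I2 ⊆ V, (∀ m ∈ I1, ∀ m' ∈ I2, Copl m m') → 2 * N < I1.card → I2.card ≤ N)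
    (k : ℕ) (hk : 2 ≤ k) (hkN : k ≤ N) (S : Finset E3) (hx : ∀ x ∈ S, k ≤ (V.filter (On x ·)).card) :
    S.card * k ^ 2 ≤ 10 ^ 8 * N ^ 3 := by
  by_contra hcon
  push Not at hcon
  have hk2 : 0 < k ^ 2 := by positivity
  -- trim
  obtain ⟨S0, hS0, hS1, hS2⟩ : ∃ S0 ⊆ S, 10 ^ 8 * N ^ 3 < S0.card * k ^ 2 ∧ S0.card * k ^ 2 ≤ 2 * 10 ^ 8 * N ^ 3 := by
    have hdm := Nat.div_add_mod (10 ^ 8 * N ^ 3) (k ^ 2)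
    have hlt := Nat.mod_lt (10 ^ 8 * N ^ 3) hk2
    have hdl : 10 ^ 8 * N ^ 3 / k ^ 2 < S.card := (Nat.div_lt_iff_lt_mul hk2).mpr hcon
    obtain ⟨S0, h1, h2⟩ := Finset.exists_subset_card_eq (show 10 ^ 8 * N ^ 3 / k ^ 2 + 1 ≤ S.card by omega)
    have hkk : k ^ 2 ≤ N ^ 3 := (Nat.pow_le_pow_left hkN 2).trans (Nat.pow_le_pow_right (by omega) (by norm_num))
    have h3 : (10 ^ 8 * N ^ 3 / k ^ 2 + 1) * k ^ 2 = k ^ 2 * (10 ^ 8 * N ^ 3 / k ^ 2) + k ^ 2 := by ring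
    refine ⟨S0, h1, ?_, ?_⟩ <;> rw [h2, h3] <;> generalize 10 ^ 8 * N ^ 3 % k ^ 2 = r at * <;> omega
  have hdm := Nat.div_add_mod (10 ^ 8 * N) (4 * k)
  have hlt := Nat.mod_lt (10 ^ 8 * N) (show 0 < 4 * k by omega)
  generalize 10 ^ 8 * N / (4 * k) = M at *
  have hkM : 4 * k * M ≤ 10 ^ 8 * N := by omega
  have hM0 : 2700 < M := by
    by_contra hc
    have : 4 * k * M ≤ 4 * k * 2700 := Nat.mul_le_mul_left _ (by omega)
    omega
  have hkM2 : 10 ^ 8 * N ≤ 8 * (k * M) := by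
    have : 4 * k * 1 ≤ 4 * k * M := Nat.mul_le_mul_left _ (by omega)
    nlinarith
  obtain ⟨V', hV', S', hS', hne, hl', hx'⟩ := refine_cfg V S0 k M (fun x h => hx x (hS0 h)) (by
    have h1 : (4 * M * N ^ 2) * k < (k * S0.card) * k := by
      calc (4 * M * N ^ 2) * k = (4 * k * M) * N ^ 2 := by ring
        _ ≤ (10 ^ 8 * N) * N ^ 2 := Nat.mul_le_mul_right _ hkM
        _ = 10 ^ 8 * N ^ 3 := by ring
        _ < S0.card * k ^ 2 := hS1
        _ = _ := by ring
    have h2 : 4 * M * N ^ 2 < k * S0.card := lt_of_mul_lt_mul_right h1 (by omega)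
    have h3 : 4 * M * V.card ≤ 4 * M * N ^ 2 := Nat.mul_le_mul_left _ hVN
    have h4 : 2 * S0.card ≤ k * S0.card := Nat.mul_le_mul_right _ hk
    have h5 : (k + 1) * S0.card = k * S0.card + S0.card := by ring
    have h6 : 2 * M * V.card * 2 = 4 * M * V.card := by ring
    omega)
  obtain ⟨κ, hκ⟩ : ∃ κ, κ = (k + 2) / 2 := ⟨_, rfl⟩
  have hx'' : ∀ x ∈ S', κ ≤ (V'.filter (On x ·)).card := fun x hx => by have := hx' x hx; omega
  have hSc : 2 * 5400 ^ 3 * S'.card ≤ κ * M ^ 3 := by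
    have h1 : (10 ^ 8 * N) ^ 3 ≤ (8 * (k * M)) ^ 3 := Nat.pow_le_pow_left hkM2 3
    have h2 : S'.card ≤ S0.card := Finset.card_le_card hS'
    have h3 : (4 * 5400 ^ 3 * S0.card) * (k ^ 2 * 10 ^ 16) ≤ (k * M ^ 3) * (k ^ 2 * 10 ^ 16) := by
      calc (4 * 5400 ^ 3 * S0.card) * (k ^ 2 * 10 ^ 16) = (4 * 5400 ^ 3 * 10 ^ 16) * (S0.card * k ^ 2) := by ring
        _ ≤ (4 * 5400 ^ 3 * 10 ^ 16) * (2 * 10 ^ 8 * N ^ 3) := Nat.mul_le_mul_left _ hS2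
        _ = 8 * 5400 ^ 3 * (10 ^ 8 * N) ^ 3 := by ring
        _ ≤ 8 * 5400 ^ 3 * (8 * (k * M)) ^ 3 := Nat.mul_le_mul_left _ h1
        _ = (4096 * 5400 ^ 3) * (k ^ 3 * M ^ 3) := by ring
        _ ≤ 10 ^ 16 * (k ^ 3 * M ^ 3) := Nat.mul_le_mul_right _ (by norm_num)
        _ = _ := by ring
    have h4 := Nat.le_of_mul_le_mul_right h3 (by positivity)
    have h5 : k * M ^ 3 ≤ 2 * κ * M ^ 3 := Nat.mul_le_mul_right _ (by omega)
    have h6 : 2 * κ * M ^ 3 = 2 * (κ * M ^ 3) := by ring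
    omega
  obtain ⟨f, hf, d, hd, hfV, hdV, hdM⟩ := exists_f V' S' M κ hne (by omega) hM0 hl' hx'' hSc
  rcases thmB f hf d hd V' hfV hdV S' M κ hdM (by omega) hl' hx'' with ⟨W, hW, h1, h2⟩ | ⟨h0, I1, hI1, I2, hI2, h1, h2, h3⟩
  · have h3 := Hp W (hW.trans hV') h1
    have h4 : k * M ≤ 3 * (κ - 1) * M := Nat.mul_le_mul_right _ (by omega)
    have h5 : 3 * (κ - 1) * M = 3 * (M * (κ - 1)) := by ring
    omega
  · have h4 : k * M ≤ 3 * M := Nat.mul_le_mul_right _ (by omega)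
    have := Hg I1 (hI1.trans hV') I2 (hI2.trans hV') h1 (by omega)
    omega

end
end GK

namespace GK
noncomputable section
open scoped UpperHalfPlane

/-- the line of transformations taking `p` to `r`, in an affine chart depending on `θ` -/
def ln (θ : ℝ) (p r : ℍ) : Ln where
  a := r.im / p.im
  b := r.re - r.im / p.im * p.re
  c := r.re + r.im / p.im * p.re - θ * (r.im / p.im)
  d := -(r.im / p.im * (p.re ^ 2 + p.im ^ 2)) - θ * (r.re - r.im / p.im * p.re)

lemma dist_iff (p q r s : ℍ) : dist p q = dist r s ↔
    ((p.re - q.re) ^ 2 + p.im ^ 2 + q.im ^ 2) * (r.im * s.im) = ((r.re - s.re) ^ 2 + r.im ^ 2 + s.im ^ 2) * (p.im * q.im) := by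
  have hp := p.im_pos; have hq := q.im_pos; have hr := r.im_pos; have hs := s.im_pos
  rw [← (Real.cosh_strictMonoOn).injOn.eq_iff (Set.mem_Ici.mpr dist_nonneg) (Set.mem_Ici.mpr dist_nonneg),
    UpperHalfPlane.cosh_dist', UpperHalfPlane.cosh_dist', div_eq_div_iff (by positivity) (by positivity)]
  constructor <;> intro h <;> linarith

lemma copl_ln (θ : ℝ) (p q r s : ℍ) : Copl (ln θ p r) (ln θ q s) ↔ dist p q = dist r s := by
  have hp := p.im_ne_zero; have hq := q.im_ne_zero
  rw [dist_iff]
  simp only [Copl, ln]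
  generalize p.re = x at *; generalize p.im = y at *; generalize q.re = x' at *; generalize q.im = y' at *
  obtain ⟨ρ, hρ⟩ : ∃ ρ, r.im = ρ * y := ⟨_ / _, (div_mul_cancel₀ _ hp).symm⟩
  obtain ⟨ρ', hρ'⟩ : ∃ ρ', s.im = ρ' * y' := ⟨_ / _, (div_mul_cancel₀ _ hq).symm⟩
  rw [hρ, hρ', mul_div_cancel_right₀ _ hp, mul_div_cancel_right₀ _ hq]
  constructor
  · intro h; linear_combination y * y' * h
  · intro h
    apply mul_left_cancel₀ (mul_ne_zero hp hq)
    linear_combination h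

lemma uhp_ext {p q : ℍ} (h1 : p.re = q.re) (h2 : p.im = q.im) : p = q := UpperHalfPlane.ext (Complex.ext h1 h2)

/-- generic chart: directions distinct -/
lemma bad_unique (p q r s : ℍ) (h : ¬ (p = q ∧ r = s)) (θ θ' : ℝ) (hθ : (ln θ p r).c = (ln θ q s).c ∧ (ln θ p r).d = (ln θ q s).d)
    (hθ' : (ln θ' p r).c = (ln θ' q s).c ∧ (ln θ' p r).d = (ln θ' q s).d) : θ = θ' := by
  by_contra hne
  apply h
  have hp := p.im_pos; have hq := q.im_pos; have hr := r.im_pos; have hs := s.im_pos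
  obtain ⟨h1, h2⟩ := hθ
  obtain ⟨h3, h4⟩ := hθ'
  simp only [ln] at h1 h2 h3 h4
  obtain ⟨ρ, hρ⟩ : ∃ ρ, r.im / p.im = ρ := ⟨_, rfl⟩
  obtain ⟨ρ', hρ'⟩ : ∃ ρ', s.im / q.im = ρ' := ⟨_, rfl⟩
  have hρ0 : 0 < ρ := by rw [← hρ]; positivity
  rw [hρ, hρ'] at h1 h2 h3 h4
  have hsub := sub_ne_zero.mpr hne
  have e1 : ρ' = ρ := by apply mul_left_cancel₀ hsub; linear_combination h1 - h3
  subst e1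
  have e2 : r.re - ρ' * p.re = s.re - ρ' * q.re := by apply mul_left_cancel₀ hsub; linear_combination h4 - h2
  have e3 : p.re = q.re := by apply mul_left_cancel₀ hρ0.ne'; linear_combination (h1 - e2) / 2
  have e4 : r.re = s.re := by rw [e3] at e2; linarith
  have e5 : p.im ^ 2 = q.im ^ 2 := by
    apply mul_left_cancel₀ hρ0.ne'; rw [e3, e4] at h2; linear_combination -h2
  have e6 : p.im = q.im := (pow_left_inj₀ hp.le hq.le two_ne_zero).mp e5
  refine ⟨uhp_ext e3 e6, uhp_ext e4 ?_⟩
  rw [e6, ← hρ', div_left_inj' hq.ne'] at hρ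
  exact hρ

lemma exists_theta (P : Finset ℍ) : ∃ θ : ℝ, ∀ p ∈ P, ∀ q ∈ P, ∀ r ∈ P, ∀ s ∈ P, ¬ (p = q ∧ r = s) →
    ¬ ((ln θ p r).c = (ln θ q s).c ∧ (ln θ p r).d = (ln θ q s).d) := by
  let B : Set ℝ := ⋃ p ∈ P, ⋃ q ∈ P, ⋃ r ∈ P, ⋃ s ∈ P,
    {θ : ℝ | ¬ (p = q ∧ r = s) ∧ (ln θ p r).c = (ln θ q s).c ∧ (ln θ p r).d = (ln θ q s).d}
  have hB : B.Finite := by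
    refine P.finite_toSet.biUnion fun p _ => P.finite_toSet.biUnion fun q _ => P.finite_toSet.biUnion fun r _ =>
      P.finite_toSet.biUnion fun s _ => Set.Subsingleton.finite ?_
    intro θ h θ' h'
    exact bad_unique p q r s h.1 θ θ' h.2 h'.2
  obtain ⟨θ, hθ⟩ := hB.exists_notMem
  refine ⟨θ, fun p hp q hq r hr s hs hne hbad => hθ ?_⟩
  simp only [B, Set.mem_iUnion]
  exact ⟨p, hp, q, hq, r, hr, s, hs, hne, hbad⟩

lemma meet {l m : Ln} (h : Copl l m) (hd : ¬ (l.c = m.c ∧ l.d = m.d)) : ∃ x, On x l ∧ On x m := by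
  unfold Copl at h
  have key : ∃ t : ℝ, l.a - m.a + t * (l.c - m.c) = 0 ∧ l.b - m.b + t * (l.d - m.d) = 0 := by
    by_cases hc : l.c = m.c
    · have hd' : l.d - m.d ≠ 0 := sub_ne_zero.mpr fun h' => hd ⟨hc, h'⟩
      refine ⟨-(l.b - m.b) / (l.d - m.d), ?_, by field_simp; ring⟩
      rw [hc, sub_self, mul_zero] at h ⊢
      rw [(mul_eq_zero.mp h).resolve_right hd', add_zero]
    · have hc' : l.c - m.c ≠ 0 := sub_ne_zero.mpr hc
      refine ⟨-(l.a - m.a) / (l.c - m.c), by field_simp; ring, ?_⟩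
      field_simp
      linear_combination -h
  obtain ⟨t, h1, h2⟩ := key
  refine ⟨pt l t, on_pt l t, ?_⟩
  have : pt l t = pt m t := by
    simp only [pt]; rw [show l.a + t * l.c = m.a + t * m.c by linarith, show l.b + t * l.d = m.b + t * m.d by linarith]
  rw [this]; exact on_pt m t

/-- circumcentres are unique -/
lemma circ {r1 r2 r3 s s' : ℍ} (h12 : r1 ≠ r2) (h13 : r1 ≠ r3) (h23 : r2 ≠ r3)
    (a2 : dist r1 s = dist r2 s) (a3 : dist r1 s = dist r3 s) (b2 : dist r1 s' = dist r2 s') (b3 : dist r1 s' = dist r3 s') :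
    s = s' := by
  rw [dist_iff] at a2 a3 b2 b3
  have n12 : ¬ (r2.re - r1.re = 0 ∧ r2.im - r1.im = 0) := fun h => h12 (uhp_ext (by linarith [h.1]) (by linarith [h.2]))
  have n13 : ¬ (r3.re - r1.re = 0 ∧ r3.im - r1.im = 0) := fun h => h13 (uhp_ext (by linarith [h.1]) (by linarith [h.2]))
  have n23 : ¬ (r3.re - r2.re = 0 ∧ r3.im - r2.im = 0) := fun h => h23 (uhp_ext (by linarith [h.1]) (by linarith [h.2]))
  have hs := s.im_pos; have hs' := s'.im_pos; have hv := r1.im_pos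
  suffices h : s.re = s'.re ∧ s.im ^ 2 = s'.im ^ 2 from uhp_ext h.1 ((pow_left_inj₀ hs.le hs'.le two_ne_zero).mp h.2)
  generalize r1.re = u1 at *; generalize r1.im = v1 at *; generalize r2.re = u2 at *; generalize r2.im = v2 at *
  generalize r3.re = u3 at *; generalize r3.im = v3 at *; generalize s.re = σ at *; generalize s.im = τ at *
  generalize s'.re = σ' at *; generalize s'.im = τ' at *
  -- K = value of the quotient
  obtain ⟨K, hK⟩ : ∃ K, (u1 - σ) ^ 2 + v1 ^ 2 + τ ^ 2 = K * v1 := ⟨_ / _, (div_mul_cancel₀ _ hv.ne').symm⟩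
  obtain ⟨K', hK'⟩ : ∃ K, (u1 - σ') ^ 2 + v1 ^ 2 + τ' ^ 2 = K * v1 := ⟨_ / _, (div_mul_cancel₀ _ hv.ne').symm⟩
  have c2 : (u2 - σ) ^ 2 + v2 ^ 2 + τ ^ 2 = K * v2 := by
    apply mul_left_cancel₀ (mul_ne_zero hv.ne' hs.ne'); rw [hK] at a2; linear_combination -a2
  have c3 : (u3 - σ) ^ 2 + v3 ^ 2 + τ ^ 2 = K * v3 := by
    apply mul_left_cancel₀ (mul_ne_zero hv.ne' hs.ne'); rw [hK] at a3; linear_combination -a3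
  have d2 : (u2 - σ') ^ 2 + v2 ^ 2 + τ' ^ 2 = K' * v2 := by
    apply mul_left_cancel₀ (mul_ne_zero hv.ne' hs'.ne'); rw [hK'] at b2; linear_combination -b2
  have d3 : (u3 - σ') ^ 2 + v3 ^ 2 + τ' ^ 2 = K' * v3 := by
    apply mul_left_cancel₀ (mul_ne_zero hv.ne' hs'.ne'); rw [hK'] at b3; linear_combination -b3
  clear a2 a3 b2 b3
  have e2 : 2 * (σ' - σ) * (u2 - u1) + (K' - K) * (v2 - v1) = 0 := by linear_combination c2 - hK - d2 + hK'
  have e3 : 2 * (σ' - σ) * (u3 - u1) + (K' - K) * (v3 - v1) = 0 := by linear_combination c3 - hK - d3 + hK'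
  have q2 : (u2 - u1) ^ 2 + (v2 - v1) ^ 2 + 2 * ((u2 - u1) * (u1 - σ) + (v2 - v1) * (v1 - K / 2)) = 0 := by
    linear_combination c2 - hK
  have q3 : (u3 - u1) ^ 2 + (v3 - v1) ^ 2 + 2 * ((u3 - u1) * (u1 - σ) + (v3 - v1) * (v1 - K / 2)) = 0 := by
    linear_combination c3 - hK
  have n23' : ¬ (u3 - u1 - (u2 - u1) = 0 ∧ v3 - v1 - (v2 - v1) = 0) := by
    rintro ⟨h1, h2⟩; exact n23 ⟨by linarith, by linarith⟩
  have hD : (u2 - u1) * (v3 - v1) - (u3 - u1) * (v2 - v1) ≠ 0 := by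
    intro hD
    generalize u2 - u1 = a at *; generalize v2 - v1 = b at *; generalize u3 - u1 = c at *; generalize v3 - v1 = d at *
    generalize u1 - σ = w at *; generalize v1 - K / 2 = z at *
    have hab : 0 < a ^ 2 + b ^ 2 := by
      by_contra hc; apply n12; constructor <;> nlinarith
    obtain ⟨k, hk⟩ : ∃ k, a * c + b * d = k * (a ^ 2 + b ^ 2) := ⟨_ / _, (div_mul_cancel₀ _ hab.ne').symm⟩
    have hc : c = k * a := by
      apply mul_left_cancel₀ hab.ne'; linear_combination a * hk - b * hD
    have hd : d = k * b := by
      apply mul_left_cancel₀ hab.ne'; linear_combination b * hk + a * hD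
    subst hc hd
    have : (k * (k - 1)) * (a ^ 2 + b ^ 2) = 0 := by linear_combination q3 - k * q2
    rcases mul_eq_zero.mp ((mul_eq_zero.mp this).resolve_right hab.ne') with h | h
    · exact n13 ⟨by rw [h]; ring, by rw [h]; ring⟩
    · exact n23' ⟨by linear_combination a * h, by linear_combination b * h⟩
  have f1 : σ = σ' := by
    apply mul_left_cancel₀ hD; linear_combination (-(v3 - v1) * e2 + (v2 - v1) * e3) / 2
  have f2 : K' = K := by
    apply mul_left_cancel₀ hD; linear_combination (-(u3 - u1) * e2 + (u2 - u1) * e3)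
  subst f1 f2
  exact ⟨rfl, by linarith⟩

end
end GK

namespace GK
noncomputable section
open scoped UpperHalfPlane
open Classical

lemma harm_le (N : ℕ) (hN : 1 ≤ N) : ∑ j ∈ Finset.Icc 2 N, (1 / (j : ℝ)) ≤ Real.log N := by
  have h := harmonic_le_one_add_log N
  rw [harmonic_eq_sum_Icc, ← Finset.add_sum_Ioc_eq_sum_Icc hN] at h
  push_cast at h
  have e : Finset.Icc 2 N = Finset.Ioc 1 N := by ext; simp; omega
  rw [e]
  simp only [one_div]
  linarith [inv_one (G := ℝ)]

lemma tri (k N : ℕ) (hk : k ≤ N) : (k : ℝ) * k - k = ∑ j ∈ Finset.Icc 2 N, if j ≤ k then 2 * ((j : ℝ) - 1) else 0 := by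
  rw [← Finset.sum_filter]
  have e : (Finset.Icc 2 N).filter (· ≤ k) = Finset.Icc 2 k := by ext; simp; omega
  rw [e]
  clear e hk
  induction k with
  | zero => simp
  | succ k ih =>
    rcases Nat.eq_zero_or_pos k with rfl | h
    · simp
    · rw [Finset.sum_Icc_succ_top (by omega), ← ih]; push_cast; ring

lemma pairs_le (N : ℕ) (hN : 1 ≤ N) (V : Finset Ln) (hVN : V.card ≤ N^2)
    (Hp : ∀ W ⊆ V, (∀ m ∈ W, ∀ m' ∈ W, Copl m m') → W.card ≤ N)
    (Hg : ∀ I1 ⊆ V, ∀ I2 ⊆ V, (∀ m ∈ I1, ∀ m' ∈ I2, Copl m m') → 2 * N < I1.card → I2.card ≤ N)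
    (T : Finset (Ln × Ln)) (hT : ∀ t ∈ T, t.1 ∈ V ∧ t.2 ∈ V ∧ t.1 ≠ t.2 ∧ ∃ x, On x t.1 ∧ On x t.2) :
    (T.card : ℝ) ≤ 2 * 10 ^ 8 * N ^ 3 * Real.log N := by
  have hc : ∀ t : Ln × Ln, ∃ x, t ∈ T → On x t.1 ∧ On x t.2 := fun t => by
    by_cases h : t ∈ T
    · obtain ⟨x, hx⟩ := (hT t h).2.2.2
      exact ⟨x, fun _ => hx⟩
    · exact ⟨0, fun h' => absurd h' h⟩
  choose g hg using hc
  let S := T.image g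
  let k : E3 → ℕ := fun x => (V.filter (On x ·)).card
  have hkN : ∀ x, k x ≤ N := fun x => Hp _ (Finset.filter_subset _ _) (fun m hm m' hm' =>
    copl_of_on (Finset.mem_filter.mp hm).2 (Finset.mem_filter.mp hm').2)
  have h1 : T.card = ∑ x ∈ S, (T.filter (g · = x)).card :=
    Finset.card_eq_sum_card_fiberwise (fun t ht => Finset.mem_coe.mpr (Finset.mem_image_of_mem g ht))
  have h2 : ∀ x ∈ S, ((T.filter (g · = x)).card : ℝ) ≤ (k x : ℝ) * k x - k x := fun x _ => by
    have : (T.filter (g · = x)).card ≤ (V.filter (On x ·)).offDiag.card := by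
      apply Finset.card_le_card
      intro t ht
      obtain ⟨ht', rfl⟩ := Finset.mem_filter.mp ht
      obtain ⟨a, b, c, -⟩ := hT t ht'
      simp only [Finset.mem_offDiag, Finset.mem_filter]
      exact ⟨⟨a, (hg t ht').1⟩, ⟨b, (hg t ht').2⟩, c⟩
    rw [Finset.offDiag_card] at this
    have h3 : (k x) ≤ k x * k x := Nat.le_mul_self _
    have h4 : (T.filter (g · = x)).card + k x ≤ k x * k x := by simp only [k] at *; omega
    have : ((T.filter (g · = x)).card : ℝ) + k x ≤ k x * k x := by exact_mod_cast h4
    linarith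
  have h3 : ∀ j ∈ Finset.Icc 2 N, (∑ x ∈ S, if j ≤ k x then 2 * ((j : ℝ) - 1) else 0) ≤ 2 * 10 ^ 8 * N ^ 3 * (1 / (j : ℝ)) := fun j hj => by
    obtain ⟨hj2, hjN⟩ := Finset.mem_Icc.mp hj
    have := gk_inc N V hVN Hp Hg j hj2 hjN (S.filter (j ≤ k ·)) (fun x hx => (Finset.mem_filter.mp hx).2)
    have h5 : ((S.filter (j ≤ k ·)).card : ℝ) * j ^ 2 ≤ 10 ^ 8 * N ^ 3 := by exact_mod_cast this
    rw [← Finset.sum_filter, Finset.sum_const, nsmul_eq_mul]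
    have hj0 : (0 : ℝ) < j := by positivity
    rw [mul_one_div, le_div_iff₀ hj0]
    have h6 : (0 : ℝ) ≤ ((S.filter (j ≤ k ·)).card : ℝ) := by positivity
    nlinarith [mul_nonneg h6 hj0.le]
  rw [h1]; push_cast
  calc _ ≤ ∑ x ∈ S, ((k x : ℝ) * k x - k x) := Finset.sum_le_sum h2
    _ = ∑ x ∈ S, ∑ j ∈ Finset.Icc 2 N, (if j ≤ k x then 2 * ((j : ℝ) - 1) else 0) := Finset.sum_congr rfl (fun x _ => tri _ _ (hkN x))
    _ = ∑ j ∈ Finset.Icc 2 N, ∑ x ∈ S, (if j ≤ k x then 2 * ((j : ℝ) - 1) else 0) := Finset.sum_comm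
    _ ≤ ∑ j ∈ Finset.Icc 2 N, 2 * 10 ^ 8 * N ^ 3 * (1 / (j : ℝ)) := Finset.sum_le_sum h3
    _ = 2 * 10 ^ 8 * N ^ 3 * ∑ j ∈ Finset.Icc 2 N, (1 / (j : ℝ)) := by rw [Finset.mul_sum]
    _ ≤ _ := mul_le_mul_of_nonneg_left (harm_le N hN) (by positivity)

lemma energy (P : Finset ℍ) (hN : 1 ≤ P.card) (T : Finset ((ℍ × ℍ) × (ℍ × ℍ)))
    (hT : ∀ t ∈ T, (t.1.1 ∈ P ∧ t.1.2 ∈ P ∧ t.2.1 ∈ P ∧ t.2.2 ∈ P) ∧ t.1.1 ≠ t.1.2 ∧ dist t.1.1 t.1.2 = dist t.2.1 t.2.2) :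
    (T.card : ℝ) ≤ 2 * 10 ^ 8 * P.card ^ 3 * Real.log P.card := by
  obtain ⟨θ, hθ⟩ := exists_theta P
  have hinj : ∀ p ∈ P, ∀ q ∈ P, ∀ r ∈ P, ∀ s ∈ P, ln θ p r = ln θ q s → p = q ∧ r = s := fun p hp q hq r hr s hs h => by
    by_contra hn
    exact hθ p hp q hq r hr s hs hn (by rw [h]; exact ⟨rfl, rfl⟩)
  let V : Finset Ln := (P ×ˢ P).image (fun t => ln θ t.1 t.2)
  have hV : ∀ l ∈ V, ∃ t : ℍ × ℍ, t.1 ∈ P ∧ t.2 ∈ P ∧ ln θ t.1 t.2 = l := fun l hl => by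
    obtain ⟨t, ht, rfl⟩ := Finset.mem_image.mp hl
    exact ⟨t, (Finset.mem_product.mp ht).1, (Finset.mem_product.mp ht).2, rfl⟩
  have hV' : ∀ l, ∃ t : ℍ × ℍ, l ∈ V → t.1 ∈ P ∧ t.2 ∈ P ∧ ln θ t.1 t.2 = l := fun l => by
    by_cases h : l ∈ V
    · obtain ⟨t, ht⟩ := hV l h; exact ⟨t, fun _ => ht⟩
    · exact ⟨(UpperHalfPlane.I, UpperHalfPlane.I), fun h' => absurd h' h⟩
  choose e he using hV'
  have hVN : V.card ≤ P.card ^ 2 := Finset.card_image_le.trans (by rw [Finset.card_product, sq])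
  have hco : ∀ l ∈ V, ∀ m ∈ V, Copl l m → dist (e l).1 (e m).1 = dist (e l).2 (e m).2 := fun l hl m hm h => by
    rw [← (he l hl).2.2, ← (he m hm).2.2, copl_ln] at h
    exact h
  have hext : ∀ l ∈ V, ∀ m ∈ V, (e l).1 = (e m).1 → (e l).2 = (e m).2 → l = m := fun l hl m hm h1 h2 => by
    rw [← (he l hl).2.2, ← (he m hm).2.2, h1, h2]
  have hTc : T.card = (T.image (fun t => (ln θ t.1.1 t.2.1, ln θ t.1.2 t.2.2))).card := by
    rw [Finset.card_image_of_injOn]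
    intro t ht u hu htu
    obtain ⟨⟨a, b, c, d⟩, -⟩ := hT t ht
    obtain ⟨⟨a', b', c', d'⟩, -⟩ := hT u hu
    simp only [Prod.mk.injEq] at htu
    obtain ⟨x1, x2⟩ := hinj _ a _ a' _ c _ c' htu.1
    obtain ⟨x3, x4⟩ := hinj _ b _ b' _ d _ d' htu.2
    exact Prod.ext (Prod.ext x1 x3) (Prod.ext x2 x4)
  rw [hTc]
  apply pairs_le P.card hN V hVN
  · intro W hW hc
    apply Finset.card_le_card_of_injOn (fun l => (e l).1) (fun l hl => (he l (hW hl)).1)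
    intro l hl m hm hlm
    have := hco l (hW hl) m (hW hm) (hc l hl m hm)
    apply hext l (hW hl) m (hW hm) hlm
    simp only at hlm
    rw [hlm, dist_self] at this
    exact dist_eq_zero.mp this.symm
  · intro I1 hI1 I2 hI2 hc hcard
    obtain ⟨p, hp, hp3⟩ := Finset.exists_lt_card_fiber_of_mul_lt_card_of_maps_to (s := I1) (t := P) (f := fun l => (e l).1) (n := 2)
      (fun l hl => (he l (hI1 hl)).1) (by omega)
    obtain ⟨l1, l2, l3, m1, m2, m3, n12, n13, n23⟩ := Finset.two_lt_card_iff.mp hp3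
    simp only [Finset.mem_filter] at m1 m2 m3
    obtain ⟨i1, q1⟩ := m1; obtain ⟨i2, q2⟩ := m2; obtain ⟨i3, q3⟩ := m3
    have r12 : (e l1).2 ≠ (e l2).2 := fun h => n12 (hext _ (hI1 i1) _ (hI1 i2) (q1.trans q2.symm) h)
    have r13 : (e l1).2 ≠ (e l3).2 := fun h => n13 (hext _ (hI1 i1) _ (hI1 i3) (q1.trans q3.symm) h)
    have r23 : (e l2).2 ≠ (e l3).2 := fun h => n23 (hext _ (hI1 i2) _ (hI1 i3) (q2.trans q3.symm) h)
    have key : ∀ m ∈ I2, dist (e l1).2 (e m).2 = dist (e l2).2 (e m).2 ∧ dist (e l1).2 (e m).2 = dist (e l3).2 (e m).2 := fun m hm => by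
      have a1 := hco _ (hI1 i1) _ (hI2 hm) (hc _ i1 _ hm)
      have a2 := hco _ (hI1 i2) _ (hI2 hm) (hc _ i2 _ hm)
      have a3 := hco _ (hI1 i3) _ (hI2 hm) (hc _ i3 _ hm)
      rw [q1] at a1; rw [q2] at a2; rw [q3] at a3
      exact ⟨a1.symm.trans a2, a1.symm.trans a3⟩
    apply Finset.card_le_card_of_injOn (fun l => (e l).1) (fun l hl => (he l (hI2 hl)).1)
    intro l hl m hm hlm
    exact hext l (hI2 hl) m (hI2 hm) hlm (circ r12 r13 r23 (key l hl).1 (key l hl).2 (key m hm).1 (key m hm).2)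
  · intro t ht
    obtain ⟨t, ht', rfl⟩ := Finset.mem_image.mp ht
    obtain ⟨⟨a, b, c, d⟩, hne, hd⟩ := hT t ht'
    refine ⟨Finset.mem_image.mpr ⟨(t.1.1, t.2.1), Finset.mem_product.mpr ⟨a, c⟩, rfl⟩,
      Finset.mem_image.mpr ⟨(t.1.2, t.2.2), Finset.mem_product.mpr ⟨b, d⟩, rfl⟩, fun h => hne (hinj _ a _ b _ c _ d h).1, ?_⟩
    exact meet ((copl_ln θ _ _ _ _).mpr hd) (hθ _ a _ b _ c _ d (fun h => hne h.1))

end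
end GK

namespace GK
noncomputable section
open scoped UpperHalfPlane MatrixGroups
open Classical

/-- quotient distance -/
def qd (Γ : Subgroup SL(2, ℝ)) (p q : ℍ) : ℝ := ⨅ γ : Γ, dist p ((γ : SL(2, ℝ)) • q)

lemma qd_bdd (Γ : Subgroup SL(2, ℝ)) (p q : ℍ) : BddBelow (Set.range fun γ : Γ => dist p ((γ : SL(2, ℝ)) • q)) :=
  ⟨0, by rintro _ ⟨γ, rfl⟩; exact dist_nonneg⟩

lemma fin_G (Γ : Subgroup SL(2, ℝ)) [ProperlyDiscontinuousSMul Γ ℍ] (F : Set ℍ) (hF : IsCompact F) :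
    ∃ G : Finset Γ, 1 ∈ G ∧ ∀ p ∈ F, ∀ q ∈ F, ∃ γ ∈ G, qd Γ p q = dist p ((γ : SL(2, ℝ)) • q) := by
  have hK : IsCompact (Metric.cthickening (Metric.diam F) F) := hF.cthickening
  have hfin := ProperlyDiscontinuousSMul.finite_disjoint_inter_image (Γ := Γ) hF hK
  refine ⟨insert 1 hfin.toFinset, Finset.mem_insert_self _ _, fun p hp q hq => ?_⟩
  obtain ⟨γ0, h0, hmin⟩ := Finset.exists_min_image (insert 1 hfin.toFinset) (fun γ : Γ => dist p ((γ : SL(2, ℝ)) • q))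
    ⟨1, Finset.mem_insert_self _ _⟩
  refine ⟨γ0, h0, le_antisymm (ciInf_le (qd_bdd Γ p q) γ0) (le_ciInf fun γ => ?_)⟩
  by_cases hγ : γ ∈ insert 1 hfin.toFinset
  · exact hmin γ hγ
  · refine (hmin 1 (Finset.mem_insert_self _ _)).trans ?_
    simp only [Finset.mem_insert, Set.Finite.mem_toFinset, Set.mem_ofPred_eq, not_or] at hγ
    have h1 : (γ : SL(2, ℝ)) • q ∉ Metric.cthickening (Metric.diam F) F := fun h => by
      have : (γ : SL(2, ℝ)) • q ∈ (γ • ·) '' F ∩ Metric.cthickening (Metric.diam F) F := ⟨⟨q, hq, rfl⟩, h⟩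
      exact hγ.2 ⟨_, this⟩
    have h2 : Metric.diam F < dist p ((γ : SL(2, ℝ)) • q) := by
      by_contra hle
      exact h1 (Metric.mem_cthickening_of_dist_le _ p _ _ hp (by rw [dist_comm]; exact not_lt.mp hle))
    have h3 := Metric.dist_le_diam_of_mem hF.isBounded hp hq
    simp only [OneMemClass.coe_one, one_smul]
    linarith

lemma qd_zero (Γ : Subgroup SL(2, ℝ)) (p q : ℍ) (γ δ : Γ) (h : (γ : SL(2, ℝ)) • p = (δ : SL(2, ℝ)) • q) : qd Γ p q = 0 := by
  apply le_antisymm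
  · refine (ciInf_le (qd_bdd Γ p q) (γ⁻¹ * δ)).trans (le_of_eq ?_)
    rw [Subgroup.coe_mul, mul_smul, ← h, ← mul_smul]
    simp
  · exact Real.iInf_nonneg fun _ => dist_nonneg

/-- Cauchy-Schwarz -/
lemma cs {α : Type*} (A : Finset α) (f : α → ℝ) :
    A.card ^ 2 ≤ (A.image f).card * ((A ×ˢ A).filter (fun t => f t.1 = f t.2)).card := by
  have h1 : A.card = ∑ t ∈ A.image f, (A.filter (f · = t)).card :=
    Finset.card_eq_sum_card_fiberwise (fun t ht => Finset.mem_coe.mpr (Finset.mem_image_of_mem f ht))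
  have h2 : ((A ×ˢ A).filter (fun t => f t.1 = f t.2)).card = ∑ t ∈ A.image f, (A.filter (f · = t)).card ^ 2 := by
    rw [Finset.card_eq_sum_card_fiberwise (f := fun t => f t.1) (t := A.image f)]
    · refine Finset.sum_congr rfl fun t _ => ?_
      rw [sq, ← Finset.card_product]
      congr 1
      ext ⟨a, b⟩
      simp only [Finset.mem_filter, Finset.mem_product]
      constructor
      · rintro ⟨⟨⟨ha, hb⟩, h⟩, rfl⟩; exact ⟨⟨ha, rfl⟩, hb, h.symm⟩
      · rintro ⟨⟨ha, rfl⟩, hb, h⟩; exact ⟨⟨⟨ha, hb⟩, h.symm⟩, rfl⟩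
    · intro t ht
      exact Finset.mem_coe.mpr (Finset.mem_image_of_mem f (Finset.mem_product.mp (Finset.mem_filter.mp ht).1).1)
  rw [h2, h1]
  exact sq_sum_le_card_mul_sum_sq

theorem main (Γ : Subgroup SL(2, ℝ)) [ProperlyDiscontinuousSMul Γ ℍ] (F : Set ℍ) (hF : IsCompact F) :
    ∃ c : ℝ, 0 < c ∧ ∀ P : Finset ℍ, (↑P : Set ℍ) ⊆ F → 2 ≤ P.card →
      (∀ p ∈ P, ∀ q ∈ P, p ≠ q → qd Γ p q ≠ 0) →
      c * (P.card : ℝ) / Real.log P.card ≤ ({t : ℝ | ∃ p ∈ P, ∃ q ∈ P, p ≠ q ∧ qd Γ p q = t}.ncard : ℝ) := by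
  obtain ⟨G, h1G, hG⟩ := fin_G Γ F hF
  obtain ⟨B, hB⟩ : ∃ B, B = G.card := ⟨_, rfl⟩
  have hB1 : 1 ≤ B := hB ▸ Finset.card_pos.mpr ⟨1, h1G⟩
  have hB1' : (1 : ℝ) ≤ B := by exact_mod_cast hB1
  have hl2 : 0 < Real.log 2 := Real.log_pos one_lt_two
  have hlB : 0 ≤ Real.log B := Real.log_nonneg hB1'
  obtain ⟨A, hA⟩ : ∃ A, A = 1 + Real.log B / Real.log 2 := ⟨_, rfl⟩
  have hA0 : 0 < A := by rw [hA]; positivity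
  refine ⟨1 / (8 * 10 ^ 8 * B ^ 3 * A), by positivity, fun P hPF hP2 hne => ?_⟩
  have hch : ∀ a : ℍ × ℍ, ∃ γ : Γ, a ∈ P.offDiag → γ ∈ G ∧ qd Γ a.1 a.2 = dist a.1 ((γ : SL(2, ℝ)) • a.2) := fun a => by
    by_cases h : a ∈ P.offDiag
    · obtain ⟨h1, h2, -⟩ := Finset.mem_offDiag.mp h
      obtain ⟨γ, hγ⟩ := hG a.1 (hPF h1) a.2 (hPF h2)
      exact ⟨γ, fun _ => hγ⟩
    · exact ⟨1, fun h' => absurd h' h⟩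
  choose g hg using hch
  have hD : {t : ℝ | ∃ p ∈ P, ∃ q ∈ P, p ≠ q ∧ qd Γ p q = t} = ↑(P.offDiag.image (fun a => qd Γ a.1 a.2)) := by
    ext t
    simp only [Set.mem_ofPred_eq, Finset.coe_image, Set.mem_image, Finset.mem_coe, Finset.mem_offDiag, Prod.exists]
    constructor
    · rintro ⟨p, hp, q, hq, h, h'⟩; exact ⟨p, q, ⟨hp, hq, h⟩, h'⟩
    · rintro ⟨p, q, ⟨hp, hq, h⟩, h'⟩; exact ⟨p, hp, q, hq, h, h'⟩
  rw [hD, Set.ncard_coe_finset]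
  have hcs := cs P.offDiag (fun a => qd Γ a.1 a.2)
  obtain ⟨T0, hT0⟩ : ∃ T0, T0 = (P.offDiag ×ˢ P.offDiag).filter (fun t => qd Γ t.1.1 t.1.2 = qd Γ t.2.1 t.2.2) := ⟨_, rfl⟩
  rw [← hT0, Finset.offDiag_card] at hcs
  obtain ⟨D, hDD⟩ : ∃ D, D = (P.offDiag.image (fun a => qd Γ a.1 a.2)).card := ⟨_, rfl⟩
  rw [← hDD] at hcs ⊢
  have hT : ∀ t ∈ T0, t.1 ∈ P.offDiag ∧ t.2 ∈ P.offDiag ∧ qd Γ t.1.1 t.1.2 = qd Γ t.2.1 t.2.2 := fun t ht => by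
    rw [hT0, Finset.mem_filter, Finset.mem_product] at ht
    exact ⟨ht.1.1, ht.1.2, ht.2⟩
  let P' : Finset ℍ := (G ×ˢ P).image (fun t => (t.1 : SL(2, ℝ)) • t.2)
  have hmem : ∀ γ ∈ G, ∀ p ∈ P, (γ : SL(2, ℝ)) • p ∈ P' := fun γ hγ p hp =>
    Finset.mem_image.mpr ⟨(γ, p), Finset.mem_product.mpr ⟨hγ, hp⟩, rfl⟩
  have hPP : P ⊆ P' := fun p hp => by simpa using hmem 1 h1G p hp
  have hP'1 : 1 ≤ P'.card := by have := Finset.card_le_card hPP; omega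
  have hP'B : P'.card ≤ B * P.card := by
    rw [hB]; exact Finset.card_image_le.trans (by rw [Finset.card_product])
  let φ1 : ℍ × ℍ → ℍ × ℍ := fun a => (a.1, (g a : SL(2, ℝ)) • a.2)
  have hφ : ∀ a ∈ P.offDiag, ∀ b ∈ P.offDiag, φ1 a = φ1 b → a = b := fun a ha b hb h => by
    simp only [φ1, Prod.mk.injEq] at h
    refine Prod.ext h.1 ?_
    by_contra hn
    exact hne _ (Finset.mem_offDiag.mp ha).2.1 _ (Finset.mem_offDiag.mp hb).2.1 hn (qd_zero Γ _ _ (g a) (g b) h.2)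
  have hTc : T0.card = (T0.image (fun t => (φ1 t.1, φ1 t.2))).card := by
    rw [Finset.card_image_of_injOn]
    intro t ht u hu h
    simp only [Prod.mk.injEq] at h
    exact Prod.ext (hφ _ (hT t ht).1 _ (hT u hu).1 h.1) (hφ _ (hT t ht).2.1 _ (hT u hu).2.1 h.2)
  have hE : (T0.card : ℝ) ≤ 2 * 10 ^ 8 * P'.card ^ 3 * Real.log P'.card := by
    rw [hTc]
    apply energy P' hP'1
    intro t ht
    obtain ⟨u, hu, rfl⟩ := Finset.mem_image.mp ht
    obtain ⟨h1, h2, h3⟩ := hT u hu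
    have g1 := hg _ h1
    have g2 := hg _ h2
    obtain ⟨a1, a2, a3⟩ := Finset.mem_offDiag.mp (h1)
    obtain ⟨b1, b2, b3⟩ := Finset.mem_offDiag.mp (h2)
    simp only [φ1]
    refine ⟨⟨hPP a1, hmem _ g1.1 _ a2, hPP b1, hmem _ g2.1 _ b2⟩, fun h => ?_, ?_⟩
    · apply hne _ a1 _ a2 a3
      rw [g1.2, ← h, dist_self]
    · rw [← g1.2, ← g2.2, h3]
  obtain ⟨N, hN⟩ : ∃ N, N = P.card := ⟨_, rfl⟩
  rw [← hN] at hP2 hP'B hcs ⊢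
  have hN2 : (2 : ℝ) ≤ N := by exact_mod_cast hP2
  have hlN : Real.log 2 ≤ Real.log N := Real.log_le_log two_pos hN2
  have hlN0 : 0 < Real.log N := hl2.trans_le hlN
  have hP'r : (P'.card : ℝ) ≤ B * N := by exact_mod_cast hP'B
  have hP'1r : (1 : ℝ) ≤ P'.card := by exact_mod_cast hP'1
  have hlog : Real.log P'.card ≤ A * Real.log N := by
    have h1 : Real.log P'.card ≤ Real.log (B * N) := Real.log_le_log (by linarith) hP'r
    rw [Real.log_mul (by positivity) (by positivity)] at h1
    have h2 : Real.log B ≤ Real.log B / Real.log 2 * Real.log N := by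
      rw [div_mul_eq_mul_div, le_div_iff₀ hl2]
      exact mul_le_mul_of_nonneg_left hlN hlB
    rw [hA]; linarith
  have hE2 : (T0.card : ℝ) ≤ 2 * 10 ^ 8 * (B * N) ^ 3 * (A * Real.log N) :=
    hE.trans (mul_le_mul (by gcongr) hlog (Real.log_nonneg hP'1r) (by positivity))
  have hcs2 : ((N : ℝ) * N - N) ^ 2 ≤ D * T0.card := by
    have : ((N * N - N : ℕ) : ℝ) ^ 2 ≤ D * T0.card := by exact_mod_cast hcs
    rwa [Nat.cast_sub (Nat.le_mul_self N), Nat.cast_mul] at this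
  have hlow : ((N : ℝ) ^ 2 / 2) ^ 2 ≤ ((N : ℝ) * N - N) ^ 2 := by
    apply pow_le_pow_left₀ (by positivity); nlinarith
  have hfin : (N : ℝ) ^ 3 * N ≤ N ^ 3 * (8 * 10 ^ 8 * B ^ 3 * A * (D * Real.log N)) := by
    have := mul_le_mul_of_nonneg_left hE2 (Nat.cast_nonneg (α := ℝ) D)
    nlinarith
  have hfin2 := le_of_mul_le_mul_left hfin (by positivity)
  rw [div_le_iff₀ hlN0, one_div, inv_mul_le_iff₀ (by positivity)]
  exact hfin2

end
end GK

/-- If `Γ ≤ SL(2,ℝ)` is a discrete subgroup admitting a compact set `F` with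
`⋃_{γ ∈ Γ} γ·F = ℍ²` (co-compactness), then there is `c(Γ) > 0` such that any `N ≥ 2`
points of `F` projecting to distinct points of `Γ\ℍ²` determine at least
`c(Γ) · N / log N` distinct quotient distances. -/
theorem distinct_distances_cocompact (Γ : Subgroup SL(2, ℝ))
    (hΓ : DiscreteTopology Γ) (F : Set ℍ) (hF : IsCompact F)
    (hcover : ∀ z : ℍ, ∃ γ ∈ Γ, ∃ x ∈ F, γ • x = z) :
    ∃ c : ℝ, 0 < c ∧ ∀ P : Finset ℍ, (↑P : Set ℍ) ⊆ F → 2 ≤ P.card →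
      (∀ p ∈ P, ∀ q ∈ P, p ≠ q → quotDist Γ p q ≠ 0) →
      c * (P.card : ℝ) / Real.log P.card ≤
        ({t : ℝ | ∃ p ∈ P, ∃ q ∈ P, p ≠ q ∧ quotDist Γ p q = t}.ncard : ℝ) := by
  haveI : ProperlyDiscontinuousSMul Γ ℍ :=
    @UpperHalfPlane.instProperlyDiscontinuousSL2RSubgroup Γ hΓ
  exact GK.main Γ F hF

end
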